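/- arXiv:2605.14009 — 9 statements merged into one kernel-verified Lean document; each statement's English description precedes it below -/
import Mathlib

section
/- (ZKW case.) Let q = p^m, r = p^k, d = gcd(k,m), and suppose m/d is odd and m/d + k/d ≡ 0 (mod 3). Let ω be a generator of the multiplicative group F_{q^3}^× and define F_{r,ω}(X) = X^{r+1} − ω^{q−1}·X^{qr+q²} on F_{q^3}. Then there exist a,b,c ∈ F_q and F_q-bases (v_1,v_2,v_3) and (u_1,u_2,u_3) of F_{q^3} such that F_{r,ω}(x·v_1 + y·v_2 + z·v_3) = f(x,y,z)·u_1 + g(x,y,z)·u_2 + h(x,y,z)·u_3 for all x,y,z ∈ F_q, where f(x,y,z) = x^{r+1} + a·y^r·z + b·x^r·y + c·x^r·z, g(x,y,z) = a·y^{r+1} + z^r·x + b·z^r·y + c·x^r·y, h(x,y,z) = z^{r+1} − x^r·y. That is, every Zha–Kyureghyan–Wang planar function is GL(3,q)-equivalent to a member of the family of Theorem 1.4 with σ = r. -/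
/-!
Let `φ` be the `q`-Frobenius of `L` over `K` and `R(X) = X^r`. Then `F_{r,ω}(X) = B(R X, X)` for the
`K`-bilinear form `B(x, y) = x y - ω^(q-1) φ(x) φ²(y)`. The semilinear map `T(x) = φ(ω R(x))`
satisfies `B(x, T y) = E(x, R y)`, where `E(x, y) = φ(ω) (x φ(y) - φ(x) y)` is alternating and
nonzero on linearly independent pairs.

An eigenvector `y` of `T`, or of the semilinear map that `T` induces on bivectors, would give
`ω^j y^(qr) = κ y` with `κ ∈ K` and `j = q` or `j = q + q²`. Put `P = p^d`. The congruence condition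
makes `g = P² + P + 1` divide both `qr - 1` and `q² + q + 1`, so `y^(qr-1)` and `κ`, being a norm,
are `g`-th powers, which forces the contradiction `g ∣ j`. Hence `1, T 1, T² 1` is a basis. In a
basis putting `T` in companion form, `B(R v, w)` is determined by the alternating form `E` and by
the coefficients of `T`, and these relations are the normal form.
-/

section LinearAlgebra

variable {K V W : Type*} [Field K] [AddCommGroup V] [Module K V] [AddCommGroup W] [Module K W]

theorem linearIndependent_triple_iff {x y z : V} :
    LinearIndependent K ![x, y, z] ↔
      ∀ a b c : K, a • x + b • y + c • z = 0 → a = 0 ∧ b = 0 ∧ c = 0 := by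
  rw [Fintype.linearIndependent_iff]
  constructor
  · intro h a b c habc
    have h' := h ![a, b, c] (by simpa [Fin.sum_univ_three] using habc)
    exact ⟨h' 0, h' 1, h' 2⟩
  · intro h f hf
    simpa [Fin.forall_fin_succ] using
      h (f 0) (f 1) (f 2) (by simpa [Fin.sum_univ_three] using hf)

/-- Every bivector of a three-dimensional space is decomposable, so a vanishing combination of the
three values is the value on a single linearly independent pair. -/
theorem linearIndependent_isAlt_apply_cyclic {E : V →ₗ[K] V →ₗ[K] W} (hE : E.IsAlt)
    (hE₀ : ∀ x y, LinearIndependent K ![x, y] → E x y ≠ 0) {e₁ e₂ e₃ : V}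
    (he : LinearIndependent K ![e₁, e₂, e₃]) :
    LinearIndependent K ![E e₁ e₂, E e₂ e₃, E e₃ e₁] := by
  rw [linearIndependent_triple_iff] at he ⊢
  intro a b c h
  have ha : a = 0 := by
    by_contra ha
    refine hE₀ (a • e₁ - b • e₃) (a • e₂ - c • e₃) (LinearIndependent.pair_iff.2 ?_) ?_
    · intro s t hst
      obtain ⟨hs, ht, -⟩ := he (s * a) (t * a) (-(s * b + t * c))
        (by rw [← hst]; module)
      exact ⟨(mul_eq_zero.1 hs).resolve_right ha, (mul_eq_zero.1 ht).resolve_right ha⟩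
    · calc E (a • e₁ - b • e₃) (a • e₂ - c • e₃)
          = a • (a • E e₁ e₂ + b • E e₂ e₃ + c • E e₃ e₁) := by
            simp only [map_sub, map_smul, LinearMap.sub_apply, LinearMap.smul_apply,
              hE.self_eq_zero, ← hE.neg e₃ e₁, ← hE.neg e₂ e₃]
            module
        _ = 0 := by rw [h, smul_zero]
  subst ha
  by_contra hbc
  refine hE₀ (b • e₂ - c • e₁) e₃ (LinearIndependent.pair_iff.2 ?_) ?_
  · intro s t hst
    obtain ⟨hc, hb, ht⟩ := he (-(s * c)) (s * b) t (by rw [← hst]; module)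
    refine ⟨by_contra fun hs => hbc ⟨rfl, ?_, ?_⟩, ht⟩
    · exact (mul_eq_zero.1 hb).resolve_left hs
    · exact (mul_eq_zero.1 (neg_eq_zero.1 hc)).resolve_left hs
  · calc E (b • e₂ - c • e₁) e₃ = (0 : K) • E e₁ e₂ + b • E e₂ e₃ + c • E e₃ e₁ := by
          simp only [map_sub, map_smul, LinearMap.sub_apply, LinearMap.smul_apply,
            ← hE.neg e₃ e₁]
          module
      _ = 0 := h

variable {σ : K →+* K} {T R : V →ₛₗ[σ] V}

theorem linearIndependent_iterate_of_no_eigenvector {E : V →ₗ[K] V →ₗ[K] W} (hE : E.IsAlt)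
    (hE₀ : ∀ x y, LinearIndependent K ![x, y] → E x y ≠ 0) {S : W → W}
    (hS : ∀ x y, E (T x) (T y) = S (E x y))
    (hT₀ : ∀ x ≠ 0, LinearIndependent K ![x, T x])
    (hS₀ : ∀ w ≠ 0, LinearIndependent K ![w, S w]) {x : V} (hx : x ≠ 0) :
    LinearIndependent K ![x, T x, T (T x)] := by
  suffices h : T (T x) ∉ Submodule.span K (Set.range ![x, T x]) by
    convert (linearIndependent_finSnoc (x := T (T x))).2 ⟨hT₀ x hx, h⟩ using 1
    ext i; fin_cases i <;> rfl
  rw [Matrix.range_cons_cons_empty, Submodule.mem_span_pair]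
  rintro ⟨s, t, hst⟩
  have hw : E x (T x) ≠ 0 := hE₀ _ _ (hT₀ x hx)
  refine (LinearIndependent.pair_iff' hw).1 (hS₀ _ hw) (-s) ?_
  rw [← hS, ← hst]
  simp only [map_add, map_smul, hE.self_eq_zero, ← hE.neg x (T x)]
  module

/-- The companion form of a semilinear map `T` on the span of `v₁`, `v₂`, `v₃`, normalised so that
`a`, `b`, `c` are the parameters of the planar family in `exists_normal_form`. Linear independence
of the triple is not included. -/
structure IsCompanionTriple (T : V →ₛₗ[σ] V) (a b c : K) (v₁ v₂ v₃ : V) : Prop where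
  map_first : T v₁ = v₃ - c • v₁
  map_second : T v₂ = -(a • v₁)
  map_third : T v₃ = v₂ - b • v₁

theorem exists_isCompanionTriple (hV : Module.finrank K V = 3) (hσ : Function.Surjective σ) {x : V}
    (hx : LinearIndependent K ![x, T x, T (T x)]) :
    ∃ (a b c : K) (v₂ v₃ : V),
      IsCompanionTriple T a b c x v₂ v₃ ∧ LinearIndependent K ![x, v₂, v₃] := by
  obtain ⟨a, b', c', habc⟩ : ∃ a b' c' : K, a • x + b' • T x + c' • T (T x) = T (T (T x)) := by
    have hspan := hx.span_eq_top_of_card_eq_finrank (by simp [hV])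
    rw [← Submodule.mem_span_triple]
    convert (Submodule.mem_top : T (T (T x)) ∈ ⊤)
    rw [← hspan]
    congr 1
    simp only [Matrix.range_cons, Matrix.range_empty, Set.union_empty, Set.singleton_union]
  obtain ⟨b, rfl⟩ := hσ b'
  obtain ⟨c, rfl⟩ := (hσ.comp hσ) c'
  refine ⟨-a, -b, -c, T (T x - c • x) - b • x, T x - c • x, ⟨?_, ?_, ?_⟩, ?_⟩
  · module
  · simp only [map_sub, map_smulₛₗ, ← habc, Function.comp_apply]
    module
  · module
  · rw [linearIndependent_triple_iff] at hx ⊢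
    intro r s t h
    obtain ⟨hr, ht, rfl⟩ := hx (r - s * b - t * c) (t - s * σ c) s (by
      rw [← h, map_sub, map_smulₛₗ]; module)
    rw [zero_mul, sub_zero] at ht
    subst ht
    exact ⟨by simpa using hr, rfl, rfl⟩

namespace IsCompanionTriple

variable {B E : V →ₗ[K] V →ₗ[K] W} {a b c : K} {v₁ v₂ v₃ : V}

theorem smul_apply_first (h : IsCompanionTriple T a b c v₁ v₂ v₃)
    (hBE : ∀ x y, B x (T y) = E x (R y)) (x : V) : a • B x v₁ = -E x (R v₂) := by
  rw [← hBE, h.map_second, map_neg, map_smul, neg_neg]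

theorem apply_second (h : IsCompanionTriple T a b c v₁ v₂ v₃)
    (hBE : ∀ x y, B x (T y) = E x (R y)) (x : V) : B x v₂ = E x (R v₃) + b • B x v₁ := by
  rw [← hBE, h.map_third, map_sub, map_smul, sub_add_cancel]

theorem apply_third (h : IsCompanionTriple T a b c v₁ v₂ v₃)
    (hBE : ∀ x y, B x (T y) = E x (R y)) (x : V) : B x v₃ = E x (R v₁) + c • B x v₁ := by
  rw [← hBE, h.map_first, map_sub, map_smul, sub_add_cancel]

theorem coeff_ne_zero (h : IsCompanionTriple T a b c v₁ v₂ v₃)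
    (hBE : ∀ x y, B x (T y) = E x (R y)) {x : V} (hx : E x (R v₂) ≠ 0) : a ≠ 0 := by
  rintro rfl
  exact hx (by simpa using (h.smul_apply_first hBE x).symm)

theorem linearIndependent_apply (h : IsCompanionTriple T a b c v₁ v₂ v₃)
    (hBE : ∀ x y, B x (T y) = E x (R y)) (hE : E.IsAlt)
    (hR : LinearIndependent K ![E (R v₁) (R v₂), E (R v₂) (R v₃), E (R v₃) (R v₁)]) :
    LinearIndependent K ![B (R v₁) v₁, B (R v₃) v₁, B (R v₃) v₃] := by
  have ha : a ≠ 0 := h.coeff_ne_zero hBE (hR.ne_zero 0)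
  rw [linearIndependent_triple_iff] at hR ⊢
  intro r s t hrst
  obtain ⟨hr, hs, ht⟩ := hR (-r) (s + t * c) (t * a) <| by
    calc -r • E (R v₁) (R v₂) + (s + t * c) • E (R v₂) (R v₃) + (t * a) • E (R v₃) (R v₁)
        = a • (r • B (R v₁) v₁ + s • B (R v₃) v₁ + t • B (R v₃) v₃) := by
          rw [h.apply_third hBE, ← hE.neg (R v₃) (R v₂), ← h.smul_apply_first hBE,
            ← neg_neg (E (R v₁) (R v₂)), ← h.smul_apply_first hBE]
          module
      _ = 0 := by rw [hrst, smul_zero]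
  obtain rfl : t = 0 := (mul_eq_zero.1 ht).resolve_right ha
  exact ⟨neg_eq_zero.1 hr, by simpa using hs, rfl⟩

theorem apply_self (h : IsCompanionTriple T a b c v₁ v₂ v₃)
    (hBE : ∀ x y, B x (T y) = E x (R y)) (hE : E.IsAlt) (ha : a ≠ 0) (x y z : K) :
    B (R (x • v₁ + y • v₂ + z • v₃)) (x • v₁ + y • v₂ + z • v₃) =
      (σ x * x + a * σ y * z + b * σ x * y + c * σ x * z) • B (R v₁) v₁ +
      (a * (σ y * y) + σ z * x + b * σ z * y + c * σ x * y) • B (R v₃) v₁ +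
      (σ z * z - σ x * y) • B (R v₃) v₃ := by
  have h₂₁ : B (R v₂) v₁ = 0 := by
    have := h.smul_apply_first hBE (R v₂)
    rwa [hE.self_eq_zero, neg_zero, smul_eq_zero_iff_right ha] at this
  have h₁₂ : E (R v₁) (R v₂) = -(a • B (R v₁) v₁) := by rw [h.smul_apply_first hBE, neg_neg]
  have h₃₂ : E (R v₃) (R v₂) = -(a • B (R v₃) v₁) := by rw [h.smul_apply_first hBE, neg_neg]
  have h₃₁ : E (R v₃) (R v₁) = B (R v₃) v₃ - c • B (R v₃) v₁ := by rw [h.apply_third hBE]; module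
  simp only [map_add, map_smulₛₗ, LinearMap.add_apply, LinearMap.smul_apply, RingHom.id_apply]
  rw [h.apply_second hBE (R v₁), h.apply_second hBE (R v₂), h.apply_second hBE (R v₃),
    h.apply_third hBE (R v₁), h.apply_third hBE (R v₂), h₂₁, ← hE.neg (R v₃) (R v₁),
    ← hE.neg (R v₃) (R v₂), ← hE.neg (R v₁) (R v₂), hE.self_eq_zero, hE.self_eq_zero, h₁₂, h₃₂, h₃₁]
  module

end IsCompanionTriple

theorem exists_normal_form (hV : Module.finrank K V = 3) (hσ : Function.Surjective σ)
    (hR : Function.Injective R) {B E : V →ₗ[K] V →ₗ[K] W}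
    (hBE : ∀ x y, B x (T y) = E x (R y)) (hE : E.IsAlt)
    (hE₀ : ∀ x y, LinearIndependent K ![x, y] → E x y ≠ 0) {x : V}
    (hx : LinearIndependent K ![x, T x, T (T x)]) :
    ∃ (a b c : K) (v : Fin 3 → V) (u : Fin 3 → W),
      LinearIndependent K v ∧ LinearIndependent K u ∧ ∀ x y z : K,
        B (R (x • v 0 + y • v 1 + z • v 2)) (x • v 0 + y • v 1 + z • v 2) =
          (σ x * x + a * σ y * z + b * σ x * y + c * σ x * z) • u 0 +
          (a * (σ y * y) + σ z * x + b * σ z * y + c * σ x * y) • u 1 +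
          (σ z * z - σ x * y) • u 2 := by
  obtain ⟨a, b, c, v₂, v₃, h, hv⟩ := exists_isCompanionTriple hV hσ hx
  have hRv : LinearIndependent K ![R x, R v₂, R v₃] := by
    convert hv.map_of_surjective_injective σ R.toAddMonoidHom hσ
      (fun y hy => hR (by simpa using hy)) (fun r y => by simp) using 1
    ext i; fin_cases i <;> rfl
  have hEv := linearIndependent_isAlt_apply_cyclic hE hE₀ hRv
  exact ⟨a, b, c, ![x, v₂, v₃], ![B (R x) x, B (R v₃) x, B (R v₃) v₃], hv,
    h.linearIndependent_apply hBE hE hEv,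
    h.apply_self hBE hE (h.coeff_ne_zero hBE (hEv.ne_zero 0))⟩

end LinearAlgebra

section TwistedForms

variable {K L : Type*} [CommRing K] [CommRing L] [Algebra K L]

/-- The alternating form `(x, y) ↦ x φ(y) - φ(x) y` attached to an endomorphism `φ` of `L`. -/
def twistedWedge (φ : L →ₐ[K] L) : L →ₗ[K] L →ₗ[K] L :=
  (LinearMap.mul K L).compl₂ φ.toLinearMap - (LinearMap.mul K L).comp φ.toLinearMap

theorem twistedWedge_apply (φ : L →ₐ[K] L) (x y : L) :
    twistedWedge φ x y = x * φ y - φ x * y := rfl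

theorem isAlt_twistedWedge (φ : L →ₐ[K] L) : (twistedWedge φ).IsAlt := fun x => by
  rw [twistedWedge_apply, mul_comm, sub_self]

/-- The bilinear form `(x, y) ↦ x y - β φ(x) φ²(y)`. For the `q`-Frobenius `φ` and
`β = ω^(q-1)`, the planar function `F_{r,ω}` is its value at `(X^r, X)`. -/
def zkwForm (β : L) (φ : L →ₐ[K] L) : L →ₗ[K] L →ₗ[K] L :=
  LinearMap.mul K L - β • (LinearMap.mul K L).compl₁₂ φ.toLinearMap (φ.comp φ).toLinearMap

theorem zkwForm_apply (β : L) (φ : L →ₐ[K] L) (x y : L) :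
    zkwForm β φ x y = x * y - β * (φ x * φ (φ y)) := rfl

variable {σ : K →+* K}

/-- The semilinear map `x ↦ φ(ω R(x))`, chosen so that it turns `zkwForm` into `twistedWedge`. -/
def twistedShift (φ : L →ₐ[K] L) (ω : L) (R : L →ₛₗ[σ] L) : L →ₛₗ[σ] L :=
  (φ.toLinearMap.comp (LinearMap.mulLeft K ω)).comp R

theorem twistedShift_apply (φ : L →ₐ[K] L) (ω : L) (R : L →ₛₗ[σ] L) (x : L) :
    twistedShift φ ω R x = φ (ω * R x) := rfl

theorem zkwForm_twistedShift {φ : L →ₐ[K] L} (hφ : ∀ x, φ (φ (φ x)) = x) {β ω : L}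
    (hβ : β * ω = φ ω) (R : L →ₛₗ[σ] L) (x y : L) :
    zkwForm β φ x (twistedShift φ ω R y) = (φ ω • twistedWedge φ) x (R y) := by
  rw [zkwForm_apply, twistedShift_apply, hφ, LinearMap.smul_apply, LinearMap.smul_apply,
    twistedWedge_apply, smul_eq_mul, map_mul]
  linear_combination -(φ x * R y) * hβ

theorem twistedWedge_twistedShift {φ : L →ₐ[K] L} {R : L →ₛₗ[σ] L}
    (hRmul : ∀ x y, R (x * y) = R x * R y) (hRφ : ∀ x, R (φ x) = φ (R x)) (ω x y : L) :
    twistedWedge φ (twistedShift φ ω R x) (twistedShift φ ω R y) =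
      φ (ω * φ ω * R (twistedWedge φ x y)) := by
  simp only [twistedWedge_apply, twistedShift_apply, map_sub, map_mul, hRmul, hRφ]
  ring

end TwistedForms

theorem twistedWedge_ne_zero {K L : Type*} [Field K] [Field L] [Algebra K L] {φ : L →ₐ[K] L}
    (hφ : ∀ x, φ x = x → x ∈ Set.range (algebraMap K L)) {x y : L}
    (hxy : LinearIndependent K ![x, y]) : twistedWedge φ x y ≠ 0 := by
  intro h
  rw [twistedWedge_apply] at h
  have hx : x ≠ 0 := hxy.ne_zero 0
  have hφx : φ x ≠ 0 := by simpa using hx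
  obtain ⟨κ, hκ⟩ := hφ (y / x) <| by
    rw [map_div₀, div_eq_div_iff hφx hx]
    linear_combination h
  refine (LinearIndependent.pair_iff' hx).1 hxy κ ?_
  rw [Algebra.smul_def, hκ, div_mul_cancel₀ y hx]

section FiniteField

theorem dvd_of_pow_eq_pow_of_dvd_orderOf {G : Type*} [Group G] {ω z : G}
    (hz : z ∈ Subgroup.zpowers ω) {g j : ℕ} (hg : g ∣ orderOf ω) (h : ω ^ j = z ^ g) : g ∣ j := by
  obtain ⟨i, rfl⟩ := hz
  have hji : ω ^ ((j : ℤ) - i * g) = 1 := by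
    rw [zpow_sub, zpow_natCast, h, zpow_mul, zpow_natCast, mul_inv_cancel]
  have hdvd := (Int.natCast_dvd_natCast.2 hg).trans (orderOf_dvd_iff_zpow_eq_one.2 hji)
  exact Int.natCast_dvd_natCast.1 ((dvd_sub_left (Dvd.intro_left i rfl)).1 hdvd)

variable {K L : Type*} [Field K] [Field L] [Algebra K L]

theorem mem_range_algebraMap_of_pow_card_eq [Fintype K] [Finite L] {x : L}
    (hx : x ^ Fintype.card K = x) : x ∈ Set.range (algebraMap K L) := by
  refine (IsGalois.mem_range_algebraMap_iff_fixed x).2 fun f => ?_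
  obtain ⟨n, rfl⟩ := (FiniteField.bijective_frobeniusAlgEquivOfAlgebraic_pow K L).2 f
  rw [AlgEquiv.coe_pow]
  exact Function.iterate_fixed hx n

theorem sum_card_pow_dvd_orderOf [Finite L] {ω : Lˣ} (hω : ∀ x, x ∈ Subgroup.zpowers ω) :
    ∑ i ∈ Finset.range (Module.finrank K L), Nat.card K ^ i ∣ orderOf ω := by
  have := Finite.of_injective _ (algebraMap K L).injective
  rw [orderOf_eq_card_of_forall_mem_zpowers hω, Nat.card_units,
    Module.natCard_eq_pow_finrank (K := K) (V := L),
    ← geom_sum_mul_of_one_le Finite.one_lt_card.le]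
  exact dvd_mul_right _ _

/-- The norm is surjective and equals the power `∑ qⁱ`, so scalars are `g`-th powers. -/
theorem linearIndependent_pow_mul_pow [Finite L] {ω : Lˣ} (hω : ∀ x, x ∈ Subgroup.zpowers ω)
    {g j s : ℕ} (hg : g ∣ ∑ i ∈ Finset.range (Module.finrank K L), Nat.card K ^ i)
    (hj : ¬ g ∣ j) {y : L} (hy : y ≠ 0) :
    LinearIndependent K ![y, (ω : L) ^ j * y ^ (g * s + 1)] := by
  refine (LinearIndependent.pair_iff' hy).2 fun κ h => hj ?_
  obtain ⟨x, rfl⟩ := FiniteField.norm_surjective K L κ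
  have hx : x ≠ 0 := by
    rintro rfl
    simp [hy] at h
  obtain ⟨t, ht⟩ := hg
  rw [Algebra.smul_def, FiniteField.algebraMap_norm_eq_pow_sum, ht] at h
  have hpow : (ω : L) ^ j = (x ^ t / y ^ s) ^ g := by
    rw [div_pow, ← pow_mul, ← pow_mul, mul_comm t, mul_comm s, eq_div_iff (pow_ne_zero _ hy)]
    exact mul_right_cancel₀ hy (by rw [mul_assoc, ← pow_succ, h])
  have hne : x ^ t / y ^ s ≠ 0 := div_ne_zero (pow_ne_zero t hx) (pow_ne_zero s hy)
  refine dvd_of_pow_eq_pow_of_dvd_orderOf (hω (Units.mk0 _ hne))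
    ((Dvd.intro t ht.symm).trans (sum_card_pow_dvd_orderOf (K := K) hω)) ?_
  ext
  simpa using hpow

end FiniteField

section Arithmetic

theorem sq_add_self_add_one_dvd_pow_sub_one {R : Type*} [CommRing R] (x : R) {n : ℕ}
    (hn : 3 ∣ n) : x ^ 2 + x + 1 ∣ x ^ n - 1 := by
  obtain ⟨j, rfl⟩ := hn
  have hcube : x ^ 2 + x + 1 ∣ x ^ 3 - 1 := ⟨x - 1, by ring⟩
  exact hcube.trans (by simpa [pow_mul] using sub_dvd_pow_sub_pow (x ^ 3) 1 j)

theorem sq_add_self_add_one_dvd_of_not_dvd {R : Type*} [CommRing R] (x : R) {n : ℕ}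
    (hn : ¬ 3 ∣ n) : x ^ 2 + x + 1 ∣ (x ^ n) ^ 2 + x ^ n + 1 := by
  have hperiod (i j : ℕ) : x ^ 2 + x + 1 ∣ x ^ (3 * j + i) - x ^ i := by
    rw [pow_add, ← sub_one_mul]
    exact (sq_add_self_add_one_dvd_pow_sub_one x (dvd_mul_right 3 j)).mul_right _
  obtain ⟨j, rfl | rfl⟩ : ∃ j, n = 3 * j + 1 ∨ n = 3 * j + 2 := ⟨n / 3, by omega⟩
  · convert ((hperiod 2 (2 * j)).add (hperiod 1 j)).add dvd_rfl using 1
    ring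
  · convert ((hperiod 1 (2 * j + 1)).add (hperiod 2 j)).add dvd_rfl using 1
    ring

theorem not_three_dvd_div_gcd {m k : ℕ} (hm : m ≠ 0)
    (h : 3 ∣ m / Nat.gcd k m + k / Nat.gcd k m) : ¬ 3 ∣ m / Nat.gcd k m := fun hm' =>
  Nat.not_coprime_of_dvd_of_dvd (by norm_num) ((Nat.dvd_add_right hm').1 h) hm'
    (Nat.coprime_div_gcd_div_gcd (Nat.gcd_pos_of_pos_right k hm.bot_lt))

theorem exists_dvd_sq_add_self_add_one {p m k : ℕ} (hp : p ≠ 0) (hm : m ≠ 0)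
    (h : 3 ∣ m / Nat.gcd k m + k / Nat.gcd k m) :
    ∃ g s : ℕ, 1 < g ∧ g ∣ (p ^ m) ^ 2 + p ^ m + 1 ∧ p ^ m * p ^ k = g * s + 1 := by
  have hm' := not_three_dvd_div_gcd hm h
  set d := Nat.gcd k m
  have hpm : p ^ m = (p ^ d) ^ (m / d) := by
    rw [← pow_mul, Nat.mul_div_cancel' (Nat.gcd_dvd_right k m)]
  have hpk : p ^ k = (p ^ d) ^ (k / d) := by
    rw [← pow_mul, Nat.mul_div_cancel' (Nat.gcd_dvd_left k m)]
  have hP : 0 < p ^ d := pow_pos hp.bot_lt d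
  rw [hpm, hpk, ← pow_add]
  generalize p ^ d = P at hP
  obtain ⟨s, hs⟩ : P ^ 2 + P + 1 ∣ P ^ (m / d + k / d) - 1 := by
    have := sq_add_self_add_one_dvd_pow_sub_one (P : ℤ) h
    zify [Nat.one_le_pow (m / d + k / d) P hP]
    exact this
  refine ⟨P ^ 2 + P + 1, s, by omega, ?_, ?_⟩
  · exact_mod_cast sq_add_self_add_one_dvd_of_not_dvd (P : ℤ) hm'
  · rw [← hs, Nat.sub_add_cancel (Nat.one_le_pow _ P hP)]

theorem not_dvd_add_sq_of_dvd_sq_add_self_add_one {g q : ℕ} (hg₁ : 1 < g)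
    (hg : g ∣ q ^ 2 + q + 1) : ¬ g ∣ q + q ^ 2 := fun h =>
  hg₁.ne' (Nat.dvd_one.1 ((Nat.dvd_add_right (add_comm q _ ▸ h)).1 hg))

theorem not_dvd_of_dvd_sq_add_self_add_one {g q : ℕ} (hg₁ : 1 < g)
    (hg : g ∣ q ^ 2 + q + 1) : ¬ g ∣ q := fun h =>
  not_dvd_add_sq_of_dvd_sq_add_self_add_one hg₁ hg (h.add (h.pow two_ne_zero))

end Arithmetic

section ZKW

open FiniteField

variable {K L : Type*} [Field K] [Fintype K] [Field L] [Algebra K L]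

theorem exists_eq_pow_of_card_eq_pow {p m : ℕ} (hK : Fintype.card K = p ^ m) (hm : m ≠ 0) :
    ∃ (ℓ e : ℕ), ExpChar K ℓ ∧ p = ℓ ^ e := by
  obtain ⟨ℓ, hchar, n, hℓ, hn⟩ := FiniteField.card' K
  have hdvd : p ∣ ℓ ^ (n : ℕ) := by
    rw [← hn, hK]
    exact dvd_pow_self p hm
  obtain ⟨e, -, he⟩ := (Nat.dvd_prime_pow hℓ).1 hdvd
  exact ⟨ℓ, e, .prime hℓ, he⟩

theorem frobeniusAlgHom_apply_apply_apply (hL : Module.finrank K L = 3) (x : L) :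
    frobeniusAlgHom K L (frobeniusAlgHom K L (frobeniusAlgHom K L x)) = x := by
  have : FiniteDimensional K L := Module.finite_of_finrank_pos (by omega)
  have : Finite L := Module.finite_of_finite K
  let _ := Fintype.ofFinite L
  simp only [coe_frobeniusAlgHom]
  rw [← pow_mul, ← pow_mul, ← pow_two, ← pow_succ',
    show 2 + 1 = Module.finrank K L by rw [hL], ← Module.card_eq_pow_finrank, pow_card]

theorem zkwForm_pow (ω X : L) (r : ℕ) :
    zkwForm (ω ^ (Fintype.card K - 1)) (frobeniusAlgHom K L) (X ^ r) X =
      X ^ (r + 1) - ω ^ (Fintype.card K - 1) * X ^ (Fintype.card K * r + Fintype.card K ^ 2) := by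
  simp only [zkwForm_apply, coe_frobeniusAlgHom]
  ring

variable {ω : Lˣ} {r g s : ℕ} {σ : K →+* K} {R : L →ₛₗ[σ] L}

theorem linearIndependent_iterate_twistedShift (hL : Module.finrank K L = 3)
    (hω : ∀ x : Lˣ, x ∈ Subgroup.zpowers ω) (hR : ∀ x, R x = x ^ r) (hg₁ : 1 < g)
    (hg : g ∣ Fintype.card K ^ 2 + Fintype.card K + 1)
    (hs : Fintype.card K * r = g * s + 1) {x : L} (hx : x ≠ 0) :
    LinearIndependent K ![x, twistedShift (frobeniusAlgHom K L) ω R x,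
      twistedShift (frobeniusAlgHom K L) ω R (twistedShift (frobeniusAlgHom K L) ω R x)] := by
  have : FiniteDimensional K L := Module.finite_of_finrank_pos (by omega)
  have : Finite L := Module.finite_of_finite K
  set φ := frobeniusAlgHom K L
  have hφ (x : L) : φ x = x ^ Fintype.card K := rfl
  have hN : g ∣ ∑ i ∈ Finset.range (Module.finrank K L), Nat.card K ^ i := by
    rw [hL, Nat.card_eq_fintype_card]
    convert hg using 1
    simp only [Finset.sum_range_succ, Finset.sum_range_zero]
    ring
  have hshift (x : L) (hx : x ≠ 0) : LinearIndependent K ![x, twistedShift φ ω R x] := by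
    convert linearIndependent_pow_mul_pow hω hN (s := s)
      (not_dvd_of_dvd_sq_add_self_add_one hg₁ hg) hx using 3
    rw [twistedShift_apply, hφ, hR, mul_pow, ← hs]
    ring
  have hbivector (x : L) (hx : x ≠ 0) : LinearIndependent K ![x, φ (ω * φ ω * R x)] := by
    convert linearIndependent_pow_mul_pow hω hN (s := s)
      (not_dvd_add_sq_of_dvd_sq_add_self_add_one hg₁ hg) hx using 3
    rw [hφ, hφ, hR, mul_pow, ← hs]
    ring
  refine linearIndependent_iterate_of_no_eigenvector (isAlt_twistedWedge φ)
    (fun x y => twistedWedge_ne_zero fun x => mem_range_algebraMap_of_pow_card_eq)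
    (twistedWedge_twistedShift (fun x y => ?_) (fun x => ?_) (ω : L)) hshift hbivector hx
  · simp only [hR, mul_pow]
  · simp only [hR, hφ, ← pow_mul, mul_comm]

theorem exists_zkw_normal_form (hL : Module.finrank K L = 3)
    (hω : ∀ x : Lˣ, x ∈ Subgroup.zpowers ω) (hσ : ∀ x, σ x = x ^ r) (hR : ∀ x, R x = x ^ r)
    (hg₁ : 1 < g) (hg : g ∣ Fintype.card K ^ 2 + Fintype.card K + 1)
    (hs : Fintype.card K * r = g * s + 1) :
    ∃ (a b c : K) (v u : Fin 3 → L), LinearIndependent K v ∧ LinearIndependent K u ∧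
      ∀ x y z : K,
        (x • v 0 + y • v 1 + z • v 2) ^ (r + 1) -
            (ω : L) ^ (Fintype.card K - 1) *
              (x • v 0 + y • v 1 + z • v 2) ^ (Fintype.card K * r + Fintype.card K ^ 2) =
          (x ^ (r + 1) + a * y ^ r * z + b * x ^ r * y + c * x ^ r * z) • u 0 +
          (a * y ^ (r + 1) + z ^ r * x + b * z ^ r * y + c * x ^ r * y) • u 1 +
          (z ^ (r + 1) - x ^ r * y) • u 2 := by
  have : FiniteDimensional K L := Module.finite_of_finrank_pos (by omega)
  have : Finite L := Module.finite_of_finite K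
  have hβ : (ω : L) ^ (Fintype.card K - 1) * ω = frobeniusAlgHom K L ω := by
    rw [coe_frobeniusAlgHom, pow_sub_one_mul Fintype.card_ne_zero]
  have hφω : frobeniusAlgHom K L ω ≠ 0 := by simp
  have hR₀ : Function.Injective R := (injective_iff_map_eq_zero R).2 fun x hx =>
    eq_zero_of_pow_eq_zero (hR x ▸ hx)
  obtain ⟨a, b, c, v, u, hv, hu, h⟩ := exists_normal_form hL
    (Finite.injective_iff_surjective.1 σ.injective) hR₀
    (zkwForm_twistedShift (frobeniusAlgHom_apply_apply_apply hL) hβ R)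
    (fun x => by rw [LinearMap.smul_apply, LinearMap.smul_apply, isAlt_twistedWedge, smul_zero])
    (fun x y hxy => smul_ne_zero hφω
      (twistedWedge_ne_zero (fun x => mem_range_algebraMap_of_pow_card_eq) hxy))
    (linearIndependent_iterate_twistedShift hL hω hR hg₁ hg hs one_ne_zero)
  refine ⟨a, b, c, v, u, hv, hu, fun x y z => ?_⟩
  simpa only [hR, hσ, zkwForm_pow, ← pow_succ] using h x y z

end ZKW

theorem stmt9_general {p m k : ℕ}
    (h3 : (m / Nat.gcd k m + k / Nat.gcd k m) % 3 = 0)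
    {K L : Type*} [Field K] [Fintype K] (hK : Fintype.card K = p ^ m)
    [Field L] [Algebra K L] (hL : Module.finrank K L = 3)
    (ω : Lˣ) (hω : ∀ x : Lˣ, x ∈ Subgroup.zpowers ω) :
    ∃ (a b c : K) (v u : Fin 3 → L),
      (LinearIndependent K v ∧ Submodule.span K (Set.range v) = ⊤) ∧
      (LinearIndependent K u ∧ Submodule.span K (Set.range u) = ⊤) ∧
      ∀ x y z : K,
        (x • v 0 + y • v 1 + z • v 2) ^ (p ^ k + 1) -
            (ω : L) ^ (p ^ m - 1) *
              (x • v 0 + y • v 1 + z • v 2) ^ (p ^ (m + k) + p ^ (2 * m)) =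
          (x ^ (p ^ k + 1) + a * y ^ p ^ k * z + b * x ^ p ^ k * y
              + c * x ^ p ^ k * z) • u 0 +
          (a * y ^ (p ^ k + 1) + z ^ p ^ k * x + b * z ^ p ^ k * y
              + c * x ^ p ^ k * y) • u 1 +
          (z ^ (p ^ k + 1) - x ^ p ^ k * y) • u 2 := by
  have hm : m ≠ 0 := by
    rintro rfl
    simpa [hK] using Fintype.one_lt_card (α := K)
  have hp : p ≠ 0 := by
    rintro rfl
    simp [hm] at hK
  obtain ⟨g, s, hg₁, hg, hs⟩ := exists_dvd_sq_add_self_add_one hp hm (Nat.dvd_of_mod_eq_zero h3)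
  obtain ⟨ℓ, e, _, rfl⟩ := exists_eq_pow_of_card_eq_pow hK hm
  have := expChar_of_injective_algebraMap (algebraMap K L).injective ℓ
  rw [← hK] at hg hs
  obtain ⟨a, b, c, v, u, hv, hu, h⟩ := exists_zkw_normal_form hL hω
    (R := LinearMap.iterateFrobenius K L ℓ (e * k))
    (fun x => by rw [iterateFrobenius_def, pow_mul])
    (fun x => by rw [← pow_mul]; rfl) hg₁ hg hs
  have hspan {w : Fin 3 → L} (hw : LinearIndependent K w) : Submodule.span K (Set.range w) = ⊤ :=
    hw.span_eq_top_of_card_eq_finrank (by simp [hL])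
  refine ⟨a, b, c, v, u, ⟨hv, hspan hv⟩, ⟨hu, hspan hu⟩, ?_⟩
  rwa [pow_add _ m k, pow_mul' _ 2 m, ← hK]

/-- ZKW case: every Zha–Kyureghyan–Wang planar function
`F_{r,ω}(X) = X^{r+1} - ω^{q-1} X^{qr+q²}` on `F_{q^3}` (with `m/d` odd and
`m/d + k/d ≡ 0 (mod 3)`, `d = gcd(k,m)`, `r = p^k`, `ω` a generator of
`F_{q^3}^×`) is `GL(3,q)`-equivalent to a member of the family of
Theorem 1.4 with `σ = r`. -/
theorem stmt9 {p m k : ℕ} (hp : p.Prime) (hm : 0 < m)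
    (hodd : Odd (m / Nat.gcd k m))
    (h3 : (m / Nat.gcd k m + k / Nat.gcd k m) % 3 = 0)
    {K L : Type*} [Field K] [Fintype K] (hK : Fintype.card K = p ^ m)
    [Field L] [Algebra K L] (hL : Module.finrank K L = 3)
    (ω : Lˣ) (hω : ∀ x : Lˣ, x ∈ Subgroup.zpowers ω) :
    ∃ (a b c : K) (v u : Fin 3 → L),
      (LinearIndependent K v ∧ Submodule.span K (Set.range v) = ⊤) ∧
      (LinearIndependent K u ∧ Submodule.span K (Set.range u) = ⊤) ∧
      ∀ x y z : K,
        (x • v 0 + y • v 1 + z • v 2) ^ (p ^ k + 1) -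
            (ω : L) ^ (p ^ m - 1) *
              (x • v 0 + y • v 1 + z • v 2) ^ (p ^ (m + k) + p ^ (2 * m)) =
          (x ^ (p ^ k + 1) + a * y ^ p ^ k * z + b * x ^ p ^ k * y
              + c * x ^ p ^ k * z) • u 0 +
          (a * y ^ (p ^ k + 1) + z ^ p ^ k * x + b * z ^ p ^ k * y
              + c * x ^ p ^ k * y) • u 1 +
          (z ^ (p ^ k + 1) - x ^ p ^ k * y) • u 2 :=
  stmt9_general h3 hK hL ω hω
end

section
/- Let q = p^m, r = p^k, d = gcd(k,m), and suppose m/d is odd and m/d + k/d ≡ 0 (mod 3). Let H = {x^{r−q²} : x ∈ F_{q^3}^×} be the subgroup of (r−q²)-th powers of F_{q^3}^× (equivalently, of (qr−1)-th powers, since gcd(qr−1, q³−1) = gcd(r−q², q³−1)). Then for every generator ω′ of the cyclic group F_{q^3}^×, there exists ω ∈ ω′·H such that {1, ω, ω^{qr+1}} is linearly independent over F_q (hence an F_q-basis of F_{q^3}). -/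
/-!
Let `σ` be an automorphism of `L` preserving `K`, with `σ ^ n = 1`, and suppose that `w * σ w` lies
in the span `V` of `1` and `w`. Then the `σ`-semilinear map `y ↦ w * σ y` preserves `V`, hence so
does its `n`-th iterate, which is multiplication by `N w = w * σ w * ⋯ * σ^(n-1) w`. Thus `V` is a
vector space over `K(N w)`, so the degree of `K(N w)` over `K` divides both `dim V ≤ 2` and the odd
number `[L : K]`, which forces `N w ∈ K`.

For finite `L` and `n` the order of `σ`, `N` is the norm from `L` to the fixed field of `σ`, which
is surjective on units. If `w` generates `Lˣ`, the whole fixed field is therefore contained in `K`.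
When `σ y = y ^ p ^ (m + k)`, `e = [L : K]` and `d = gcd k m`, this fails: `e ∣ m / d + k / d` puts
the subfield with `p ^ (d * e)` elements inside the fixed field, but not inside `K`, since
coprimality of `m / d` and `k / d` prevents `d * e` from dividing `m`. Since `w` is an arbitrary
generator, every coset `ω'·H` is represented by `ω'` itself.
-/

open Module
open scoped IntermediateField

section Extension

variable {K L : Type*} [Field K] [Field L] [Algebra K L]

theorem mem_bot_of_mul_mem_of_coprime_finrank [Algebra.IsAlgebraic K L] {V : Submodule K L}
    (hV : (finrank K L).Coprime (finrank K V)) {g : L} (hg : ∀ v ∈ V, g * v ∈ V) :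
    g ∈ (⊥ : IntermediateField K L) := by
  have mul_mem {c : L} (hc : c ∈ K⟮g⟯) {v : L} (hv : v ∈ V) : c * v ∈ V := by
    rw [← IntermediateField.mem_toSubalgebra,
      IntermediateField.adjoin_simple_toSubalgebra_of_isAlgebraic
        (Algebra.IsAlgebraic.isAlgebraic g)] at hc
    induction hc using Algebra.adjoin_induction generalizing v with
    | mem x hx => exact Set.mem_singleton_iff.1 hx ▸ hg v hv
    | algebraMap a => simpa only [Algebra.smul_def] using V.smul_mem a hv
    | add x y _ _ hx hy => simpa only [add_mul] using V.add_mem (hx hv) (hy hv)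
    | mul x y _ _ hx hy => simpa only [mul_assoc] using hx (hy hv)
  let W : Submodule K⟮g⟯ L := { V with smul_mem' := fun c _ hv ↦ mul_mem c.2 hv }
  have hdvdV : finrank K K⟮g⟯ ∣ finrank K V := ⟨_, (finrank_mul_finrank K K⟮g⟯ W).symm⟩
  have hdvdL : finrank K K⟮g⟯ ∣ finrank K L := ⟨_, (finrank_mul_finrank K K⟮g⟯ L).symm⟩
  exact IntermediateField.finrank_adjoin_simple_eq_one_iff.1
    (Nat.eq_one_of_dvd_coprimes hV hdvdL hdvdV)

theorem coprime_finrank_span_pair_of_odd {V : Type*} [AddCommGroup V] [Module K V] {n : ℕ}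
    (hn : Odd n) {x : V} (hx : x ≠ 0) (y : V) :
    n.Coprime (finrank K (Submodule.span K {x, y})) := by
  classical
  have hle : finrank K (Submodule.span K {x, y}) ≤ 2 := by
    have h := finrank_span_finset_le_card (R := K) ({x, y} : Finset V)
    rw [Finset.coe_pair] at h
    exact h.trans Finset.card_le_two
  have : FiniteDimensional K (Submodule.span K {x, y}) :=
    FiniteDimensional.span_of_finite K (Set.toFinite _)
  have hpos : 1 ≤ finrank K (Submodule.span K {x, y}) :=
    Submodule.one_le_finrank_iff.2 <|
      (Submodule.ne_bot_iff _).2 ⟨x, Submodule.subset_span (Set.mem_insert x _), hx⟩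
  interval_cases finrank K (Submodule.span K {x, y})
  · exact n.coprime_one_right
  · exact Nat.coprime_two_right.2 hn

theorem iterate_mul_apply_eq_prod_mul {M : Type*} [CommMonoid M] (σ : M →* M) (w y : M) (n : ℕ) :
    (fun y ↦ w * σ y)^[n] y = (∏ i ∈ Finset.range n, σ^[i] w) * σ^[n] y := by
  induction n with
  | zero => simp
  | succ n ih =>
    simp only [Function.iterate_succ_apply', ih, Finset.prod_range_succ', map_mul, map_prod,
      Function.iterate_zero_apply]
    rw [mul_comm _ w, mul_assoc]

theorem prod_iterate_mem_bot_of_mul_apply_mem_span [Algebra.IsAlgebraic K L]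
    (hodd : Odd (finrank K L)) (σ : L →+* L)
    (hσK : ∀ a : K, σ (algebraMap K L a) ∈ (⊥ : IntermediateField K L))
    {n : ℕ} (hσn : σ^[n] = id) {w : L} (hw : w * σ w ∈ Submodule.span K {1, w}) :
    ∏ i ∈ Finset.range n, σ^[i] w ∈ (⊥ : IntermediateField K L) := by
  set V := Submodule.span K {1, w}
  have hstable : Set.MapsTo (fun y ↦ w * σ y) (V : Set L) V := by
    intro y hy
    obtain ⟨a, b, rfl⟩ := Submodule.mem_span_pair.1 hy
    obtain ⟨a', ha'⟩ := IntermediateField.mem_bot.1 (hσK a)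
    obtain ⟨b', hb'⟩ := IntermediateField.mem_bot.1 (hσK b)
    have hexpand : w * σ (a • 1 + b • w) = a' • w + b' • (w * σ w) := by
      simp only [Algebra.smul_def, map_add, map_mul, map_one, ← ha', ← hb']
      ring
    have hwV : w ∈ V := Submodule.subset_span (Set.mem_insert_of_mem 1 rfl)
    simp only [SetLike.mem_coe, hexpand]
    exact V.add_mem (V.smul_mem _ hwV) (V.smul_mem _ hw)
  refine mem_bot_of_mul_mem_of_coprime_finrank (coprime_finrank_span_pair_of_odd hodd one_ne_zero w)
    fun v hv ↦ ?_
  have hiterate := iterate_mul_apply_eq_prod_mul (σ : L →* L) w v n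
  simp only [MonoidHom.coe_coe, hσn, id_eq] at hiterate
  exact hiterate ▸ hstable.iterate n hv

end Extension

section Norm

variable {L : Type*} [Field L]

theorem algebraMap_norm_fixedPoints_eq_prod_smul (G : Type*) [Group G] [Fintype G]
    [MulSemiringAction G L] [FaithfulSMul G L] (x : L) :
    algebraMap (FixedPoints.subfield G L) L (Algebra.norm (FixedPoints.subfield G L) x) =
      ∏ g : G, g • x := by
  rw [Algebra.norm_eq_prod_automorphisms,
    ← (FixedPoints.toAlgAutMulEquiv G L).toEquiv.prod_comp]
  rfl

theorem algebraMap_norm_fixedPoints_zpowers_eq_prod_iterate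
    {σ : RingAut L} (hσ : IsOfFinOrder σ) (x : L) :
    algebraMap _ L (Algebra.norm (FixedPoints.subfield (Subgroup.zpowers σ) L) x) =
      ∏ i ∈ Finset.range (orderOf σ), σ^[i] x := by
  have : Finite (Subgroup.zpowers σ) := finite_zpowers.2 hσ
  have := Fintype.ofFinite (Subgroup.zpowers σ)
  rw [algebraMap_norm_fixedPoints_eq_prod_smul, Finset.prod_range,
    ← (finEquivZPowers hσ).prod_comp]
  exact Finset.prod_congr rfl fun i _ ↦ (smul_iterate_apply σ i x).symm

end Norm

section Finite

variable {K L : Type*} [Field K] [Field L] [Algebra K L]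

theorem mem_bot_iff_pow_natCard_eq_self [Finite K] {x : L} :
    x ∈ (⊥ : IntermediateField K L) ↔ x ^ Nat.card K = x := by
  have := Fintype.ofFinite K
  rw [Nat.card_eq_fintype_card]
  constructor
  · rintro ⟨a, rfl⟩
    exact (map_pow _ a _).symm.trans (congrArg _ (FiniteField.pow_card a))
  · intro hx
    have hsplits := Polynomial.IsSplittingField.splits K
      (Polynomial.X ^ Fintype.card K - Polynomial.X : Polynomial K)
    exact Polynomial.Splits.mem_range_of_isRoot (by simpa using hsplits)
      (FiniteField.X_pow_card_sub_X_ne_zero K Fintype.one_lt_card)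
      (by simp [Polynomial.IsRoot, hx])

theorem mem_bot_of_prod_iterate_mem_bot [Finite L] {σ : RingAut L} {w : Lˣ}
    (hw : ∀ x : Lˣ, x ∈ Subgroup.zpowers w)
    (hprod : ∏ i ∈ Finset.range (orderOf σ), σ^[i] (w : L) ∈ (⊥ : IntermediateField K L))
    {ζ : L} (hζ : σ ζ = ζ) : ζ ∈ (⊥ : IntermediateField K L) := by
  have : Finite (RingAut L) := DFunLike.finite _
  obtain rfl | hζ0 := eq_or_ne ζ 0
  · exact zero_mem _
  set F := FixedPoints.subfield (Subgroup.zpowers σ) L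
  have hζF : ζ ∈ F := by
    rintro ⟨g, hg⟩
    have hstab : Subgroup.zpowers σ ≤ MulAction.stabilizer (RingAut L) ζ :=
      Subgroup.zpowers_le.2 hζ
    exact hstab hg
  obtain ⟨y, hy⟩ := FiniteField.unitsMap_norm_surjective F L
    (Units.mk0 ⟨ζ, hζF⟩ (by simpa [Subtype.ext_iff] using hζ0))
  obtain ⟨j, rfl⟩ := Subgroup.mem_zpowers_iff.1 (hw y)
  have hζw : (∏ i ∈ Finset.range (orderOf σ), σ^[i] (w : L)) ^ j = ζ := by
    have hnorm : Algebra.norm F (w : L) ^ j = ⟨ζ, hζF⟩ := by simpa using congrArg Units.val hy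
    rw [← algebraMap_norm_fixedPoints_zpowers_eq_prod_iterate (isOfFinOrder_of_finite σ)]
    exact (map_zpow₀ (algebraMap F L) _ j).symm.trans (congrArg (algebraMap F L) hnorm)
  exact hζw ▸ zpow_mem hprod j

theorem linearIndependent_one_self_mul_apply [Finite L] (hodd : Odd (finrank K L))
    (σ : RingAut L) {ζ : L} (hζ : σ ζ = ζ) (hζK : ζ ∉ (⊥ : IntermediateField K L))
    {w : Lˣ} (hw : ∀ x : Lˣ, x ∈ Subgroup.zpowers w) :
    LinearIndependent K ![1, (w : L), w * σ w] := by
  have : Finite K := Finite.of_injective _ (algebraMap K L).injective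
  have hσK (a : K) : σ (algebraMap K L a) ∈ (⊥ : IntermediateField K L) := by
    have ha := mem_bot_iff_pow_natCard_eq_self.1 (algebraMap_mem (⊥ : IntermediateField K L) a)
    rw [mem_bot_iff_pow_natCard_eq_self, ← map_pow, ha]
  have hσn : σ^[orderOf σ] = id := by
    ext y
    exact (smul_iterate_apply σ _ y).trans (by rw [pow_orderOf_eq_one, one_smul, id_eq])
  have hnotMem : (w : L) ∉ (⊥ : IntermediateField K L) := by
    intro hwK
    obtain ⟨j, hj⟩ := Subgroup.mem_zpowers_iff.1
      (hw (Units.mk0 ζ (ne_of_mem_of_not_mem (zero_mem _) hζK).symm))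
    have hζw : (w : L) ^ j = ζ := by rw [← Units.val_zpow_eq_zpow_val, hj, Units.val_mk0]
    exact hζK (hζw ▸ zpow_mem hwK j)
  have hpair : LinearIndependent K ![1, (w : L)] :=
    (LinearIndependent.pair_iff' one_ne_zero).2 fun a ha ↦
      hnotMem ⟨a, by rw [← ha]; exact Algebra.algebraMap_eq_smul_one a⟩
  have hsnoc : ![1, (w : L), w * σ w] = Fin.snoc ![1, (w : L)] (w * σ w) := by
    ext i
    fin_cases i <;> rfl
  rw [hsnoc, linearIndependent_finSnoc]
  refine ⟨hpair, fun hspan ↦ hζK (mem_bot_of_prod_iterate_mem_bot hw ?_ hζ)⟩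
  rw [Matrix.range_cons_cons_empty] at hspan
  exact prod_iterate_mem_bot_of_mul_apply_mem_span hodd σ hσK hσn hspan

theorem exists_pow_eq_self_notMem_bot {p a m l : ℕ} (hp : 1 < p) (hK : Nat.card K = p ^ m)
    (hL : Nat.card L = p ^ l) (hal : a ∣ l) (ham : ¬ a ∣ m) :
    ∃ ζ : L, ζ ^ p ^ a = ζ ∧ ζ ∉ (⊥ : IntermediateField K L) := by
  have hp0 (i : ℕ) : p ^ i ≠ 0 := pow_ne_zero i (by positivity)
  have : Finite K := Nat.finite_of_card_ne_zero (hK ▸ hp0 m)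
  have : Finite L := Nat.finite_of_card_ne_zero (hL ▸ hp0 l)
  have pow_eq_self_iff (u : Lˣ) (i : ℕ) : (u : L) ^ p ^ i = u ↔ orderOf u ∣ p ^ i - 1 := by
    rw [orderOf_dvd_iff_pow_eq_one, ← Units.val_pow_eq_pow_val, Units.val_inj,
      ← Nat.sub_add_cancel (Nat.one_le_iff_ne_zero.2 (hp0 i)), pow_succ, mul_eq_right,
      Nat.add_sub_cancel]
  obtain ⟨ζ, hζ⟩ : ∃ ζ : Lˣ, orderOf ζ = p ^ a - 1 := by
    obtain ⟨g, hg⟩ := IsCyclic.exists_ofOrder_eq_natCard (α := Lˣ)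
    rw [Nat.card_units, hL] at hg
    have hdvd : p ^ a - 1 ∣ orderOf g := hg ▸ Nat.pow_sub_one_dvd_pow_sub_one p hal
    exact ⟨_, orderOf_pow_orderOf_div (orderOf_pos g).ne' hdvd⟩
  refine ⟨ζ, (pow_eq_self_iff ζ a).2 hζ.dvd, fun hζK ↦ ham ?_⟩
  rw [mem_bot_iff_pow_natCard_eq_self, hK, pow_eq_self_iff, hζ, ← Nat.gcd_eq_left_iff_dvd,
    Nat.pow_sub_one_gcd_pow_sub_one] at hζK
  have hpow : p ^ a.gcd m = p ^ a :=
    Nat.sub_one_cancel (Nat.pos_of_ne_zero (hp0 _)) (Nat.pos_of_ne_zero (hp0 _)) hζK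
  exact Nat.gcd_eq_left_iff_dvd.1 (Nat.pow_right_injective hp hpow)

end Finite

section Arithmetic

theorem gcd_mul_dvd_add {e m k : ℕ} (h : e ∣ m / k.gcd m + k / k.gcd m) :
    k.gcd m * e ∣ m + k := by
  calc k.gcd m * e ∣ k.gcd m * (m / k.gcd m + k / k.gcd m) := mul_dvd_mul_left _ h
    _ = m + k := by
      rw [mul_add, Nat.mul_div_cancel' (k.gcd_dvd_right m), Nat.mul_div_cancel' (k.gcd_dvd_left m)]

theorem not_gcd_mul_dvd {e m k : ℕ} (hm : 0 < m) (he : e ≠ 1)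
    (h : e ∣ m / k.gcd m + k / k.gcd m) : ¬ k.gcd m * e ∣ m := by
  intro hdvd
  have hem : e ∣ m / k.gcd m := Nat.dvd_div_of_mul_dvd hdvd
  have hek : e ∣ k / k.gcd m := (Nat.dvd_add_right hem).1 h
  exact he (Nat.eq_one_of_dvd_coprimes
    (Nat.coprime_div_gcd_div_gcd (Nat.gcd_pos_of_pos_right k hm)) hek hem)

end Arithmetic

theorem stmt11_general {p m k : ℕ} (hp : p.Prime) {K L : Type*} [Field K]
    (hK : Nat.card K = p ^ m) [Field L] [Algebra K L] (hodd : Odd (finrank K L))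
    (hL : finrank K L ≠ 1) (hdvd : finrank K L ∣ m / Nat.gcd k m + k / Nat.gcd k m)
    {ω : Lˣ} (hω : ∀ x : Lˣ, x ∈ Subgroup.zpowers ω) :
    LinearIndependent K ![(1 : L), (ω : L), (ω : L) ^ (p ^ m * p ^ k + 1)] := by
  have : Fact p.Prime := ⟨hp⟩
  have : Finite K := Nat.finite_of_card_ne_zero (hK ▸ (pow_pos hp.pos m).ne')
  have : FiniteDimensional K L := FiniteDimensional.of_finrank_pos hodd.pos
  have : Finite L := Module.finite_of_finite K
  have := Fintype.ofFinite K
  have : CharP K p := charP_of_card_eq_prime_pow (Nat.card_eq_fintype_card.symm.trans hK)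
  have : CharP L p := charP_of_injective_algebraMap (algebraMap K L).injective p
  have hm : 0 < m := Nat.pos_of_ne_zero fun h ↦
    Finite.one_lt_card.ne' (hK.trans (h ▸ pow_zero p))
  have hcardL : Nat.card L = p ^ (m * finrank K L) := by
    rw [Module.natCard_eq_pow_finrank (K := K), hK, pow_mul]
  obtain ⟨ζ, hζ, hζK⟩ := exists_pow_eq_self_notMem_bot hp.one_lt hK hcardL
    (mul_dvd_mul_right (k.gcd_dvd_right m) _) (not_gcd_mul_dvd hm hL hdvd)
  obtain ⟨c, hc⟩ := gcd_mul_dvd_add hdvd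
  have hfix : iterateFrobeniusEquiv L p (m + k) ζ = ζ := by
    rw [iterateFrobeniusEquiv_def, hc, pow_mul]
    exact (congrFun (pow_iterate _ c) ζ).symm.trans (Function.iterate_fixed hζ c)
  have hindep := linearIndependent_one_self_mul_apply hodd _ hfix hζK hω
  rwa [iterateFrobeniusEquiv_def, ← pow_succ', pow_add p] at hindep

/-- under the ZKW conditions, for every generator `ω'` of
`F_{q^3}^×` there is an element `ω` in the coset `ω'·H` of the subgroup
`H = {x^{r-q²}}` such that `{1, ω, ω^{qr+1}}` is linearly independent over
`F_q` (hence an `F_q`-basis of `F_{q^3}`). -/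
theorem stmt11 {p m k : ℕ} (hp : p.Prime) (hm : 0 < m)
    (hodd : Odd (m / Nat.gcd k m))
    (h3 : (m / Nat.gcd k m + k / Nat.gcd k m) % 3 = 0)
    {K L : Type*} [Field K] [Fintype K] (hK : Fintype.card K = p ^ m)
    [Field L] [Algebra K L] (hL : Module.finrank K L = 3)
    (ω' : Lˣ) (hω' : ∀ x : Lˣ, x ∈ Subgroup.zpowers ω') :
    ∃ h : Lˣ, (∃ x : Lˣ, h = x ^ ((p ^ k : ℤ) - (p ^ (2 * m) : ℤ))) ∧
      LinearIndependent K
        ![(1 : L), ((ω' * h : Lˣ) : L), (((ω' * h : Lˣ) : L)) ^ (p ^ m * p ^ k + 1)] := by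
  refine ⟨1, ⟨1, (one_zpow _).symm⟩, ?_⟩
  simpa only [mul_one] using stmt11_general hp (Nat.card_eq_fintype_card.trans hK)
    (hL ▸ by decide) (by omega) (hL ▸ Nat.dvd_of_mod_eq_zero h3) hω'
end

section
/- Let q = p^m, σ = p^k, d = gcd(k,m), τ = p^d, and let a_0,…,a_n ∈ F_q with a_0 ≠ 0 and a_n ≠ 0. Define P_σ(x) = Σ_{i=0}^{n} a_i·x^{(σ^i−1)/(σ−1)} ∈ F_q[x]. Let ξ_1,…,ξ_{τ−1} ∈ F_q^× be a system of representatives of the cosets of the subgroup (F_q^×)^{(τ−1)} of (τ−1)-th powers in F_q^×, and for each j define A_j(x) = Σ_{i=0}^{n} a_i·ξ_j^{(σ^i−1)/(σ−1)}·x^{σ^i} ∈ F_q[x]. Then the number N_q(P_σ) of distinct roots of P_σ in F_q satisfies N_q(P_σ) = Σ_{j=1}^{τ−1} (N_q(A_j) − 1)/(τ−1), where N_q(A_j) denotes the number of distinct roots of A_j in F_q. -/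
/-!
Write `A_c` for the polynomial `A_j` with `ξ_j` replaced by `c`. Since
`A_c(x) = P_σ(c * x ^ (σ - 1)) * x`, the nonzero roots of `A_{ξ_j}` are the units `z` for which
`ξ_j * z ^ (σ - 1)` is a root of `P_σ`. In the cyclic group `F_q^×` the `(σ - 1)`-th powers
are the `(τ - 1)`-th powers, because `gcd(q - 1, σ - 1) = τ - 1`. Hence `(j, z) ↦ ξ_j * z ^ (σ - 1)`
takes every value in `F_q^×` exactly `τ - 1` times, in particular every root of `P_σ`.
-/

section Transversal

variable {ι G H : Type*} [Group G] [Group H]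

theorem exists_mul_map_eq {f : H →* G} {ξ : ι → G}
    (hξ : Function.Surjective fun j => (ξ j : G ⧸ f.range)) (x : G) :
    ∃ w : ι × H, ξ w.1 * f w.2 = x := by
  obtain ⟨j, hj⟩ := hξ x
  obtain ⟨t, ht⟩ := QuotientGroup.eq.1 hj
  exact ⟨(j, t), by simp [ht]⟩

theorem fst_eq_of_mul_map_eq {f : H →* G} {ξ : ι → G}
    (hξ : Function.Injective fun j => (ξ j : G ⧸ f.range)) {v w : ι × H}
    (h : ξ v.1 * f v.2 = ξ w.1 * f w.2) : v.1 = w.1 := by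
  refine hξ (QuotientGroup.eq.2 ⟨v.2 * w.2⁻¹, ?_⟩)
  rw [map_mul, map_inv, eq_inv_mul_iff_mul_eq, ← mul_assoc, h, mul_inv_cancel_right]

theorem ncard_setOf_mul_map_mem (f : H →* G) {ξ : ι → G}
    (hξ : Function.Bijective fun j => (ξ j : G ⧸ f.range)) (S : Set G) :
    {v : ι × H | ξ v.1 * f v.2 ∈ S}.ncard = S.ncard * Nat.card f.ker := by
  choose w hw using exists_mul_map_eq hξ.surjective
  have translate_w (x : G) (t : f.ker) : ξ (w x).1 * f ((w x).2 * t) = x := by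
    rw [map_mul, f.mem_ker.1 t.2, mul_one, hw]
  let e (y : S × f.ker) : {v : ι × H | ξ v.1 * f v.2 ∈ S} :=
    ⟨((w y.1).1, (w y.1).2 * y.2), by
      rw [Set.mem_ofPred_eq, translate_w]
      exact y.1.2⟩
  have e_injective : Function.Injective e := by
    rintro ⟨⟨x, hx⟩, t⟩ ⟨⟨x', hx'⟩, t'⟩ h
    obtain ⟨hj, hz⟩ := Prod.ext_iff.1 (Subtype.ext_iff.1 h)
    obtain rfl : x = x' := by
      rw [← translate_w x t, ← translate_w x' t']
      exact congrArg₂ (fun j z => ξ j * f z) hj hz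
    exact Prod.ext rfl (Subtype.ext (mul_left_cancel hz))
  have e_surjective : Function.Surjective e := by
    rintro ⟨⟨j, z⟩, hz⟩
    set x := ξ j * f z with hx
    have hj : (w x).1 = j := fst_eq_of_mul_map_eq hξ.injective (w := (j, z)) (hw x)
    have hker : (w x).2⁻¹ * z ∈ f.ker := by
      have h : f (w x).2 = f z := mul_left_cancel (a := ξ j) (by rw [← hx, ← hj, hw])
      rw [f.mem_ker, map_mul, map_inv, h, inv_mul_cancel]
    exact ⟨(⟨x, hz⟩, ⟨_, hker⟩), Subtype.ext (Prod.ext hj (mul_inv_cancel_left _ _))⟩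
  rw [← Nat.card_coe_set_eq, ← Nat.card_eq_of_bijective e ⟨e_injective, e_surjective⟩,
    Nat.card_prod, Nat.card_coe_set_eq]

theorem sum_ncard_setOf_mul_map_mem [Fintype ι] [Finite H] (f : H →* G) {ξ : ι → G}
    (hξ : Function.Bijective fun j => (ξ j : G ⧸ f.range)) (S : Set G) :
    ∑ j, {z : H | ξ j * f z ∈ S}.ncard = S.ncard * Nat.card f.ker := by
  rw [← ncard_setOf_mul_map_mem f hξ S]
  symm
  calc {v : ι × H | ξ v.1 * f v.2 ∈ S}.ncard
    _ = Nat.card (Σ j, {z : H // ξ j * f z ∈ S}) :=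
      Nat.card_congr (Equiv.subtypeProdEquivSigmaSubtype fun j z => ξ j * f z ∈ S)
    _ = ∑ j, {z : H | ξ j * f z ∈ S}.ncard := Nat.card_sigma

end Transversal

theorem range_powMonoidHom_gcd_card (G : Type*) [CommGroup G] (s : ℕ) :
    (powMonoidHom ((Nat.card G).gcd s) : G →* G).range = (powMonoidHom s).range := by
  apply le_antisymm
  · rintro _ ⟨t, rfl⟩
    refine ⟨t ^ (Nat.card G).gcdB s, ?_⟩
    rw [powMonoidHom_apply, powMonoidHom_apply, ← zpow_natCast t, Nat.gcd_eq_gcd_ab, zpow_add,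
      zpow_mul, zpow_natCast, pow_card_eq_one', one_zpow, one_mul, mul_comm, zpow_mul, zpow_natCast]
  · rintro _ ⟨t, rfl⟩
    obtain ⟨c, hc⟩ := Nat.gcd_dvd_right (Nat.card G) s
    exact ⟨t ^ c, by rw [powMonoidHom_apply, powMonoidHom_apply, ← pow_mul, mul_comm, ← hc]⟩

section GroupWithZero

theorem ncard_preimage_unitsVal {G₀ : Type*} [GroupWithZero G₀] {S : Set G₀} (hS : 0 ∉ S) :
    (Units.val ⁻¹' S : Set G₀ˣ).ncard = S.ncard :=
  Set.ncard_preimage_of_injective_subset_range Units.val_injective fun x hx =>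
    ⟨Units.mk0 x (ne_of_mem_of_not_mem hx hS), rfl⟩

theorem bijective_mk_units_of_existsUnique {ι G₀ : Type*} [CommGroupWithZero G₀] {g : ℕ}
    {ξ : ι → G₀} (hξ0 : ∀ j, ξ j ≠ 0)
    (hξ : ∀ y : G₀, y ≠ 0 → ∃! j, ∃ t : G₀, t ≠ 0 ∧ y = ξ j * t ^ g) :
    Function.Bijective fun j =>
      (Units.mk0 (ξ j) (hξ0 j) : G₀ˣ ⧸ (powMonoidHom g : G₀ˣ →* G₀ˣ).range) := by
  have mk_eq_iff (j : ι) (y : G₀ˣ) :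
      (Units.mk0 (ξ j) (hξ0 j) : G₀ˣ ⧸ (powMonoidHom g : G₀ˣ →* G₀ˣ).range) = y ↔
        ∃ t : G₀, t ≠ 0 ∧ (y : G₀) = ξ j * t ^ g := by
    simp only [QuotientGroup.eq, MonoidHom.mem_range, powMonoidHom_apply, eq_inv_mul_iff_mul_eq,
      Units.exists0, Units.ext_iff, Units.val_mul, Units.val_pow_eq_pow_val, Units.val_mk0,
      exists_prop, @eq_comm G₀ y]
  rw [Function.bijective_iff_existsUnique]
  intro y
  induction y using QuotientGroup.induction_on with
  | H y => simpa only [mk_eq_iff] using hξ y y.ne_zero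

end GroupWithZero

section Projective

/-- The value at `x` of the projective polynomial `P_σ = ∑ a_i X ^ ((σ ^ i - 1) / (σ - 1))`. The
exponents are encoded as the geometric sums `1 + σ + ⋯ + σ ^ (i - 1)`. -/
def projectiveEval {R : Type*} [CommSemiring R] (σ n : ℕ) (a : ℕ → R) (x : R) : R :=
  ∑ i ∈ Finset.range (n + 1), a i * x ^ (∑ l ∈ Finset.range i, σ ^ l)

/-- The value at `x` of the linearized polynomial
`A_c = ∑ a_i c ^ ((σ ^ i - 1) / (σ - 1)) X ^ (σ ^ i)` attached to `P_σ` and a twist `c`, with the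
exponents of `c` encoded as in `projectiveEval`; the polynomials `A_j` are the cases `c = ξ_j`. -/
def linearizedEval {R : Type*} [CommSemiring R] (σ n : ℕ) (a : ℕ → R) (c x : R) : R :=
  ∑ i ∈ Finset.range (n + 1), a i * c ^ (∑ l ∈ Finset.range i, σ ^ l) * x ^ σ ^ i

theorem projectiveEval_zero {R : Type*} [CommSemiring R] {σ : ℕ} (n : ℕ) (a : ℕ → R) :
    projectiveEval σ n a 0 = a 0 := by
  simp [projectiveEval, Finset.sum_range_succ', Finset.sum_range_succ' (fun l => σ ^ l)]

theorem linearizedEval_eq_projectiveEval_mul {R : Type*} [CommSemiring R] {σ : ℕ} (hσ : 0 < σ)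
    (n : ℕ) (a : ℕ → R) (c x : R) :
    linearizedEval σ n a c x = projectiveEval σ n a (c * x ^ (σ - 1)) * x := by
  obtain ⟨s, rfl⟩ := Nat.exists_eq_add_of_lt hσ
  simp only [linearizedEval, projectiveEval, Finset.sum_mul]
  refine Finset.sum_congr rfl fun i _ => ?_
  have hpow : x ^ (s + 1) ^ i = (x ^ s) ^ (∑ l ∈ Finset.range i, (s + 1) ^ l) * x := by
    rw [← geom_sum_mul_add s i, pow_succ, mul_comm _ s, pow_mul]
  simp [hpow, mul_pow, mul_assoc]

theorem ncard_linearizedEval_eq_zero {K : Type*} [Field K] [Finite K] {σ : ℕ} (hσ : 0 < σ)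
    (n : ℕ) (a : ℕ → K) (c : K) :
    {x : K | linearizedEval σ n a c x = 0}.ncard =
      {z : Kˣ | projectiveEval σ n a (c * z ^ (σ - 1)) = 0}.ncard + 1 := by
  set A : Set K := {x | linearizedEval σ n a c x = 0}
  have hA0 : (0 : K) ∈ A := by simp [A, linearizedEval_eq_projectiveEval_mul hσ]
  have hunits : (Units.val ⁻¹' (A \ {0}) : Set Kˣ) =
      {z : Kˣ | projectiveEval σ n a (c * z ^ (σ - 1)) = 0} := by
    ext z
    simp [A, linearizedEval_eq_projectiveEval_mul hσ]
  rw [← Set.ncard_sdiff_singleton_add_one hA0, ← hunits, ncard_preimage_unitsVal (by simp)]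

variable {ι K : Type*} [Fintype ι] [Field K] [Finite K] {σ : ℕ}

theorem sum_ncard_linearizedEval_eq_zero (hσ : 0 < σ) (n : ℕ) {a : ℕ → K} (ha0 : a 0 ≠ 0)
    {ξ : ι → Kˣ}
    (hξ : Function.Bijective fun j => (ξ j : Kˣ ⧸ (powMonoidHom (σ - 1) : Kˣ →* Kˣ).range)) :
    ∑ j, {x : K | linearizedEval σ n a (ξ j) x = 0}.ncard =
      {x : K | projectiveEval σ n a x = 0}.ncard * (Nat.card Kˣ).gcd (σ - 1) +
        Fintype.card ι := by
  have hP0 : (0 : K) ∉ {x : K | projectiveEval σ n a x = 0} := by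
    simpa [projectiveEval_zero] using ha0
  rw [← ncard_preimage_unitsVal hP0, ← IsCyclic.card_powMonoidHom_ker,
    ← sum_ncard_setOf_mul_map_mem _ hξ]
  simp [ncard_linearizedEval_eq_zero hσ, Finset.sum_add_distrib]

theorem stmt12_general (hσ : 0 < σ) (n : ℕ) {a : ℕ → K} (ha0 : a 0 ≠ 0) {ξ : ι → Kˣ}
    (hξ : Function.Bijective fun j => (ξ j : Kˣ ⧸ (powMonoidHom (σ - 1) : Kˣ →* Kˣ).range)) :
    ({x : K | projectiveEval σ n a x = 0}.ncard : ℚ) =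
      ∑ j, (({x : K | linearizedEval σ n a (ξ j) x = 0}.ncard : ℚ) - 1) /
        (Nat.card Kˣ).gcd (σ - 1) := by
  have hgcd : ((Nat.card Kˣ).gcd (σ - 1) : ℚ) ≠ 0 :=
    Nat.cast_ne_zero.2 (Nat.gcd_pos_of_pos_left _ Nat.card_pos).ne'
  rw [← Finset.sum_div, eq_div_iff hgcd, Finset.sum_sub_distrib, ← Nat.cast_sum,
    sum_ncard_linearizedEval_eq_zero hσ n ha0 hξ]
  simp

end Projective

theorem card_units_gcd_pow_sub_one {K : Type*} [Field K] [Fintype K] {p m : ℕ}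
    (hK : Fintype.card K = p ^ m) (k : ℕ) :
    (Nat.card Kˣ).gcd (p ^ k - 1) = p ^ k.gcd m - 1 := by
  rw [Nat.card_units, Nat.card_eq_fintype_card, hK, Nat.gcd_comm, Nat.pow_sub_one_gcd_pow_sub_one]

theorem range_powMonoidHom_units_pow_gcd_sub_one {K : Type*} [Field K] [Fintype K] {p m : ℕ}
    (hK : Fintype.card K = p ^ m) (k : ℕ) :
    (powMonoidHom (p ^ k.gcd m - 1) : Kˣ →* Kˣ).range = (powMonoidHom (p ^ k - 1)).range := by
  rw [← card_units_gcd_pow_sub_one hK, range_powMonoidHom_gcd_card]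

/-- with `τ = p^{gcd(k,m)}`, a system of representatives
`ξ_j` of `F_q^×/(F_q^×)^{τ-1}`, `P_σ(x) = Σ a_i x^{(σ^i-1)/(σ-1)}` and
`A_j(x) = Σ a_i ξ_j^{(σ^i-1)/(σ-1)} x^{σ^i}`, the number of distinct roots of
`P_σ` in `F_q` equals `Σ_j (N_q(A_j) - 1)/(τ - 1)`. -/
theorem stmt12 {p m k n : ℕ} (hp : p.Prime) (hm : 0 < m)
    {K : Type*} [Field K] [Fintype K] (hK : Fintype.card K = p ^ m)
    (a : ℕ → K) (ha0 : a 0 ≠ 0) (han : a n ≠ 0)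
    (ξ : Fin (p ^ Nat.gcd k m - 1) → K) (hξ0 : ∀ j, ξ j ≠ 0)
    (hξ : ∀ y : K, y ≠ 0 →
      ∃! j : Fin (p ^ Nat.gcd k m - 1),
        ∃ t : K, t ≠ 0 ∧ y = ξ j * t ^ (p ^ Nat.gcd k m - 1)) :
    (({x : K | ∑ i ∈ Finset.range (n + 1),
        a i * x ^ (∑ l ∈ Finset.range i, (p ^ k) ^ l) = 0}.ncard : ℚ)) =
      ∑ j : Fin (p ^ Nat.gcd k m - 1),
        (({x : K | ∑ i ∈ Finset.range (n + 1),
            a i * (ξ j) ^ (∑ l ∈ Finset.range i, (p ^ k) ^ l) * x ^ (p ^ k) ^ i = 0}.ncard : ℚ) - 1)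
          / ((p : ℚ) ^ Nat.gcd k m - 1) := by
  have hreps := bijective_mk_units_of_existsUnique hξ0 hξ
  rw [range_powMonoidHom_units_pow_gcd_sub_one hK] at hreps
  simpa only [card_units_gcd_pow_sub_one hK, Nat.cast_pred (pow_pos hp.pos _), Nat.cast_pow,
    Units.val_mk0, projectiveEval, linearizedEval] using
    stmt12_general (pow_pos hp.pos k) n ha0 hreps
end

section
/- Let q = p^m, σ = p^k, and let a_0,…,a_n ∈ F_q with a_0 ≠ 0 and a_n ≠ 0. Define the projective polynomials P_σ(x) = Σ_{i=0}^{n} a_i·x^{(σ^i−1)/(σ−1)} and P̃_σ(x) = Σ_{i=0}^{n} a_{n−i}^{σ^i}·x^{(σ^i−1)/(σ−1)} in F_q[x]. Then P_σ and P̃_σ have the same number of distinct roots in F_q: N_q(P_σ) = N_q(P̃_σ). -/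
/-!
For `x ≠ 0`, substituting `x c ^ (σ - 1)` into `P_σ` and multiplying by `c` gives the linearized
polynomial `∑ i, a_i x ^ ((σ ^ i - 1) / (σ - 1)) c ^ (σ ^ i)` in `c`. Up to a nonzero scalar and a
power of Frobenius, the linearized polynomial obtained in the same way from `P̃_σ` at
`x⁻¹ c ^ (σ - 1)` is its adjoint for the trace form. Adjoint maps have equally many zeros: for a
primitive additive character `ψ`, both numbers are read off from `∑ c, ∑ e, ψ (e * f c)`. As `x`
ranges over the units, each nonzero root of `P_σ` has the form `x c ^ (σ - 1)` for exactly `q - 1`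
pairs `(x, c)`; averaging therefore transfers the equality of the counts to the nonzero roots of
`P_σ` and `P̃_σ`.
-/

section Definitions

variable {R : Type*} [CommSemiring R]

/-- The exponent `(σ ^ i - 1) / (σ - 1)` of a projective polynomial, written as a geometric sum so
that it is meaningful for `σ = 1` as well. -/
def projExp (σ i : ℕ) : ℕ := ∑ l ∈ Finset.range i, σ ^ l

/-- The value at `x` of the projective polynomial with coefficients `a 0, …, a n`. -/
def projEval (σ n : ℕ) (a : ℕ → R) (x : R) : R :=
  ∑ i ∈ Finset.range (n + 1), a i * x ^ projExp σ i

/-- The value at `c` of the `σ`-linearized polynomial with coefficients `a 0, …, a n`, additive in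
`c` when `σ` is a power of the characteristic. -/
def linEval (σ n : ℕ) (a : ℕ → R) (c : R) : R :=
  ∑ i ∈ Finset.range (n + 1), a i * c ^ σ ^ i

/-- The coefficients of the adjoint of a linearized polynomial, composed with `y ↦ y ^ σ ^ n` to
avoid inverting Frobenius. Applied to the coefficients of `P_σ`, it gives those of `P̃_σ`. -/
def adjointCoeff (σ n : ℕ) (a : ℕ → R) (i : ℕ) : R := a (n - i) ^ σ ^ i

/-- The coefficients of the projective polynomial `P (x * y)` in `y`, where `P` has
coefficients `a`. They are also used as coefficients of a linearized polynomial, whose nonzero zeros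
are the `c` for which `x * c ^ (σ - 1)` is a root of `P`. -/
def scaleCoeff (σ : ℕ) (a : ℕ → R) (x : R) (i : ℕ) : R := a i * x ^ projExp σ i

end Definitions

section Exponents

variable {σ : ℕ}

theorem projExp_mul_pred_add_one (hσ : 0 < σ) (i : ℕ) : projExp σ i * (σ - 1) + 1 = σ ^ i := by
  have h := geom_sum_mul_add (σ - 1) i
  rwa [Nat.sub_add_cancel (Nat.one_le_of_lt hσ)] at h

theorem projExp_add (σ i j : ℕ) : projExp σ (i + j) = projExp σ i + projExp σ j * σ ^ i := by
  simp only [projExp, Finset.sum_range_add, Finset.sum_mul, pow_add, mul_comm]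

theorem projExp_ne_zero (σ : ℕ) {i : ℕ} (hi : i ≠ 0) : projExp σ i ≠ 0 := by
  obtain ⟨j, rfl⟩ := Nat.exists_eq_succ_of_ne_zero hi
  simp [projExp, Finset.sum_range_succ']

end Exponents

section Evaluation

variable {R : Type*} [CommSemiring R] {σ : ℕ}

theorem projEval_zero (σ n : ℕ) (a : ℕ → R) : projEval σ n a 0 = a 0 := by
  rw [projEval, Finset.sum_range_succ', Finset.sum_eq_zero]
  · simp [projExp]
  · exact fun i _ ↦ by rw [zero_pow (projExp_ne_zero σ i.succ_ne_zero), mul_zero]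

theorem linEval_zero (hσ : 0 < σ) (n : ℕ) (a : ℕ → R) : linEval σ n a 0 = 0 :=
  Finset.sum_eq_zero fun i _ ↦ by rw [zero_pow (pow_pos hσ i).ne', mul_zero]

theorem adjointCoeff_zero (σ n : ℕ) (a : ℕ → R) : adjointCoeff σ n a 0 = a n := by
  simp [adjointCoeff]

theorem linEval_scaleCoeff (hσ : 0 < σ) (n : ℕ) (a : ℕ → R) (x c : R) :
    linEval σ n (scaleCoeff σ a x) c = c * projEval σ n a (x * c ^ (σ - 1)) := by
  simp only [linEval, projEval, scaleCoeff, Finset.mul_sum]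
  refine Finset.sum_congr rfl fun i _ ↦ ?_
  rw [← projExp_mul_pred_add_one hσ, pow_succ, mul_comm (projExp σ i), pow_mul, mul_pow]
  ring

theorem adjointCoeff_scaleCoeff {i n : ℕ} (hi : i ≤ n) (a : ℕ → R) (x : Rˣ) :
    adjointCoeff σ n (scaleCoeff σ a x) i =
      x ^ projExp σ n * scaleCoeff σ (adjointCoeff σ n a) ↑x⁻¹ i := by
  have hexp : projExp σ n = projExp σ i + projExp σ (n - i) * σ ^ i := by
    rw [← projExp_add, Nat.add_sub_cancel' hi]
  have hinv : (x : R) ^ projExp σ i * (↑x⁻¹ : R) ^ projExp σ i = 1 := by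
    rw [← mul_pow, Units.mul_inv, one_pow]
  calc (a (n - i) * (x : R) ^ projExp σ (n - i)) ^ σ ^ i
      = ((x : R) ^ projExp σ i * (↑x⁻¹ : R) ^ projExp σ i) *
          (a (n - i) ^ σ ^ i * (x : R) ^ (projExp σ (n - i) * σ ^ i)) := by
        rw [hinv, one_mul, mul_pow, pow_mul]
    _ = x ^ projExp σ n * (a (n - i) ^ σ ^ i * (↑x⁻¹ : R) ^ projExp σ i) := by
        rw [hexp, pow_add]
        ring

theorem linEval_adjointCoeff_scaleCoeff (hσ : 0 < σ) (n : ℕ) (a : ℕ → R) (x : Rˣ) (c : R) :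
    linEval σ n (adjointCoeff σ n (scaleCoeff σ a x)) c =
      x ^ projExp σ n * (c * projEval σ n (adjointCoeff σ n a) (↑x⁻¹ * c ^ (σ - 1))) := by
  rw [← linEval_scaleCoeff hσ, linEval, linEval, Finset.mul_sum]
  refine Finset.sum_congr rfl fun i hi ↦ ?_
  rw [adjointCoeff_scaleCoeff (Finset.mem_range_succ_iff.mp hi), mul_assoc]

end Evaluation

section Duality

theorem apply_pow_pow_of_apply_pow {M α : Type*} [Monoid M] {f : M → α} {σ : ℕ}
    (hf : ∀ y, f (y ^ σ) = f y) (i : ℕ) (y : M) : f (y ^ σ ^ i) = f y := by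
  induction i with
  | zero => rw [pow_zero, pow_one]
  | succ i ih => rw [pow_succ, pow_mul, hf, ih]

theorem map_mul_linEval {R A : Type*} [CommSemiring R] [AddCommMonoid A] {σ : ℕ} (φ : R →+ A)
    (hφ : ∀ y, φ (y ^ σ) = φ y) (n : ℕ) (a : ℕ → R) (c e : R) :
    φ (e * linEval σ n a c) = φ (c ^ σ ^ n * linEval σ n (adjointCoeff σ n a) e) := by
  simp only [linEval, Finset.mul_sum, map_sum]
  rw [← Finset.sum_range_reflect]
  refine Finset.sum_congr rfl fun j hj ↦ ?_
  have hpow : σ ^ n = σ ^ (n - j) * σ ^ j := by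
    rw [← pow_add, Nat.sub_add_cancel (Finset.mem_range_succ_iff.mp hj)]
  rw [Nat.add_sub_cancel, ← apply_pow_pow_of_apply_pow hφ j, adjointCoeff, hpow, pow_mul c]
  congr 1
  ring

variable {R R' : Type*} [CommRing R] [CommRing R'] [IsDomain R'] {ψ : AddChar R R'}

theorem sum_sum_addChar_mul_apply [Fintype R] (hψ : ψ.IsPrimitive) (f : R → R) :
    ∑ c, ∑ e, ψ (e * f c) = Fintype.card R * ({c | f c = 0}.ncard : R') := by
  classical
  simp [AddChar.sum_mulShift _ hψ, Finset.sum_ite, Set.ncard_eq_toFinset_card', mul_comm]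

variable [Finite R] [CharZero R']

theorem ncard_zeros_eq_of_addChar_adjoint (hψ : ψ.IsPrimitive) {f g : R → R} (τ : R ≃ R)
    (h : ∀ c e, ψ (e * f c) = ψ (τ c * g e)) : {c | f c = 0}.ncard = {e | g e = 0}.ncard := by
  have := Fintype.ofFinite R
  have hsum : ∑ c, ∑ e, ψ (e * f c) = ∑ e, ∑ c, ψ (c * g e) := by
    simp_rw [h]
    rw [Finset.sum_comm]
    exact Finset.sum_congr rfl fun e _ ↦ Equiv.sum_comp τ fun c ↦ ψ (c * g e)
  rw [sum_sum_addChar_mul_apply hψ, sum_sum_addChar_mul_apply hψ] at hsum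
  have hcard : (Fintype.card R : R') ≠ 0 := Nat.cast_ne_zero.mpr Fintype.card_ne_zero
  exact Nat.cast_injective (mul_left_cancel₀ hcard hsum)

theorem ncard_linEval_adjointCoeff_eq {σ : ℕ} (hψ : ψ.IsPrimitive) (hψσ : ∀ y, ψ (y ^ σ) = ψ y)
    (hσ : Function.Injective fun y : R ↦ y ^ σ) (n : ℕ) (a : ℕ → R) :
    {c | linEval σ n a c = 0}.ncard = {c | linEval σ n (adjointCoeff σ n a) c = 0}.ncard := by
  have hbij : Function.Bijective fun c : R ↦ c ^ σ ^ n := by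
    refine Finite.injective_iff_bijective.mp ?_
    rw [← pow_iterate]
    exact hσ.iterate n
  exact ncard_zeros_eq_of_addChar_adjoint hψ (Equiv.ofBijective _ hbij)
    (map_mul_linEval ψ.toAddMonoidHom hψσ n a)

end Duality

section FiniteField

variable {K : Type*} [Field K] [Finite K] (p : ℕ) [Fact p.Prime] [CharP K p]

theorem exists_addChar_isPrimitive_apply_pow_char :
    ∃ ψ : AddChar K ℂ, ψ.IsPrimitive ∧ ∀ y, ψ (y ^ p) = ψ y := by
  let _ : Algebra (ZMod p) K := ZMod.algebra K p
  let ψ : AddChar K ℂ :=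
    (ZMod.stdAddChar (N := p)).compAddMonoidHom (Algebra.trace (ZMod p) K).toAddMonoidHom
  refine ⟨ψ, AddChar.IsPrimitive.of_ne_one fun hψ ↦ ?_, fun y ↦ ?_⟩
  · obtain ⟨b, hb⟩ := Algebra.trace_surjective (ZMod p) K 1
    have hone : ZMod.stdAddChar (Algebra.trace (ZMod p) K b) = 1 := DFunLike.congr_fun hψ b
    rw [hb, (ZMod.isPrimitive_stdAddChar p).zmod_char_eq_one_iff] at hone
    exact one_ne_zero hone
  · have htrace : Algebra.trace (ZMod p) K (y ^ p) = Algebra.trace (ZMod p) K y := by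
      simpa using Algebra.trace_eq_of_algEquiv (FiniteField.frobeniusAlgEquiv (ZMod p) K p) y
    exact congrArg ZMod.stdAddChar htrace

theorem ncard_linEval_adjointCoeff_eq_of_charP (k n : ℕ) (a : ℕ → K) :
    {c | linEval (p ^ k) n a c = 0}.ncard =
      {c | linEval (p ^ k) n (adjointCoeff (p ^ k) n a) c = 0}.ncard := by
  obtain ⟨ψ, hψ, hψp⟩ := exists_addChar_isPrimitive_apply_pow_char (K := K) p
  exact ncard_linEval_adjointCoeff_eq hψ (apply_pow_pow_of_apply_pow hψp k)
    (iterateFrobenius_inj K p k) n a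

end FiniteField

section Units

theorem ncard_setOf_units {G₀ : Type*} [GroupWithZero G₀] (f : G₀ → Prop) :
    {u : G₀ˣ | f u}.ncard = ({x | f x} \ {0}).ncard := by
  have himage : Units.val '' {u : G₀ˣ | f u} = {x | f x} \ {0} := by
    ext x
    constructor
    · rintro ⟨u, hu, rfl⟩
      exact ⟨hu, u.ne_zero⟩
    · rintro ⟨hx, hx0⟩
      exact ⟨Units.mk0 x hx0, hx, rfl⟩
  rw [← himage, Set.ncard_image_of_injective _ Units.val_injective]

theorem sum_ncard_mul_apply {G ι : Type*} [Group G] [Fintype G] [Fintype ι] (f : G → Prop)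
    (u : ι → G) : ∑ x, {c | f (x * u c)}.ncard = Fintype.card ι * {x | f x}.ncard := by
  classical
  simp only [Set.ncard_eq_toFinset_card', Set.toFinset_ofPred, Finset.card_filter]
  rw [Finset.sum_comm]
  have htranslate (c : ι) : ∑ x, (if f (x * u c) then 1 else 0) = ∑ x, if f x then 1 else 0 :=
    Equiv.sum_comp (Equiv.mulRight (u c)) fun x ↦ if f x then 1 else 0
  simp only [htranslate, Finset.sum_const, Finset.card_univ, smul_eq_mul]

end Units

section Roots

variable {K : Type*} [Field K] {σ : ℕ}

theorem ncard_units_projEval_mul_pow (hσ : 0 < σ) (n : ℕ) (a : ℕ → K) (x : Kˣ) :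
    {c : Kˣ | projEval σ n a ↑(x * c ^ (σ - 1)) = 0}.ncard =
      {c | linEval σ n (scaleCoeff σ a x) c = 0}.ncard - 1 := by
  have hzero : (0 : K) ∈ {c | linEval σ n (scaleCoeff σ a x) c = 0} := linEval_zero hσ n _
  rw [← Set.ncard_sdiff_singleton_of_mem hzero, ← ncard_setOf_units]
  simp [linEval_scaleCoeff hσ]

theorem ncard_linEval_adjointCoeff_scaleCoeff (hσ : 0 < σ) (n : ℕ) (a : ℕ → K) (x : Kˣ) :
    {c | linEval σ n (adjointCoeff σ n (scaleCoeff σ a x)) c = 0}.ncard =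
      {c | linEval σ n (scaleCoeff σ (adjointCoeff σ n a) ↑x⁻¹) c = 0}.ncard := by
  simp [linEval_adjointCoeff_scaleCoeff hσ, linEval_scaleCoeff hσ]

theorem ncard_projEval_eq_ncard_units {n : ℕ} {a : ℕ → K} (ha : a 0 ≠ 0) :
    {x | projEval σ n a x = 0}.ncard = {x : Kˣ | projEval σ n a x = 0}.ncard := by
  have hzero : (0 : K) ∉ {x | projEval σ n a x = 0} := by
    rwa [Set.mem_ofPred_eq, projEval_zero]
  rw [ncard_setOf_units fun x ↦ projEval σ n a x = 0, Set.sdiff_singleton_eq_self hzero]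

theorem ncard_units_projEval_adjointCoeff_eq [Finite K] (p : ℕ) [Fact p.Prime] [CharP K p]
    (k n : ℕ) (a : ℕ → K) :
    {x : Kˣ | projEval (p ^ k) n a x = 0}.ncard =
      {x : Kˣ | projEval (p ^ k) n (adjointCoeff (p ^ k) n a) x = 0}.ncard := by
  have := Fintype.ofFinite Kˣ
  have hσ : 0 < p ^ k := pow_pos (Fact.out : p.Prime).pos k
  refine Nat.eq_of_mul_eq_mul_left (Fintype.card_pos (α := Kˣ)) ?_
  rw [← sum_ncard_mul_apply _ fun c : Kˣ ↦ c ^ (p ^ k - 1),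
    ← sum_ncard_mul_apply _ fun c : Kˣ ↦ c ^ (p ^ k - 1), ← Equiv.sum_comp (Equiv.inv Kˣ)]
  refine Finset.sum_congr rfl fun x _ ↦ ?_
  rw [ncard_units_projEval_mul_pow hσ, ncard_units_projEval_mul_pow hσ,
    ncard_linEval_adjointCoeff_eq_of_charP, ncard_linEval_adjointCoeff_scaleCoeff hσ,
    Equiv.inv_apply, inv_inv]

end Roots

/-- the projective polynomials
`P_σ(x) = Σ_{i=0}^n a_i x^{(σ^i-1)/(σ-1)}` and
`P̃_σ(x) = Σ_{i=0}^n a_{n-i}^{σ^i} x^{(σ^i-1)/(σ-1)}` (with `a_0, a_n ≠ 0`,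
`σ = p^k`) have the same number of distinct roots in `F_q`. -/
theorem stmt13 {p m k n : ℕ} (hp : p.Prime) (hm : 0 < m)
    {K : Type*} [Field K] [Fintype K] (hK : Fintype.card K = p ^ m)
    (a : ℕ → K) (ha0 : a 0 ≠ 0) (han : a n ≠ 0) :
    {x : K | ∑ i ∈ Finset.range (n + 1),
        a i * x ^ (∑ l ∈ Finset.range i, (p ^ k) ^ l) = 0}.ncard =
      {x : K | ∑ i ∈ Finset.range (n + 1),
        (a (n - i)) ^ (p ^ k) ^ i * x ^ (∑ l ∈ Finset.range i, (p ^ k) ^ l) = 0}.ncard := by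
  have : Fact p.Prime := ⟨hp⟩
  have : CharP K p := charP_of_card_eq_prime_pow hK
  have han' : adjointCoeff (p ^ k) n a 0 ≠ 0 := by rwa [adjointCoeff_zero]
  calc {x | projEval (p ^ k) n a x = 0}.ncard
      = {x : Kˣ | projEval (p ^ k) n a x = 0}.ncard := ncard_projEval_eq_ncard_units ha0
    _ = {x : Kˣ | projEval (p ^ k) n (adjointCoeff (p ^ k) n a) x = 0}.ncard :=
      ncard_units_projEval_adjointCoeff_eq p k n a
    _ = {x | projEval (p ^ k) n (adjointCoeff (p ^ k) n a) x = 0}.ncard :=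
      (ncard_projEval_eq_ncard_units han').symm
end

section
/- Let q = p^m be odd and let F : F_q^n → F_q^n be a σ-semiquadratic homogeneous map (F ∈ SQH(n,q)) with companion automorphism σ = p^k such that F(x) = 0 ⟺ x = 0 and F is 2-to-1 on F_q^n∖{0}. Let α ∈ F_q^×. If n is even, or if α is a square in F_q^×, then α·Im(F) = Im(F), where Im(F) = {F(x) : x ∈ F_q^n} and α·Im(F) = {α·w : w ∈ Im(F)}. -/
/-- A map `F : F_q^n → F_q^n` is σ-semiquadratic homogeneous (`F ∈ SQH(n,q)` with
σ = p^k encoded as the natural number exponent `σ`). -/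
def IsSQH {K : Type*} [Field K] {n : ℕ} (σ : ℕ)
    (F : (Fin n → K) → (Fin n → K)) : Prop :=
  ∀ i : Fin n,
    (∀ (c : K) (x : Fin n → K), F (c • x) i = c ^ (σ + 1) * F x i) ∧
    ∃ b : (Fin n → K) → (Fin n → K) → K,
      (∀ x x' y, b (x + x') y = b x y + b x' y) ∧
      (∀ x y y', b x (y + y') = b x y + b x y') ∧
      (∀ (c : K) (x y), b (c • x) y = c * b x y) ∧
      (∀ (c : K) (x y), b x (c • y) = c ^ σ * b x y) ∧
      (∀ x y, F (x + y) i - F x i - F y i = b x y + b y x)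


/-!
Let `k ⊆ K` be the fixed field of `σ`. Over `k` the map `F` is quadratic. Since `F` is even, being
2-to-1 says that `F x = F y` only for `x = ± y`, which has two consequences.

* The polar form of `F` vanishes at no pair of nonzero vectors, so `l ∘ F` is a nondegenerate
  quadratic form over `k` for every nonzero `k`-linear form `l`. In even dimension, scaling such a
  form by an element of `kˣ` does not change its Gauss sum. By Fourier inversion the fibres of `F`
  over `w` and `a • w` have equally many elements for every `a ∈ kˣ`.
* `c * σ c = 1` only for `c = ± 1`. Hence the elements `c * σ c` of `Kˣ` are exactly the squares,
  and the image of `F` is stable under them because `F (c • x) = (c * σ c) • F x`. Moreover, a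
  nonsquare of `k` stays a nonsquare in `K`, so that `kˣ` and the squares generate `Kˣ`.
-/

open Module

section GaussSums

lemma addChar_map_sum_eq_prod {A M ι : Type*} [AddCommMonoid A] [CommMonoid M] (ψ : AddChar A M)
    (s : Finset ι) (f : ι → A) : ψ (∑ i ∈ s, f i) = ∏ i ∈ s, ψ (f i) :=
  map_sum ψ.toAddMonoidHom f s

variable {k R : Type*} [Field k] [Fintype k] [DecidableEq k] [CommRing R] [IsDomain R]
  {ψ : AddChar k R}

lemma sum_addChar_sq_eq_gaussSum (hk : ringChar k ≠ 2) (hψ : ψ ≠ 1) :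
    ∑ t, ψ (t ^ 2) = gaussSum ((quadraticChar k).ringHomComp (Int.castRingHom R)) ψ := by
  have card_sqrts (s : k) : (Finset.card {t | t ^ 2 = s} : R) = quadraticChar k s + 1 := by
    have h := quadraticChar_card_sqrts hk s
    rw [Set.toFinset_ofPred] at h
    exact_mod_cast congrArg (Int.cast : ℤ → R) h
  calc ∑ t, ψ (t ^ 2)
      = ∑ s, ∑ t with t ^ 2 = s, ψ (t ^ 2) := (Finset.sum_fiberwise _ _ _).symm
    _ = ∑ s, (quadraticChar k s + 1) * ψ s := by
        refine Finset.sum_congr rfl fun s _ ↦ ?_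
        rw [← card_sqrts, ← nsmul_eq_mul, ← Finset.sum_const]
        exact Finset.sum_congr rfl fun t ht ↦ by rw [(Finset.mem_filter.1 ht).2]
    _ = ∑ s, quadraticChar k s * ψ s := by
        simp only [add_mul, one_mul, Finset.sum_add_distrib, AddChar.sum_eq_zero_of_ne_one hψ,
          add_zero]

lemma sum_addChar_mul_sq (hk : ringChar k ≠ 2) (hψ : ψ ≠ 1) {a : k} (ha : a ≠ 0) :
    ∑ t, ψ (a * t ^ 2) = quadraticChar k a * ∑ t, ψ (t ^ 2) := by
  have hshift : ψ.mulShift a ≠ 1 := AddChar.IsPrimitive.of_ne_one hψ ha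
  have hχ : ((quadraticChar k a : ℤ) : R) ^ 2 = 1 := by
    exact_mod_cast congrArg (Int.cast : ℤ → R) (quadraticChar_sq_one ha)
  have hgauss := gaussSum_mulShift ((quadraticChar k).ringHomComp (Int.castRingHom R)) ψ
    (Units.mk0 a ha)
  rw [Units.val_mk0, MulChar.ringHomComp_apply, eq_intCast] at hgauss
  rw [sum_addChar_sq_eq_gaussSum hk hψ, ← hgauss, ← sum_addChar_sq_eq_gaussSum hk hshift,
    ← mul_assoc, ← sq, hχ, one_mul]
  simp only [AddChar.mulShift_apply]

lemma sum_addChar_mul_quadraticForm {V : Type*} [AddCommGroup V] [Module k V] [Fintype V]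
    (hk : ringChar k ≠ 2) (hψ : ψ ≠ 1) {Q : QuadraticForm k V} (hQ : Q.Nondegenerate)
    {a : k} (ha : a ≠ 0) :
    ∑ x, ψ (a * Q x) = quadraticChar k a ^ finrank k V * ∑ x, ψ (Q x) := by
  have : Invertible (2 : k) := invertibleOfNonzero (Ring.two_ne_zero hk)
  obtain ⟨w, ⟨e⟩⟩ := QuadraticForm.equivalent_weightedSumSquares_units_of_nondegenerate' Q
    (QuadraticMap.nondegenerate_associated_iff.2 hQ).1
  have sum_eq_prod (b : k) :
      ∑ x, ψ (b * Q x) = ∏ i, ∑ t : k, ψ (b * w i * t ^ 2) := by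
    rw [Finset.prod_univ_sum, Fintype.piFinset_univ]
    refine Fintype.sum_equiv e.toEquiv _ _ fun x ↦ ?_
    rw [← e.map_app x, QuadraticMap.weightedSumSquares_apply, Finset.mul_sum,
      addChar_map_sum_eq_prod]
    simp only [Units.smul_def, smul_eq_mul, mul_assoc, sq]
    rfl
  have sum_eq_prod_one := sum_eq_prod 1
  simp only [one_mul] at sum_eq_prod_one
  rw [sum_eq_prod, sum_eq_prod_one, ← Fin.prod_const, ← Finset.prod_mul_distrib]
  refine Finset.prod_congr rfl fun i _ ↦ ?_
  rw [sum_addChar_mul_sq hk hψ (mul_ne_zero ha (w i).ne_zero),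
    sum_addChar_mul_sq hk hψ (w i).ne_zero, map_mul, Int.cast_mul, mul_assoc]

end GaussSums

section Fibers

variable {k V W : Type*} [Field k] [AddCommGroup V] [Module k V] [AddCommGroup W] [Module k W]

lemma sum_dual_addChar_apply {R : Type*} [CommRing R] [IsDomain R] [Fintype (Dual k W)]
    [DecidableEq W] {ψ : AddChar k R} (hψ : ψ ≠ 1) (w : W) :
    ∑ l : Dual k W, ψ (l w) = if w = 0 then (Fintype.card (Dual k W) : R) else 0 := by
  split_ifs with hw
  · simp [hw]
  obtain ⟨l, hl⟩ : ∃ l : Dual k W, l w ≠ 0 := by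
    by_contra! h
    exact hw ((forall_dual_apply_eq_zero_iff k w).1 h)
  obtain ⟨c, hc⟩ := AddChar.ne_one_iff.1 hψ
  refine AddChar.sum_eq_zero_of_ne_one
    (ψ := ψ.compAddMonoidHom (Dual.eval k W w).toAddMonoidHom) (AddChar.ne_one_iff.2 ?_)
  exact ⟨(c * (l w)⁻¹) • l, by simpa [hl] using hc⟩

lemma card_fiber_eq_of_sum_addChar_eq {R X : Type*} [CommRing R] [IsDomain R] [CharZero R]
    [Finite (Dual k W)] [Fintype X] [DecidableEq W] {ψ : AddChar k R} (hψ : ψ ≠ 1) {f g : X → W}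
    (hfg : ∀ l : Dual k W, ∑ x, ψ (l (f x)) = ∑ x, ψ (l (g x))) (w : W) :
    Finset.card {x | f x = w} = Finset.card {x | g x = w} := by
  have : Fintype (Dual k W) := Fintype.ofFinite _
  have inversion (h : X → W) :
      ∑ l : Dual k W, ψ (-l w) * ∑ x, ψ (l (h x)) =
        Finset.card {x | h x = w} * Fintype.card (Dual k W) := by
    calc ∑ l : Dual k W, ψ (-l w) * ∑ x, ψ (l (h x))
        = ∑ x, ∑ l : Dual k W, ψ (l (h x - w)) := by
          simp only [Finset.mul_sum, ← AddChar.map_add_eq_mul, map_sub, neg_add_eq_sub]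
          exact Finset.sum_comm
      _ = Finset.card {x | h x = w} * Fintype.card (Dual k W) := by
          simp only [sum_dual_addChar_apply hψ, sub_eq_zero, ← Finset.sum_filter, Finset.sum_const,
            nsmul_eq_mul]
  have hcard : (Fintype.card (Dual k W) : R) ≠ 0 := Nat.cast_ne_zero.2 Fintype.card_ne_zero
  refine Nat.cast_injective (R := R) (mul_right_cancel₀ hcard ?_)
  rw [← inversion f, ← inversion g]
  simp only [hfg]

lemma nondegenerate_compQuadraticMap (hk : ringChar k ≠ 2) {Q : QuadraticMap k V W}
    (hQ : ∀ u ≠ 0, Function.Surjective (Q.polarBilin u)) {l : Dual k W} (hl : l ≠ 0) :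
    (l.compQuadraticMap Q).Nondegenerate := by
  have : Invertible (2 : k) := invertibleOfNonzero (Ring.two_ne_zero hk)
  rw [QuadraticMap.nondegenerate_iff_radical_eq_bot, QuadraticMap.radical_eq_ker_polarBilin,
    LinearMap.ker_eq_bot']
  intro u hu
  by_contra hu0
  refine hl (LinearMap.ext fun w ↦ ?_)
  obtain ⟨v, rfl⟩ := hQ u hu0 w
  simpa [QuadraticMap.polar] using LinearMap.congr_fun hu v

lemma card_fiber_smul_eq [Finite k] [Fintype V] [Finite W] [DecidableEq W] (hk : ringChar k ≠ 2)
    {Q : QuadraticMap k V W} (hQ : ∀ u ≠ 0, Function.Surjective (Q.polarBilin u))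
    (hV : Even (finrank k V)) {a : k} (ha : a ≠ 0) (w : W) :
    Finset.card {x | Q x = a • w} = Finset.card {x | Q x = w} := by
  classical
  have : Fintype k := Fintype.ofFinite k
  have : Finite (Dual k W) := Module.finite_of_finite k
  obtain ⟨ψ, hψ⟩ : ∃ ψ : AddChar k ℂ, ψ 1 ≠ 1 := AddChar.exists_apply_ne_zero.2 one_ne_zero
  have hψ : ψ ≠ 1 := AddChar.ne_one_iff.2 ⟨1, hψ⟩
  have sum_eq (l : Dual k W) : ∑ x, ψ (l (Q x)) = ∑ x, ψ (l (a • Q x)) := by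
    obtain rfl | hl := eq_or_ne l 0
    · simp
    have h := sum_addChar_mul_quadraticForm hk hψ (nondegenerate_compQuadraticMap hk hQ hl) ha
    obtain ⟨d, hd⟩ := hV.two_dvd
    rw [hd, pow_mul, ← Int.cast_pow, quadraticChar_sq_one ha, Int.cast_one, one_pow, one_mul] at h
    simpa using h.symm
  rw [card_fiber_eq_of_sum_addChar_eq hψ sum_eq (a • w)]
  simp only [smul_right_inj ha]

lemma eq_zero_of_eq_neg (hk : ringChar k ≠ 2) {x : V} (hx : x = -x) : x = 0 := by
  have h : (2 : k) • x = 0 := by rw [two_smul, ← eq_neg_iff_add_eq_zero, ← hx]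
  exact (smul_eq_zero.1 h).resolve_left (Ring.two_ne_zero hk)

lemma eq_zero_or_eq_zero_of_polar_eq_zero (hk : ringChar k ≠ 2) {Q : QuadraticMap k V W}
    (hQ : ∀ x y, Q x = Q y → x = y ∨ x = -y) {u v : V} (huv : QuadraticMap.polar Q u v = 0) :
    u = 0 ∨ v = 0 := by
  have h : Q (u + v) = Q (u + -v) := by
    rw [QuadraticMap.map_add Q, QuadraticMap.map_add Q, QuadraticMap.polar_neg_right, huv,
      QuadraticMap.map_neg, neg_zero]
  rcases hQ _ _ h with h | h
  · exact .inr (eq_zero_of_eq_neg hk (add_left_cancel h))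
  · rw [neg_add, neg_neg] at h
    exact .inl (eq_zero_of_eq_neg hk (add_right_cancel h))

lemma surjective_polarBilin [FiniteDimensional k V] (hk : ringChar k ≠ 2) {Q : QuadraticMap k V V}
    (hQ : ∀ x y, Q x = Q y → x = y ∨ x = -y) {u : V} (hu : u ≠ 0) :
    Function.Surjective (Q.polarBilin u) := by
  rw [← LinearMap.injective_iff_surjective, injective_iff_map_eq_zero]
  exact fun v hv ↦ (eq_zero_or_eq_zero_of_polar_eq_zero hk hQ hv).resolve_left hu

end Fibers

section TwistedNorm

variable {K : Type*} [Field K]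

/-- The subfield of the elements of `K` fixed by the endomorphism `σ`. -/
abbrev fixedSubfield (σ : K →+* K) : Subfield K :=
  σ.eqLocusField (RingHom.id K)

variable {σ : K →+* K}

lemma not_isSquare_coe_fixedSubfield (hK : ringChar K ≠ 2) (hσ : ∀ c, c * σ c = 1 → c ^ 2 = 1)
    {a : fixedSubfield σ} (ha : ¬IsSquare a) : ¬IsSquare (a : K) := by
  rintro ⟨μ, hμ⟩
  have map_ne : σ μ ≠ μ := fun h ↦ ha ⟨⟨μ, h⟩, Subtype.ext hμ⟩
  have map_eq : σ μ = -μ := by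
    refine (mul_self_eq_mul_self_iff.1 ?_).resolve_left map_ne
    rw [← map_mul, ← hμ]
    exact a.2
  have one_add_ne : 1 + μ ≠ 0 := by
    intro h
    apply map_ne
    rw [← neg_eq_of_add_eq_zero_right h, map_neg, map_one]
  have one_sub_ne : 1 - μ ≠ 0 := by
    intro h
    apply map_ne
    rw [← sub_eq_zero.1 h, map_one]
  -- The Cayley transform of `μ` has norm 1 because `σ` sends it to its inverse.
  have cayley : ((1 - μ) / (1 + μ)) ^ 2 = 1 := by
    apply hσ
    rw [map_div₀, map_sub, map_add, map_one, map_eq, sub_neg_eq_add, ← sub_eq_add_neg]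
    field_simp
  have four_mul : 2 * (2 * μ) = 0 := by
    rw [div_pow, div_eq_one_iff_eq (pow_ne_zero 2 one_add_ne)] at cayley
    linear_combination -cayley
  have hμ0 : μ = 0 := by simpa [Ring.two_ne_zero hK] using four_mul
  exact map_ne (by rw [hμ0, map_zero])

variable [Finite K]

lemma isSquare_mul_of_not_isSquare {a b : K} (ha : ¬IsSquare a) (hb : ¬IsSquare b) :
    IsSquare (a * b) := by
  classical
  have : Fintype K := Fintype.ofFinite K
  have hab : a * b ≠ 0 :=
    mul_ne_zero (fun h ↦ ha (h ▸ IsSquare.zero)) (fun h ↦ hb (h ▸ IsSquare.zero))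
  rw [← quadraticChar_one_iff_isSquare hab, map_mul,
    quadraticChar_neg_one_iff_not_isSquare.2 ha, quadraticChar_neg_one_iff_not_isSquare.2 hb,
    neg_one_mul, neg_neg]

lemma isSquare_mul_map_self (σ : K →+* K) (c : K) : IsSquare (c * σ c) := by
  by_cases hc : IsSquare c
  · exact hc.mul (hc.map σ)
  · refine isSquare_mul_of_not_isSquare hc fun ⟨d, hd⟩ ↦ hc ?_
    obtain ⟨e, rfl⟩ := Finite.surjective_of_injective σ.injective d
    exact ⟨e, σ.injective (by rw [hd, map_mul])⟩

lemma exists_mul_map_self_eq_of_isSquare (hσ : ∀ c, c * σ c = 1 → c ^ 2 = 1) {a : K}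
    (ha : IsSquare a) : ∃ c, c * σ c = a := by
  obtain rfl | ha0 := eq_or_ne a 0
  · exact ⟨0, zero_mul _⟩
  let norm : Kˣ →* Kˣ := MonoidHom.id Kˣ * Units.map σ
  let square : Kˣ →* Kˣ := powMonoidHom 2
  have ker_eq : norm.ker = square.ker := by
    ext c
    simp only [norm, square, MonoidHom.mem_ker, MonoidHom.mul_apply, MonoidHom.id_apply,
      powMonoidHom_apply, Units.ext_iff, Units.val_mul, Units.coe_map, MonoidHom.coe_coe,
      Units.val_pow_eq_pow_val, Units.val_one]
    refine ⟨hσ c, fun hc ↦ ?_⟩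
    rcases sq_eq_one_iff.1 hc with h | h <;> simp [h]
  have range_le : norm.range ≤ square.range := by
    rintro _ ⟨c, rfl⟩
    obtain ⟨d, hd⟩ := isSquare_mul_map_self σ c
    have hd0 : d ≠ 0 := by
      rintro rfl
      simp at hd
    exact ⟨Units.mk0 d hd0, Units.ext (by simp [norm, square, hd, sq])⟩
  have range_eq : norm.range = square.range := by
    refine Subgroup.eq_of_le_of_card_ge range_le ?_
    rw [← Subgroup.index_ker, ← Subgroup.index_ker, ker_eq]
  obtain ⟨b, rfl⟩ := ha
  have hb : b ≠ 0 := left_ne_zero_of_mul ha0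
  obtain ⟨c, hc⟩ : square (Units.mk0 b hb) ∈ norm.range := range_eq ▸ ⟨_, rfl⟩
  exact ⟨c, by simpa [norm, square, sq] using congrArg Units.val hc⟩

lemma exists_fixedSubfield_mul_eq (hK : ringChar K ≠ 2) (hσ : ∀ c, c * σ c = 1 → c ^ 2 = 1)
    (α : K) : ∃ (a : fixedSubfield σ) (c : K), a ≠ 0 ∧ c * σ c * a = α := by
  by_cases hα : IsSquare α
  · obtain ⟨c, hc⟩ := exists_mul_map_self_eq_of_isSquare hσ hα
    exact ⟨1, c, one_ne_zero, by simp [hc]⟩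
  have hk : ringChar (fixedSubfield σ) ≠ 2 := by
    rwa [Algebra.ringChar_eq (fixedSubfield σ) K]
  obtain ⟨a, ha⟩ := FiniteField.exists_nonsquare hk
  have ha0 : a ≠ 0 := fun h ↦ ha (h ▸ IsSquare.zero)
  have hquot : IsSquare (α * (a : K)⁻¹) :=
    isSquare_mul_of_not_isSquare hα (by simpa using not_isSquare_coe_fixedSubfield hK hσ ha)
  obtain ⟨c, hc⟩ := exists_mul_map_self_eq_of_isSquare hσ hquot
  exact ⟨a, c, ha0, by rw [hc, inv_mul_cancel_right₀ (by simpa using ha0)]⟩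

end TwistedNorm

section Semiquadratic

variable {K V W : Type*} [Field K] [AddCommGroup V] [Module K V] [AddCommGroup W] [Module K W]

/-- A `σ`-semiquadratic homogeneous map between vector spaces: the coordinate-free form of `IsSQH`,
with the companion automorphism given as a ring endomorphism instead of an exponent. -/
structure IsSemiquadratic (σ : K →+* K) (F : V → W) : Prop where
  protected map_smul (c : K) (x : V) : F (c • x) = (c * σ c) • F x
  exists_companion : ∃ B : V →ₗ[K] V →ₛₗ[σ] W, ∀ x y, F (x + y) - F x - F y = B x y + B y x

lemma IsSQH.isSemiquadratic {p k n : ℕ} [ExpChar K p]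
    {F : (Fin n → K) → (Fin n → K)} (hF : IsSQH (p ^ k) F) :
    IsSemiquadratic (iterateFrobenius K p k) F where
  map_smul c x := by
    ext i
    rw [(hF i).1, Pi.smul_apply, smul_eq_mul, iterateFrobenius_def, pow_succ']
  exists_companion := by
    choose b add_left add_right smul_left smul_right polar_eq using fun i ↦ (hF i).2
    refine ⟨LinearMap.mk₂'ₛₗ _ _ (fun x y i ↦ b i x y) ?_ ?_ ?_ ?_, ?_⟩
    · exact fun x x' y ↦ funext fun i ↦ add_left i x x' y
    · exact fun c x y ↦ funext fun i ↦ smul_left i c x y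
    · exact fun x y y' ↦ funext fun i ↦ add_right i x y y'
    · exact fun c x y ↦ funext fun i ↦ smul_right i c x y
    · exact fun x y ↦ funext fun i ↦ polar_eq i x y

namespace IsSemiquadratic

variable {σ : K →+* K} {F : V → W} (hF : IsSemiquadratic σ F)

include hF

/-- A `σ`-semiquadratic map, as a quadratic map over the fixed field of `σ`. -/
def toQuadraticMap : QuadraticMap (fixedSubfield σ) V W :=
  QuadraticMap.ofPolar F
    (fun a x ↦ by
      have ha : σ a = a := a.2
      rw [Subfield.smul_def, hF.map_smul, ha, Subfield.smul_def, Subfield.coe_mul])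
    (fun x x' y ↦ by
      obtain ⟨B, hB⟩ := hF.exists_companion
      simp only [QuadraticMap.polar, hB, map_add, LinearMap.add_apply]
      abel)
    (fun a x y ↦ by
      obtain ⟨B, hB⟩ := hF.exists_companion
      have ha : σ a = a := a.2
      simp only [QuadraticMap.polar, hB, Subfield.smul_def, map_smul, LinearMap.smul_apply,
        LinearMap.map_smulₛₗ, ha, smul_add])

lemma eq_or_eq_neg (hK : ringChar K ≠ 2) (hzero : ∀ x, F x = 0 → x = 0)
    (h2 : ∀ x, x ≠ 0 → {y | y ≠ 0 ∧ F y = F x}.ncard = 2) {x y : V} (hxy : F x = F y) :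
    x = y ∨ x = -y := by
  have map_zero : F 0 = 0 := hF.toQuadraticMap.map_zero
  by_cases hy : y = 0
  · exact .inl (hy ▸ hzero x (by rw [hxy, hy, map_zero]))
  have hx : x ≠ 0 := fun hx ↦ hy (hzero y (by rw [← hxy, hx, map_zero]))
  have pair_subset : {y, -y} ⊆ {z | z ≠ 0 ∧ F z = F y} := by
    rintro z (rfl | rfl)
    · exact ⟨hy, rfl⟩
    · exact ⟨neg_ne_zero.2 hy, hF.toQuadraticMap.map_neg y⟩
  have pair_eq : {y, -y} = {z | z ≠ 0 ∧ F z = F y} := by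
    refine Set.eq_of_subset_of_ncard_le pair_subset ?_
      (Set.finite_of_ncard_ne_zero (by rw [h2 y hy]; exact two_ne_zero))
    rw [h2 y hy, Set.ncard_pair fun h ↦ hy (eq_zero_of_eq_neg hK h)]
  exact pair_eq.symm.subset ⟨hx, hxy⟩

lemma sq_eq_one_of_mul_map_self_eq_one [Nontrivial V] (hinj : ∀ x y, F x = F y → x = y ∨ x = -y)
    {c : K} (hc : c * σ c = 1) : c ^ 2 = 1 := by
  obtain ⟨x, hx⟩ := exists_ne (0 : V)
  rw [sq_eq_one_iff]
  rcases hinj (c • x) x (by rw [hF.map_smul, hc, one_smul]) with h | h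
  · exact .inl (smul_left_injective K hx (by simpa using h))
  · exact .inr (smul_left_injective K hx (by simpa using h))

end IsSemiquadratic

variable [Finite K] [Module.Finite K V] {σ : K →+* K} {F : V → V}

namespace IsSemiquadratic

variable (hF : IsSemiquadratic σ F) (hK : ringChar K ≠ 2)
  (hinj : ∀ x y, F x = F y → x = y ∨ x = -y)

include hF hK hinj

lemma exists_apply_eq_fixedSubfield_smul (hV : Even (finrank K V)) {a : fixedSubfield σ}
    (ha : a ≠ 0) (x : V) : ∃ y, F y = a • F x := by
  classical
  have : Finite V := Module.finite_of_finite K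
  have : Fintype V := Fintype.ofFinite V
  have hk : ringChar (fixedSubfield σ) ≠ 2 := by rwa [Algebra.ringChar_eq (fixedSubfield σ) K]
  have even_finrank : Even (finrank (fixedSubfield σ) V) := by
    rw [← finrank_mul_finrank (fixedSubfield σ) K V]
    exact hV.mul_left _
  have surjective_polar (u : V) (hu : u ≠ 0) :
      Function.Surjective (hF.toQuadraticMap.polarBilin u) :=
    surjective_polarBilin hk hinj hu
  have hcard := card_fiber_smul_eq hk surjective_polar even_finrank ha (F x)
  have fiber_nonempty : Finset.Nonempty {y | hF.toQuadraticMap y = a • F x} := by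
    rw [← Finset.card_pos, hcard, Finset.card_pos]
    exact ⟨x, Finset.mem_filter_univ x |>.2 rfl⟩
  obtain ⟨y, hy⟩ := fiber_nonempty
  exact ⟨y, (Finset.mem_filter_univ y).1 hy⟩

lemma exists_apply_eq_smul {α : K} (h : Even (finrank K V) ∨ IsSquare α) (x : V) :
    ∃ y, F y = α • F x := by
  nontriviality V
  have hσ (c : K) : c * σ c = 1 → c ^ 2 = 1 := hF.sq_eq_one_of_mul_map_self_eq_one hinj
  rcases h with hV | hα
  · obtain ⟨a, c, ha, rfl⟩ := exists_fixedSubfield_mul_eq hK hσ α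
    obtain ⟨y, hy⟩ := hF.exists_apply_eq_fixedSubfield_smul hK hinj hV ha x
    exact ⟨c • y, by rw [hF.map_smul, hy, Subfield.smul_def, ← mul_smul]⟩
  · obtain ⟨c, rfl⟩ := exists_mul_map_self_eq_of_isSquare hσ hα
    exact ⟨c • x, hF.map_smul c x⟩

end IsSemiquadratic

theorem stmt15_general (hK : ringChar K ≠ 2) (hF : IsSemiquadratic σ F)
    (hzero : ∀ x, F x = 0 → x = 0) (h2 : ∀ x, x ≠ 0 → {y | y ≠ 0 ∧ F y = F x}.ncard = 2)
    {α : K} (hα : α ≠ 0) (h : Even (finrank K V) ∨ IsSquare α) :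
    (fun w ↦ α • w) '' Set.range F = Set.range F := by
  have hinj (x y : V) : F x = F y → x = y ∨ x = -y := hF.eq_or_eq_neg hK hzero h2
  refine subset_antisymm ?_ ?_
  · rintro _ ⟨_, ⟨x, rfl⟩, rfl⟩
    exact hF.exists_apply_eq_smul hK hinj h x
  · rintro _ ⟨x, rfl⟩
    obtain ⟨y, hy⟩ := hF.exists_apply_eq_smul hK hinj (h.imp_right IsSquare.inv) x
    exact ⟨F y, ⟨y, rfl⟩, by simp only [hy, smul_inv_smul₀ hα]⟩

end Semiquadratic

/-- for odd `q`, `F ∈ SQH(n,q)` vanishing only at `0` and 2-to-1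
on `F_q^n ∖ {0}`, and `α ∈ F_q^×`: if `n` is even or `α` is a square in `F_q^×`,
then `α·Im(F) = Im(F)`. -/
theorem stmt15 {p m k n : ℕ} (hp : p.Prime) (hpodd : Odd p) (hm : 0 < m)
    {K : Type*} [Field K] [Fintype K] (hK : Fintype.card K = p ^ m)
    (F : (Fin n → K) → (Fin n → K)) (hSQH : IsSQH (p ^ k) F)
    (hzero : ∀ x, F x = 0 ↔ x = 0)
    (h2 : ∀ x : Fin n → K, x ≠ 0 → {y : Fin n → K | y ≠ 0 ∧ F y = F x}.ncard = 2)
    (α : K) (hα : α ≠ 0)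
    (h : Even n ∨ ∃ μ : K, μ ≠ 0 ∧ α = μ ^ 2) :
    (fun w : Fin n → K => α • w) '' Set.range F = Set.range F := by
  have : Fact p.Prime := ⟨hp⟩
  have : CharP K p := charP_of_card_eq_prime_pow hK
  have hchar : ringChar K ≠ 2 := by rw [ringChar.eq K p]; exact hpodd.ne_two_of_dvd_nat dvd_rfl
  refine stmt15_general hchar hSQH.isSemiquadratic (fun x ↦ (hzero x).1) h2 hα (h.imp (by simp) ?_)
  exact fun ⟨μ, _, hμ⟩ ↦ hμ ▸ IsSquare.sq μ
end

section
/- Let q = p^m be odd and let F : F_q^n → F_q^n be a σ-semiquadratic homogeneous map (F ∈ SQH(n,q)) with companion automorphism σ = p^k such that F(x) = 0 ⟺ x = 0 and F is 2-to-1 on F_q^n∖{0}. Let α ∈ F_q^×. If n is odd and α is a non-square in F_q^×, then α·Im(F) ∩ Im(F) = {0}, where Im(F) = {F(x) : x ∈ F_q^n} and α·Im(F) = {α·w : w ∈ Im(F)}. -/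
/-!
Write `σ` for the automorphism `c ↦ c ^ p ^ k` of `K = F_q` and `k₀` for its fixed field, so that
`F` is a quadratic map over `k₀`. The two-to-one hypothesis says that `F x = F y` only for
`x = ±y`; hence the polar form of `F` has no zero divisors, and `c * σ c = 1` forces `c = ±1`.

If `σ (σ z) = z`, then `c = σ z / z` satisfies `c * σ c = 1`, so `σ z = ±z`. It follows that `σ`
and `σ²` have the same fixed field, hence the same order, and so the order `[K : k₀]` of `σ` is
odd. A nonsquare `a` of `k₀` therefore remains a nonsquare in `K`, and `α = a * (c * σ c)` for some
`c`, because the elements `c * σ c` are exactly the squares. This reduces the claim to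
`F x = a • F y → x = 0`.

For every nonzero `k₀`-linear form `l`, the quadratic form `l ∘ F` is nondegenerate of odd rank
`n * [K : k₀]`. After diagonalization, each one-variable Gauss sum changes sign under
multiplication by `a`, so `∑ x, ψ (a * l (F x)) = -∑ x, ψ (l (F x))`. By orthogonality of
characters, for each `w` the equations `F x = w` and `a • F x = w` together have exactly two
solutions. If `F x = a • F y` with `x ≠ 0`, then `±x` and `±y` would give four.
-/

open Finset Module QuadraticMap

section CharacterSums

theorem addChar_map_sum {ι A M : Type*} [AddCommMonoid A] [CommMonoid M] (ψ : AddChar A M)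
    (s : Finset ι) (f : ι → A) : ψ (∑ i ∈ s, f i) = ∏ i ∈ s, ψ (f i) :=
  map_prod ψ.toMonoidHom (fun i => Multiplicative.ofAdd (f i)) s

theorem sum_pi_addChar_sum {ι X A R : Type*} [Fintype ι] [DecidableEq ι] [Fintype X]
    [AddCommMonoid A] [CommSemiring R] (ψ : AddChar A R) (f : ι → X → A) :
    ∑ x : ι → X, ψ (∑ i, f i (x i)) = ∏ i, ∑ c, ψ (f i c) := by
  simp only [addChar_map_sum, prod_univ_sum, Fintype.piFinset_univ]

variable {k R V : Type*} [Field k] [CommRing R] [IsDomain R]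
  [AddCommGroup V] [Module k V]

theorem sum_dual_addChar [Fintype (Dual k V)] [DecidableEq V] {ψ : AddChar k R} (hψ : ψ ≠ 1)
    (v : V) :
    ∑ l : Dual k V, ψ (l v) = if v = 0 then (Fintype.card (Dual k V) : R) else 0 := by
  split_ifs with hv
  · simp [hv]
  · have eval_surjective : Function.Surjective (Dual.eval k V v) :=
      LinearMap.surjective_of_ne_zero ((eval_apply_eq_zero_iff k v).not.2 hv)
    obtain ⟨a, ha⟩ := AddChar.ne_one_iff.1 hψ
    obtain ⟨l, rfl⟩ := eval_surjective a
    exact AddChar.sum_eq_zero_of_ne_one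
      (ψ := ψ.compAddMonoidHom (Dual.eval k V v).toAddMonoidHom) (AddChar.ne_one_iff.2 ⟨l, ha⟩)

theorem card_dual_mul_card_fiber [Fintype (Dual k V)] [DecidableEq V] {ψ : AddChar k R}
    (hψ : ψ ≠ 1) {X : Type*} [Fintype X] (f : X → V) (w : V) :
    (Fintype.card (Dual k V) : R) * #{x | f x = w} =
      ∑ l : Dual k V, ψ (-l w) * ∑ x, ψ (l (f x)) := by
  calc (Fintype.card (Dual k V) : R) * #{x | f x = w}
      = ∑ x, ∑ l : Dual k V, ψ (l (f x - w)) := by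
        simp only [sum_dual_addChar hψ, sub_eq_zero, ← sum_filter, sum_const, nsmul_eq_mul,
          mul_comm]
    _ = ∑ l : Dual k V, ψ (-l w) * ∑ x, ψ (l (f x)) := by
        rw [sum_comm]
        simp only [map_sub, mul_sum, ← AddChar.map_add_eq_mul, neg_add_eq_sub]

end CharacterSums

section NonsquareTwist

variable {k : Type*} [Field k] [Fintype k] {a : k}

theorem card_sq_eq_add_card_mul_sq_eq [DecidableEq k] (hk : ringChar k ≠ 2) (ha : ¬IsSquare a)
    (t : k) : #{c : k | c ^ 2 = t} + #{c : k | a * c ^ 2 = t} = 2 := by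
  have a_ne_zero : a ≠ 0 := fun h => ha (h ▸ IsSquare.zero)
  have quadraticChar_inv_mul : quadraticChar k (a⁻¹ * t) = -quadraticChar k t := by
    rw [map_mul, quadraticChar_neg_one_iff_not_isSquare.2 (by rwa [isSquare_inv]), neg_one_mul]
  have card_sq := quadraticChar_card_sqrts hk t
  have card_mul_sq := quadraticChar_card_sqrts hk (a⁻¹ * t)
  simp only [Set.toFinset_ofPred, eq_inv_mul_iff_mul_eq₀ a_ne_zero, quadraticChar_inv_mul]
    at card_sq card_mul_sq
  omega

theorem sum_sq_add_sum_mul_sq {M : Type*} [AddCommMonoid M] (hk : ringChar k ≠ 2)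
    (ha : ¬IsSquare a) (f : k → M) :
    ∑ c, f (c ^ 2) + ∑ c, f (a * c ^ 2) = 2 • ∑ t, f t := by
  classical
  rw [← sum_fiberwise' univ (fun c => c ^ 2) f, ← sum_fiberwise' univ (fun c => a * c ^ 2) f]
  simp only [sum_const, ← sum_add_distrib, ← add_nsmul, card_sq_eq_add_card_mul_sq_eq hk ha,
    smul_sum]

variable {R : Type*} [CommRing R]

theorem sum_addChar_sq_add_sum_addChar_mul_sq [IsDomain R] {ψ : AddChar k R}
    (hk : ringChar k ≠ 2) (ha : ¬IsSquare a) (hψ : ψ ≠ 1) {b : k} (hb : b ≠ 0) :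
    ∑ c, ψ (b * c ^ 2) + ∑ c, ψ (a * (b * c ^ 2)) = 0 := by
  have sum_mulShift : ∑ t, ψ (b * t) = 0 :=
    AddChar.sum_eq_zero_of_ne_one (AddChar.IsPrimitive.of_ne_one hψ hb)
  simpa only [mul_left_comm a b, sum_mulShift, smul_zero]
    using sum_sq_add_sum_mul_sq hk ha (fun t => ψ (b * t))

variable {V : Type*} [AddCommGroup V] [Module k V] [Fintype V]

theorem exists_sum_addChar_quadraticForm_eq_prod (hk : ringChar k ≠ 2) {Q : QuadraticForm k V}
    (hQ : Q.polarBilin.SeparatingLeft) :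
    ∃ w : Fin (finrank k V) → kˣ, ∀ (ψ : AddChar k R) (b : k),
      ∑ x, ψ (b * Q x) = ∏ i, ∑ c, ψ (b * (w i * c ^ 2)) := by
  let _ : Invertible (2 : k) := invertibleOfNonzero (Ring.two_ne_zero hk)
  have associated_separatingLeft : (associated (R := k) Q).SeparatingLeft := fun x hx =>
    hQ x fun y => by
      rw [← two_nsmul_associated k Q, LinearMap.smul_apply, LinearMap.smul_apply, hx y, smul_zero]
  obtain ⟨w, ⟨e⟩⟩ :=
    Q.equivalent_weightedSumSquares_units_of_nondegenerate' associated_separatingLeft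
  refine ⟨w, fun ψ b => ?_⟩
  rw [← sum_pi_addChar_sum]
  refine Fintype.sum_equiv e.toLinearEquiv.toEquiv _ _ fun x => ?_
  rw [← e.map_app x, weightedSumSquares_apply, mul_sum]
  simp only [Units.smul_def, smul_eq_mul, pow_two]
  rfl

end NonsquareTwist

theorem sum_addChar_quadraticForm_add_sum_addChar_mul {k V R : Type*} [Field k] [Finite k]
    [AddCommGroup V] [Module k V] [Fintype V] [CommRing R] [IsDomain R] {a : k} {ψ : AddChar k R}
    (hk : ringChar k ≠ 2) (ha : ¬IsSquare a) (hψ : ψ ≠ 1) (hV : Odd (finrank k V))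
    {Q : QuadraticForm k V} (hQ : Q.polarBilin.SeparatingLeft) :
    ∑ x, ψ (Q x) + ∑ x, ψ (a * Q x) = 0 := by
  let _ : Fintype k := Fintype.ofFinite k
  obtain ⟨w, sum_eq_prod⟩ := exists_sum_addChar_quadraticForm_eq_prod (R := R) hk hQ
  have factor_neg (i) : ∑ c, ψ (a * (w i * c ^ 2)) = -∑ c, ψ (w i * c ^ 2) :=
    eq_neg_of_add_eq_zero_right
      (sum_addChar_sq_add_sum_addChar_mul_sq hk ha hψ (w i).ne_zero)
  have sum_one := sum_eq_prod ψ 1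
  simp only [one_mul] at sum_one
  rw [sum_one, sum_eq_prod, prod_congr rfl fun i _ => factor_neg i, prod_neg, card_univ,
    Fintype.card_fin, hV.neg_one_pow, neg_one_mul, add_neg_cancel]

section QuadraticMaps

theorem eq_zero_of_eq_neg_s16 {R M : Type*} [Ring R] [AddCommGroup M] [Module R M]
    (h2 : IsUnit (2 : R)) {x : M} (hx : x = -x) : x = 0 := by
  rwa [eq_neg_iff_add_eq_zero, ← two_smul R, h2.smul_eq_zero] at hx

theorem eq_zero_or_eq_zero_of_polar_eq_zero_s16 {R M N : Type*} [CommRing R] [AddCommGroup M]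
    [AddCommGroup N] [Module R M] [Module R N] {Q : QuadraticMap R M N} (h2 : IsUnit (2 : R))
    (hQ : ∀ x y, Q x = Q y → x = y ∨ x = -y) {x y : M} (hxy : polar Q x y = 0) :
    x = 0 ∨ y = 0 := by
  have map_add_eq_map_sub : Q (x + y) = Q (x - y) := by
    have polar_neg : polar Q x (-y) = 0 := by rw [polar_neg_right, hxy, neg_zero]
    rw [sub_eq_add_neg, QuadraticMap.map_add Q x y, QuadraticMap.map_add Q x (-y), Q.map_neg,
      hxy, polar_neg]
  rcases hQ _ _ map_add_eq_map_sub with h | h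
  · rw [sub_eq_add_neg, add_right_inj] at h
    exact .inr (eq_zero_of_eq_neg_s16 h2 h)
  · rw [neg_sub, add_comm, sub_eq_add_neg, add_right_inj] at h
    exact .inl (eq_zero_of_eq_neg_s16 h2 h)

theorem two_le_card_fiber_of_map_neg {G X : Type*} [AddGroup G] [Fintype G] [DecidableEq X]
    {f : G → X} (hf : ∀ x, f (-x) = f x) {x : G} (hx : x ≠ -x) : 2 ≤ #{y | f y = f x} := by
  classical
  rw [← card_pair hx]
  exact card_le_card (by simp [insert_subset_iff, hf])

variable {k V : Type*} [Field k] [AddCommGroup V] [Module k V]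

theorem separatingLeft_polarBilin_compQuadraticMap [FiniteDimensional k V]
    {Q : QuadraticMap k V V} (hQ : ∀ x y, polar Q x y = 0 → x = 0 ∨ y = 0) {l : Dual k V}
    (hl : l ≠ 0) : (l.compQuadraticMap Q).polarBilin.SeparatingLeft := by
  intro x hx
  by_contra hx0
  have polar_surjective : Function.Surjective (Q.polarBilin x) :=
    LinearMap.injective_iff_surjective.1 <|
      (injective_iff_map_eq_zero _).2 fun y hy => (hQ x y hy).resolve_left hx0
  refine hl (LinearMap.ext fun v => ?_)
  obtain ⟨y, rfl⟩ := polar_surjective v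
  simpa [polar] using hx y

variable [Finite k] {a : k} {Q : QuadraticMap k V V}

theorem card_fiber_add_card_smul_fiber [Fintype V] [DecidableEq V] (hk : ringChar k ≠ 2)
    (ha : ¬IsSquare a) (hV : Odd (finrank k V))
    (hQ : ∀ x y, polar Q x y = 0 → x = 0 ∨ y = 0) (w : V) :
    #{x | Q x = w} + #{x | a • Q x = w} = 2 := by
  let _ : Fintype k := Fintype.ofFinite k
  have : Finite (Dual k V) := Module.finite_of_finite k
  let _ : Fintype (Dual k V) := Fintype.ofFinite _
  obtain ⟨ψ, hψ⟩ : ∃ ψ : AddChar k ℂ, ψ ≠ 1 :=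
    ⟨_, by simpa using AddChar.FiniteField.primitiveChar_to_Complex_isPrimitive k one_ne_zero⟩
  have sum_eq_zero (l : Dual k V) (hl : l ≠ 0) :
      ∑ x, ψ (l (Q x)) + ∑ x, ψ (l (a • Q x)) = 0 := by
    simpa only [map_smul, smul_eq_mul, LinearMap.compQuadraticMap_apply] using
      sum_addChar_quadraticForm_add_sum_addChar_mul hk ha hψ hV
        (separatingLeft_polarBilin_compQuadraticMap hQ hl)
  have card_dual : Fintype.card (Dual k V) = Fintype.card V := by
    rw [card_eq_pow_finrank (K := k), card_eq_pow_finrank (K := k) (V := V),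
      Subspace.dual_finrank_eq]
  have card_mul : (Fintype.card V : ℂ) * (#{x | Q x = w} + #{x | a • Q x = w}) =
      Fintype.card V * 2 := by
    rw [← card_dual, mul_add, card_dual_mul_card_fiber hψ, card_dual_mul_card_fiber hψ,
      ← sum_add_distrib, sum_eq_single 0, card_dual]
    · simp [mul_two]
    · intro l _ hl
      rw [← mul_add, sum_eq_zero l hl, mul_zero]
    · simp
  exact_mod_cast mul_left_cancel₀ (Nat.cast_ne_zero.2 Fintype.card_ne_zero) card_mul

theorem eq_zero_of_map_eq_smul_map (hk : ringChar k ≠ 2) (ha : ¬IsSquare a)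
    (hV : Odd (finrank k V)) (hQ : ∀ x y, Q x = Q y → x = y ∨ x = -y) {x y : V}
    (hxy : Q x = a • Q y) : x = 0 := by
  classical
  have : FiniteDimensional k V := FiniteDimensional.of_finrank_pos hV.pos
  have : Finite V := Module.finite_of_finite k
  let _ : Fintype V := Fintype.ofFinite V
  have isUnit_two : IsUnit (2 : k) := (Ring.two_ne_zero hk).isUnit
  have ne_neg {z : V} (hz : z ≠ 0) : z ≠ -z := mt (eq_zero_of_eq_neg_s16 isUnit_two) hz
  by_contra hx
  have hy : y ≠ 0 := by
    rintro rfl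
    rw [Q.map_zero, smul_zero, ← Q.map_zero] at hxy
    simpa [hx] using hQ x 0 hxy
  have card_fiber := two_le_card_fiber_of_map_neg Q.map_neg (ne_neg hx)
  have card_smul_fiber :=
    two_le_card_fiber_of_map_neg (f := fun z => a • Q z) (by simp) (ne_neg hy)
  have card_add := card_fiber_add_card_smul_fiber hk ha hV
    (fun _ _ => eq_zero_or_eq_zero_of_polar_eq_zero_s16 isUnit_two hQ) (Q x)
  rw [hxy] at card_fiber card_add
  omega

end QuadraticMaps

section FixedSubfield

theorem finrank_fixedPoints_zpowers {K : Type*} [Field K] {σ : RingAut K} (hσ : IsOfFinOrder σ) :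
    finrank (FixedPoints.subfield (Subgroup.zpowers σ) K) K = orderOf σ := by
  have : Finite (Subgroup.zpowers σ) := hσ.finite_zpowers
  let _ : Fintype (Subgroup.zpowers σ) := Fintype.ofFinite _
  have : FaithfulSMul (Subgroup.zpowers σ) K :=
    ⟨fun h => Subtype.ext (RingEquiv.ext h)⟩
  rw [FixedPoints.finrank_eq_card, ← Nat.card_eq_fintype_card, Nat.card_zpowers]

theorem mem_fixedPoints_zpowers {K : Type*} [Field K] {σ : RingAut K} {x : K} :
    x ∈ FixedPoints.subfield (Subgroup.zpowers σ) K ↔ σ x = x := by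
  refine ⟨fun h => h ⟨σ, Subgroup.mem_zpowers σ⟩, fun h g => ?_⟩
  have : Subgroup.zpowers σ ≤ MulAction.stabilizer (RingAut K) x := by
    rw [Subgroup.zpowers_le]
    exact h
  exact this g.2

theorem odd_finrank_fixedPoints_zpowers {K : Type*} [Field K] (hK : (2 : K) ≠ 0) {σ : RingAut K}
    (hσ : IsOfFinOrder σ) (h : ∀ c, c * σ c = 1 → c = 1 ∨ c = -1) :
    Odd (finrank (FixedPoints.subfield (Subgroup.zpowers σ) K) K) := by
  have eq_or_eq_neg {z : K} (hz : σ (σ z) = z) : σ z = z ∨ σ z = -z := by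
    rcases eq_or_ne z 0 with rfl | hz0
    · simp
    have σz_ne_zero : σ z ≠ 0 := by simpa using hz0
    have := h (σ z / z) (by rw [map_div₀, hz]; field_simp)
    rwa [div_eq_one_iff_eq hz0, div_eq_iff hz0, neg_one_mul] at this
  -- A solution of `σ z = -z` is excluded because `σ ∘ σ` fixes `z + 1` as well.
  have fixed_of_fixed_sq {z : K} (hz : σ (σ z) = z) : σ z = z := by
    rcases eq_or_eq_neg hz with hz1 | hz1
    · exact hz1
    rcases eq_or_eq_neg (z := z + 1) (by simp [hz]) with hz2 | hz2
    · simpa using hz2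
    · rw [map_add, map_one, hz1] at hz2
      exact absurd (by linear_combination hz2) hK
  have subfield_eq : FixedPoints.subfield (Subgroup.zpowers (σ ^ 2)) K =
      FixedPoints.subfield (Subgroup.zpowers σ) K := by
    ext z
    rw [mem_fixedPoints_zpowers, mem_fixedPoints_zpowers]
    exact ⟨fixed_of_fixed_sq, fun hz => by rw [pow_two, RingAut.mul_apply, hz, hz]⟩
  have orderOf_sq : orderOf (σ ^ 2) = orderOf σ := by
    rw [← finrank_fixedPoints_zpowers hσ, ← finrank_fixedPoints_zpowers hσ.pow, subfield_eq]
  rw [hσ.orderOf_pow, Nat.div_eq_self] at orderOf_sq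
  rw [finrank_fixedPoints_zpowers hσ]
  exact Nat.coprime_two_right.1 (orderOf_sq.resolve_left hσ.orderOf_pos.ne')

end FixedSubfield

section Squares

theorem isSquare_of_isSquare_algebraMap {k K : Type*} [Field k] [Field K] [Algebra k K]
    (hodd : Odd (finrank k K)) {a : k} (ha : IsSquare (algebraMap k K a)) : IsSquare a := by
  rcases eq_or_ne a 0 with rfl | ha0
  · exact IsSquare.zero
  obtain ⟨t, ht⟩ := hodd
  have isSquare_norm : IsSquare (a ^ finrank k K) := by
    simpa only [Algebra.norm_algebraMap] using ha.map (Algebra.norm k)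
  have := isSquare_norm.div (even_two_mul t |>.isSquare_pow a)
  rwa [ht, pow_succ, mul_div_cancel_left₀ _ (pow_ne_zero _ ha0)] at this

theorem isSquare_div_of_not_isSquare {K : Type*} [Field K] [Finite K] {a b : K}
    (ha : ¬IsSquare a) (hb : ¬IsSquare b) : IsSquare (a / b) := by
  classical
  let _ : Fintype K := Fintype.ofFinite K
  have ne_zero {c : K} (hc : ¬IsSquare c) : c ≠ 0 := fun h => hc (h ▸ IsSquare.zero)
  rw [← quadraticChar_one_iff_isSquare (div_ne_zero (ne_zero ha) (ne_zero hb)), div_eq_mul_inv,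
    map_mul, quadraticChar_neg_one_iff_not_isSquare.2 ha,
    quadraticChar_neg_one_iff_not_isSquare.2 (isSquare_inv.not.2 hb), neg_one_mul, neg_neg]

theorem exists_pow_mul_eq_pow {G : Type*} [CommGroup G] [Finite G] {m n : ℕ}
    (h : ∀ g : G, g ^ (m * n) = 1 → g ^ m = 1) (g : G) : ∃ c : G, c ^ (m * n) = g ^ m := by
  have pow_injective :
      Function.Injective (powMonoidHom n : (powMonoidHom m : G →* G).range →* _) := by
    rw [injective_iff_map_eq_one]
    rintro ⟨_, x, rfl⟩ hx
    exact Subtype.ext (h x (by simpa [Subtype.ext_iff, pow_mul] using hx))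
  obtain ⟨⟨_, c, rfl⟩, hc⟩ := Finite.surjective_of_injective pow_injective ⟨_, g, rfl⟩
  exact ⟨c, by simpa [Subtype.ext_iff, pow_mul] using hc⟩

theorem exists_pow_succ_eq_of_isSquare {K : Type*} [Field K] [Finite K] {s : ℕ} (hs : Odd s)
    (h : ∀ c : K, c ^ (s + 1) = 1 → c = 1 ∨ c = -1) {b : K} (hb : IsSquare b) :
    ∃ c, c ^ (s + 1) = b := by
  rcases eq_or_ne b 0 with rfl | hb0
  · exact ⟨0, zero_pow s.succ_ne_zero⟩
  obtain ⟨u, rfl⟩ := hb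
  obtain ⟨t, ht⟩ := hs.add_one.two_dvd
  have sq_eq_one (v : Kˣ) (hv : v ^ (2 * t) = 1) : v ^ 2 = 1 := by
    rw [← ht] at hv
    exact Units.ext (by simpa using h v (by simpa using congrArg Units.val hv))
  obtain ⟨c, hc⟩ := exists_pow_mul_eq_pow sq_eq_one (Units.mk0 u (left_ne_zero_of_mul hb0))
  refine ⟨c, ?_⟩
  rw [ht, ← pow_two]
  simpa using congrArg Units.val hc

theorem exists_not_isSquare_eq_mul_pow {k K : Type*} [Field k] [Field K] [Algebra k K] [Finite K]
    (hk : ringChar k ≠ 2) (hodd : Odd (finrank k K)) {s : ℕ} (hs : Odd s)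
    (h : ∀ c : K, c ^ (s + 1) = 1 → c = 1 ∨ c = -1) {α : K} (hα : ¬IsSquare α) :
    ∃ (a : k) (c : K), ¬IsSquare a ∧ α = algebraMap k K a * c ^ (s + 1) := by
  have : Finite k := .of_injective _ (algebraMap k K).injective
  obtain ⟨a, ha⟩ := FiniteField.exists_nonsquare hk
  have not_isSquare_algebraMap := mt (isSquare_of_isSquare_algebraMap hodd) ha
  have algebraMap_ne_zero : algebraMap k K a ≠ 0 := fun h0 =>
    not_isSquare_algebraMap (h0 ▸ IsSquare.zero)
  obtain ⟨c, hc⟩ := exists_pow_succ_eq_of_isSquare hs h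
    (isSquare_div_of_not_isSquare hα not_isSquare_algebraMap)
  exact ⟨a, c, ha, by rw [hc, mul_div_cancel₀ α algebraMap_ne_zero]⟩

end Squares

namespace IsSQH

variable {K : Type*} [Field K] {n s : ℕ} {F : (Fin n → K) → (Fin n → K)}

protected theorem map_smul (hF : IsSQH s F) (c : K) (x : Fin n → K) :
    F (c • x) = c ^ (s + 1) • F x :=
  funext fun i => (hF i).1 c x

protected theorem map_zero (hF : IsSQH s F) : F 0 = 0 := by
  simpa using hF.map_smul 0 0

protected theorem map_neg (hF : IsSQH s F) (hs : Odd s) (x : Fin n → K) : F (-x) = F x := by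
  simpa [hs.add_one.neg_one_pow] using hF.map_smul (-1) x

/-- A σ-semiquadratic homogeneous map, viewed as a quadratic map over a field `k` whose elements
are fixed by σ. -/
def toQuadraticMap (hF : IsSQH s F) {k : Type*} [Field k] [Algebra k K]
    (hk : ∀ a : k, algebraMap k K a ^ s = algebraMap k K a) :
    QuadraticMap k (Fin n → K) (Fin n → K) :=
  QuadraticMap.ofPolar F
    (fun a x => by
      rw [← algebraMap_smul K a x, hF.map_smul, pow_succ, hk, ← map_mul, algebraMap_smul])
    (fun x x' y => funext fun i => by
      obtain ⟨b, add_left, add_right, -, -, hb⟩ := (hF i).2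
      simp only [polar, Pi.sub_apply, Pi.add_apply, hb, add_left, add_right]
      ring)
    (fun a x y => funext fun i => by
      obtain ⟨b, -, -, smul_left, smul_right, hb⟩ := (hF i).2
      simp only [polar, Pi.sub_apply, Pi.smul_apply, ← algebraMap_smul K a, hb, smul_left,
        smul_right, smul_eq_mul, hk]
      ring)

theorem eq_or_eq_neg_of_map_eq (hF : IsSQH s F) (hs : Odd s) (hK : (2 : K) ≠ 0)
    (hzero : ∀ x, F x = 0 → x = 0)
    (h2 : ∀ x, x ≠ 0 → {y | y ≠ 0 ∧ F y = F x}.ncard = 2) {x y : Fin n → K} (hxy : F x = F y) :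
    x = y ∨ x = -y := by
  rcases eq_or_ne x 0 with rfl | hx
  · exact .inl (hzero y (hxy ▸ hF.map_zero)).symm
  have hy : y ≠ 0 := by
    rintro rfl
    exact hx (hzero x (hxy.trans hF.map_zero))
  have ncard_fiber := h2 x hx
  have pair_subset : {x, -x} ⊆ {z | z ≠ 0 ∧ F z = F x} := by
    simp [Set.insert_subset_iff, hx, hF.map_neg hs]
  have pair_eq := Set.eq_of_subset_of_ncard_le pair_subset
    (by rw [ncard_fiber, Set.ncard_pair (mt (eq_zero_of_eq_neg_s16 hK.isUnit) hx)])
    (Set.finite_of_ncard_ne_zero (ncard_fiber ▸ two_ne_zero))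
  have y_mem : y ∈ ({x, -x} : Set (Fin n → K)) := pair_eq ▸ ⟨hy, hxy.symm⟩
  exact y_mem.imp Eq.symm fun h => (neg_eq_iff_eq_neg.2 h).symm

theorem eq_one_or_eq_neg_one_of_pow_eq_one [NeZero n] (hF : IsSQH s F)
    (hinj : ∀ x y, F x = F y → x = y ∨ x = -y) {c : K} (hc : c ^ (s + 1) = 1) :
    c = 1 ∨ c = -1 := by
  have := hinj (c • 1) 1 (by rw [hF.map_smul, hc, one_smul])
  simpa [funext_iff] using this

protected theorem eq_zero_of_map_eq_smul_map [Finite K] {p k : ℕ} [Fact p.Prime] [CharP K p]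
    (hp : Odd p) (hn : Odd n) (hF : IsSQH (p ^ k) F)
    (hinj : ∀ x y, F x = F y → x = y ∨ x = -y) {α : K} (hα : ¬IsSquare α) {x y : Fin n → K}
    (hxy : F x = α • F y) : x = 0 := by
  have : NeZero n := ⟨hn.pos.ne'⟩
  have hK : ringChar K ≠ 2 := by
    rw [ringChar.eq K p]
    exact hp.ne_two_of_dvd_nat dvd_rfl
  have pow_eq_one (c : K) (hc : c ^ (p ^ k + 1) = 1) :=
    hF.eq_one_or_eq_neg_one_of_pow_eq_one hinj hc
  have : Finite (RingAut K) := DFunLike.finite (K ≃+* K)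
  let k₀ := FixedPoints.subfield (Subgroup.zpowers (iterateFrobeniusEquiv K p k : RingAut K)) K
  have fixed (b : k₀) : algebraMap k₀ K b ^ p ^ k = algebraMap k₀ K b :=
    mem_fixedPoints_zpowers.1 b.2
  have hk₀ : ringChar k₀ ≠ 2 := by rwa [Algebra.ringChar_eq k₀ K]
  have odd_finrank : Odd (finrank k₀ K) :=
    odd_finrank_fixedPoints_zpowers (Ring.two_ne_zero hK) (isOfFinOrder_of_finite _) fun c hc =>
      pow_eq_one c (by rwa [pow_succ'])
  have odd_finrank_pi : Odd (finrank k₀ (Fin n → K)) := by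
    rw [finrank_pi_fintype, sum_const, card_univ, Fintype.card_fin]
    exact hn.mul odd_finrank
  obtain ⟨a, c, ha, rfl⟩ := exists_not_isSquare_eq_mul_pow hk₀ odd_finrank hp.pow pow_eq_one hα
  have map_eq_smul_map : F x = a • F (c • y) := by
    rw [hF.map_smul, hxy, mul_smul, algebraMap_smul]
  exact eq_zero_of_map_eq_smul_map (Q := hF.toQuadraticMap fixed) hk₀ ha odd_finrank_pi
    hinj map_eq_smul_map

end IsSQH

/-- for odd `q`, `F ∈ SQH(n,q)` vanishing only at `0` and 2-to-1
on `F_q^n ∖ {0}`, and `α ∈ F_q^×`: if `n` is odd and `α` is a non-square in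
`F_q^×`, then `α·Im(F) ∩ Im(F) = {0}`. -/
theorem stmt16 {p m k n : ℕ} (hp : p.Prime) (hpodd : Odd p) (hm : 0 < m)
    {K : Type*} [Field K] [Fintype K] (hK : Fintype.card K = p ^ m)
    (F : (Fin n → K) → (Fin n → K)) (hSQH : IsSQH (p ^ k) F)
    (hzero : ∀ x, F x = 0 ↔ x = 0)
    (h2 : ∀ x : Fin n → K, x ≠ 0 → {y : Fin n → K | y ≠ 0 ∧ F y = F x}.ncard = 2)
    (α : K) (hα : α ≠ 0)
    (hn : Odd n) (hns : ∀ μ : K, μ ≠ 0 → α ≠ μ ^ 2) :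
    ((fun w : Fin n → K => α • w) '' Set.range F) ∩ Set.range F = {0} := by
  have : Fact p.Prime := ⟨hp⟩
  have : CharP K p := charP_of_card_eq_prime_pow hK
  have two_ne_zero : (2 : K) ≠ 0 :=
    Ring.two_ne_zero (ringChar.eq K p ▸ hpodd.ne_two_of_dvd_nat dvd_rfl)
  have hinj (x y : Fin n → K) (hxy : F x = F y) : x = y ∨ x = -y :=
    hSQH.eq_or_eq_neg_of_map_eq hpodd.pow two_ne_zero (fun x => (hzero x).1) h2 hxy
  have not_isSquare : ¬IsSquare α := by
    rintro ⟨μ, rfl⟩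
    exact hns μ (left_ne_zero_of_mul hα) (pow_two μ).symm
  refine Set.Subset.antisymm ?_ ?_
  · rintro _ ⟨⟨_, ⟨y, rfl⟩, hxy⟩, x, rfl⟩
    rw [hSQH.eq_zero_of_map_eq_smul_map hpodd hn hinj not_isSquare hxy.symm]
    exact hSQH.map_zero
  · rintro _ rfl
    exact ⟨⟨0, ⟨0, hSQH.map_zero⟩, smul_zero α⟩, 0, hSQH.map_zero⟩
end

section
/- Let q = p^m be odd, let k with k ≢ 0 (mod m) and m/gcd(k,m) odd, σ = p^k, d = gcd(k,m), and let a,b,c ∈ F_q be such that x^{σ²+σ+1} + c·x^{σ²+σ} + b·x^{σ²} + a = 0 has no solution x ∈ F_q. Let ∗ be the commutative pre-semifield multiplication on F_q^3 given by the polarization of F, i.e. (x,y,z) ∗ (u,v,w) = (x^σ u + x u^σ + a(y^σ w + v^σ z) + b(x^σ v + y v^σ) + c(x^σ w + u^σ z), a(y^σ v + y v^σ) + z^σ u + x w^σ + b(z^σ v + w^σ y) + c(x^σ v + u^σ y), z^σ w + z w^σ − (x^σ v + u^σ y)). Then the set of F_p-linear maps M : F_q^3 → F_q^3 with the property that for every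 u ∈ F_q^3 there exists r ∈ F_q^3 such that M(x ∗ u) = x ∗ r for all x ∈ F_q^3, is exactly the set of scalar multiplication maps x ↦ C·x with C ∈ F_{p^d} (the subfield of F_q fixed by σ). Consequently the left and right nuclei and the center of the associated semifield are isomorphic to F_{p^d}. -/
/-!
The Frobenius power `σ` is a field endomorphism, and `σ² ≠ 1` because `m / gcd(k, m)` is odd and
`m ∤ k`. Let `P` be the third coordinate of `M`, so that `P (x ∗ u)` is the third coordinate of
`x ∗ r(u)`. Restricting `x` and `u` to coordinate axes gives functional equations for the three
components of `P`; eliminating between them as in Dedekind's independence of characters shows that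
`P` ignores the first two coordinates and multiplies the third by a constant `C`. The same equations
then force `r(u) = C u` and `σ C = C`. Taking `r = 0` shows that the products `x ∗ u` generate
`K³`, and `M (x ∗ u) = x ∗ (C u) = C (x ∗ u)` therefore determines `M`.
-/

lemma dvd_of_pow_sub_one_dvd_pow_sub_one {p m n : ℕ} (hp : 1 < p)
    (h : p ^ m - 1 ∣ p ^ n - 1) : m ∣ n := by
  have h_pow : p ^ m.gcd n = p ^ m := by
    have h_gcd := Nat.pow_sub_one_gcd_pow_sub_one p m n
    rw [Nat.gcd_eq_left h] at h_gcd
    have := Nat.one_le_pow m p (by lia)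
    have := Nat.one_le_pow (m.gcd n) p (by lia)
    lia
  exact Nat.gcd_eq_left_iff_dvd.mp (Nat.pow_right_injective hp h_pow)

lemma exists_pow_pow_ne {K : Type*} [Field K] [Fintype K] {p m n : ℕ} (hp : 1 < p)
    (hK : Fintype.card K = p ^ m) (hmn : ¬ m ∣ n) : ∃ y : K, y ^ p ^ n ≠ y := by
  contrapose! hmn
  refine dvd_of_pow_sub_one_dvd_pow_sub_one hp ?_
  rw [← hK, ← FiniteField.forall_pow_eq_one_iff]
  intro x
  rw [pow_sub _ (Nat.one_le_pow n p (by lia)), pow_one, mul_inv_eq_one]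
  exact Units.ext (hmn x)

lemma dvd_of_dvd_mul_of_coprime_div_gcd {m n k : ℕ} (hn : (m / k.gcd m).Coprime n)
    (h : m ∣ n * k) : m ∣ k := by
  obtain h_zero | h_pos := (k.gcd m).eq_zero_or_pos
  · simp [Nat.eq_zero_of_gcd_eq_zero_left h_zero]
  have h_gcd : m ∣ k.gcd m * n := by
    rw [mul_comm, ← Nat.gcd_mul_left]
    exact Nat.dvd_gcd h (dvd_mul_left m n)
  have h_one : m / k.gcd m = 1 :=
    hn.eq_one_of_dvd ((Nat.div_dvd_iff_dvd_mul (Nat.gcd_dvd_right k m) h_pos).mpr h_gcd)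
  rw [← Nat.eq_of_dvd_of_div_eq_one (Nat.gcd_dvd_right k m) h_one]
  exact Nat.gcd_dvd_left k m

lemma exists_iterateFrobenius_iterateFrobenius_ne {K : Type*} [Field K] [Fintype K] {p m k : ℕ}
    [Fact p.Prime] [CharP K p] (hK : Fintype.card K = p ^ m) (hk : ¬ m ∣ k)
    (hkm : Odd (m / k.gcd m)) :
    ∃ y : K, iterateFrobenius K p k (iterateFrobenius K p k y) ≠ y := by
  simp only [← iterateFrobenius_add_apply]
  refine exists_pow_pow_ne (Fact.out : p.Prime).one_lt hK fun h ↦ hk ?_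
  rw [← two_mul] at h
  exact dvd_of_dvd_mul_of_coprime_div_gcd (Nat.coprime_two_right.mpr hkm) h

section Endomorphism

variable {K : Type*} [Field K] {σ : K →+* K}

lemma exists_map_ne_of_exists_map_map_ne (hσ : ∃ y, σ (σ y) ≠ y) : ∃ y, σ y ≠ y := by
  contrapose! hσ
  simp only [hσ, implies_true]

lemma eq_zero_of_forall_mul_map_map_eq (hσ : ∃ y, σ (σ y) ≠ y) {α β γ : K}
    (h : ∀ z, α * σ (σ z) = β * σ z + γ * z) : α = 0 := by
  obtain ⟨y, hy⟩ := hσ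
  -- Replace `z` by `z * y` and subtract `σ y` times the relation.
  have elim_β (z : K) : α * σ (σ z) * σ (σ y - y) = γ * z * (y - σ y) := by
    have hzy := h (z * y)
    simp only [map_mul] at hzy
    rw [map_sub]
    linear_combination hzy - σ y * h z
  have elim_γ : α * σ (σ y - y) * (σ (σ y) - y) = 0 := by
    have h1 := elim_β 1
    simp only [map_one] at h1
    linear_combination elim_β y - y * h1
  have hy' : σ (σ y - y) ≠ 0 := fun h0 ↦ hy <| by
    have hfix : σ y = y := sub_eq_zero.mp ((map_eq_zero σ).mp h0)
    rw [hfix, hfix]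
  exact (mul_eq_zero_iff_right hy').mp ((mul_eq_zero_iff_right (sub_ne_zero.mpr hy)).mp elim_γ)

lemma eq_of_forall_mul_map_add_mul_eq (hσ : ∃ y, σ y ≠ y) {α β γ δ : K}
    (h : ∀ z, α * σ z + β * z = γ * σ z + δ * z) : α = γ ∧ β = δ := by
  obtain ⟨y, hy⟩ := hσ
  have h1 : α + β = γ + δ := by simpa using h 1
  have hα : (α - γ) * (σ y - y) = 0 := by linear_combination h y - y * h1
  have hαγ : α = γ := by simpa [sub_eq_zero, hy] using hα
  exact ⟨hαγ, by simpa [hαγ] using h1⟩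

lemma addMonoidHom_eq_zero_of_forall_map_mul_add_mul (hσ : ∃ y, σ (σ y) ≠ y) {L : K →+ K}
    {f : K → K} (h : ∀ x u, L (σ x * u + x * σ u) = σ x * f u) : L = 0 := by
  have hf (u : K) : f u = σ u * f 1 := by
    have hu1 := h u 1
    have h1u := h 1 u
    simp only [map_one, one_mul, mul_one] at hu1 h1u
    rw [← h1u, ← hu1, add_comm]
  have hL (x u : K) : L (σ x * u) + L (x * σ u) = σ (x * u) * f 1 := by
    rw [← map_add, h, hf, map_mul, mul_assoc]
  obtain ⟨y, hy⟩ := hσ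
  have hy0 : σ (σ y) - y ≠ 0 := sub_ne_zero.mpr hy
  -- The pairs `(x, σ y)` and `(x * y, 1)` share the term `L (σ x * σ y)`.
  have hsub (x : K) : L (x * (σ (σ y) - y)) = σ (x * (σ y - y)) * f 1 := by
    have h₁ := hL x (σ y)
    have h₂ := hL (x * y) 1
    simp only [map_mul, map_one, mul_one] at h₁ h₂
    rw [mul_sub, map_sub L, map_mul σ, map_sub σ]
    linear_combination h₁ - h₂
  obtain ⟨κ, hκ⟩ : ∃ κ, ∀ x, L x = κ * σ x :=
    ⟨σ ((σ y - y) / (σ (σ y) - y)) * f 1, fun x ↦ by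
      have hx := hsub (x / (σ (σ y) - y))
      rw [div_mul_cancel₀ x hy0, div_mul_eq_mul_div, mul_div_assoc, map_mul] at hx
      rw [hx]
      ring⟩
  have hκ0 : κ = 0 :=
    eq_zero_of_forall_mul_map_map_eq ⟨y, hy⟩ (β := f 1 - κ) (γ := 0) fun z ↦ by
      have h1z := hL 1 z
      simp only [hκ, map_one, one_mul] at h1z
      linear_combination h1z
  ext x
  simp [hκ, hκ0]

end Endomorphism

/-- The commutative pre-semifield multiplication `∗` on `K³` obtained by polarizing `F`, with an
arbitrary field endomorphism `σ` in place of the Frobenius power `x ↦ x ^ p ^ k`. -/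
def polarMul {K : Type*} [Field K] (σ : K →+* K) (a b c : K) (x u : K × K × K) : K × K × K :=
  (σ x.1 * u.1 + x.1 * σ u.1
      + a * (σ x.2.1 * u.2.2 + σ u.2.1 * x.2.2)
      + b * (σ x.1 * u.2.1 + x.2.1 * σ u.2.1)
      + c * (σ x.1 * u.2.2 + σ u.1 * x.2.2),
    a * (σ x.2.1 * u.2.1 + x.2.1 * σ u.2.1)
      + σ x.2.2 * u.1 + x.1 * σ u.2.2
      + b * (σ x.2.2 * u.2.1 + σ u.2.2 * x.2.1)
      + c * (σ x.1 * u.2.1 + σ u.1 * x.2.1),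
    σ x.2.2 * u.2.2 + x.2.2 * σ u.2.2
      - (σ x.1 * u.2.1 + σ u.1 * x.2.1))

namespace polarMul

variable {K : Type*} [Field K] {σ : K →+* K} {a b c : K}

lemma smul_right {C : K} (hC : σ C = C) (x u : K × K × K) :
    polarMul σ a b c x (C • u) = C • polarMul σ a b c x u := by
  ext <;> simp only [polarMul, Prod.smul_fst, Prod.smul_snd, smul_eq_mul, map_mul, hC] <;> ring

variable {P : K × K × K →+ K} {r : K × K × K → K × K × K}

lemma map_inl_eq_zero (hσ : ∃ y, σ (σ y) ≠ y)
    (h : ∀ u x, P (polarMul σ a b c x u) = (polarMul σ a b c x (r u)).2.2) (s : K) :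
    P (s, 0, 0) = 0 :=
  DFunLike.congr_fun (addMonoidHom_eq_zero_of_forall_map_mul_add_mul hσ
    (L := P.comp (AddMonoidHom.inl K (K × K))) (f := fun u ↦ -(r (u, 0, 0)).2.1)
    fun x u ↦ by simpa [polarMul, Prod.mk_zero_zero] using h (u, 0, 0) (x, 0, 0)) s

lemma map_mk_eq_map_inr (hσ : ∃ y, σ (σ y) ≠ y)
    (h : ∀ u x, P (polarMul σ a b c x u) = (polarMul σ a b c x (r u)).2.2) (s : K) (t : K × K) :
    P (s, t) = P (0, t) := by
  have h_add : P (s, t) = P (s, 0, 0) + P (0, t) := by simp [← map_add, Prod.mk_zero_zero]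
  rw [h_add, map_inl_eq_zero hσ h, zero_add]

lemma map_inr_inl_eq_zero (hσ : ∃ y, σ (σ y) ≠ y)
    (h : ∀ u x, P (polarMul σ a b c x u) = (polarMul σ a b c x (r u)).2.2) (s : K) :
    P (0, s, 0) = 0 := by
  set e := (r (0, 0, 1)).2.1
  set t := (r (1, 0, 0)).2.2
  have h_eq_map (x : K) : P (0, x, 0) = -(σ x * e) := by
    simpa [polarMul, map_mk_eq_map_inr hσ h (_ * _)] using h (0, 0, 1) (x, 0, 0)
  have h_map (z : K) : P (0, σ z, 0) = σ z * t + z * σ t := by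
    simpa [polarMul, map_mk_eq_map_inr hσ h (_ * _)] using h (1, 0, 0) (0, 0, z)
  have he : -e = 0 :=
    eq_zero_of_forall_mul_map_map_eq hσ (β := t) (γ := σ t) fun z ↦ by
      linear_combination h_map z - h_eq_map (σ z)
  rw [h_eq_map, ← mul_neg, he, mul_zero]

lemma map_eq_map_inr_inr (hσ : ∃ y, σ (σ y) ≠ y)
    (h : ∀ u x, P (polarMul σ a b c x u) = (polarMul σ a b c x (r u)).2.2) (x : K × K × K) :
    P x = P (0, 0, x.2.2) := by
  obtain ⟨x, y, z⟩ := x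
  have h_add : P (0, y, z) = P (0, y, 0) + P (0, 0, z) := by simp [← map_add]
  rw [map_mk_eq_map_inr hσ h, h_add, map_inr_inl_eq_zero hσ h, zero_add]

lemma map_eq_mul (hσ : ∃ y, σ (σ y) ≠ y)
    (h : ∀ u x, P (polarMul σ a b c x u) = (polarMul σ a b c x (r u)).2.2) (x : K × K × K) :
    P x = P (0, 0, 1) * x.2.2 := by
  have h_neg (y : K) : P (0, 0, -y) = -(σ (r (1, 0, 0)).1 * y) := by
    simpa [polarMul, map_eq_map_inr_inr hσ h (_, _)] using h (1, 0, 0) (0, y, 0)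
  have h_lin (z : K) : P (0, 0, z) = σ (r (1, 0, 0)).1 * z := by
    simpa using h_neg (-z)
  rw [map_eq_map_inr_inr hσ h, h_lin, h_lin 1, mul_one]

lemma mul_snd_snd_eq (hσ : ∃ y, σ (σ y) ≠ y)
    (h : ∀ u x, P (polarMul σ a b c x u) = (polarMul σ a b c x (r u)).2.2)
    (u : K × K × K) :
    P (0, 0, 1) * u.2.2 = (r u).2.2 ∧ P (0, 0, 1) * σ u.2.2 = σ (r u).2.2 := by
  refine eq_of_forall_mul_map_add_mul_eq (exists_map_ne_of_exists_map_map_ne hσ) fun z ↦ ?_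
  have hz := h u (0, 0, z)
  rw [map_eq_mul hσ h] at hz
  simp only [polarMul, map_zero, zero_mul, mul_zero, add_zero, sub_zero] at hz
  linear_combination hz

lemma map_apply_inr_inr_one (hσ : ∃ y, σ (σ y) ≠ y)
    (h : ∀ u x, P (polarMul σ a b c x u) = (polarMul σ a b c x (r u)).2.2) :
    σ (P (0, 0, 1)) = P (0, 0, 1) := by
  obtain ⟨h_mul, h_mul_map⟩ := mul_snd_snd_eq hσ h (0, 0, 1)
  rw [← h_mul, map_mul] at h_mul_map
  simpa using h_mul_map.symm

lemma eq_apply_inr_inr_one_smul (hσ : ∃ y, σ (σ y) ≠ y)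
    (h : ∀ u x, P (polarMul σ a b c x u) = (polarMul σ a b c x (r u)).2.2)
    (u : K × K × K) : r u = P (0, 0, 1) • u := by
  have hP := map_eq_mul hσ h
  have hC := map_apply_inr_inr_one hσ h
  set C := P (0, 0, 1)
  have h_fst : (r u).1 = C * u.1 := by
    apply σ.injective
    simpa [hP (_, _), polarMul, hC] using (h u (0, 1, 0)).symm
  have h_snd_fst : (r u).2.1 = C * u.2.1 := by
    simpa [hP (_, _), polarMul] using (h u (1, 0, 0)).symm
  exact Prod.ext h_fst (Prod.ext h_snd_fst (mul_snd_snd_eq hσ h u).1.symm)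

lemma eq_zero_of_forall_map_eq_zero (hσ : ∃ y, σ (σ y) ≠ y)
    (h : ∀ u x, P (polarMul σ a b c x u) = 0) : P = 0 := by
  have h_zero (u x : K × K × K) : P (polarMul σ a b c x u) = (polarMul σ a b c x 0).2.2 := by
    simpa [polarMul] using h u x
  have hC : P (0, 0, 1) = 0 := by
    simpa using (mul_snd_snd_eq (r := fun _ ↦ 0) hσ h_zero (0, 0, 1)).1
  refine AddMonoidHom.ext fun x ↦ ?_
  rw [map_eq_mul (r := fun _ ↦ 0) hσ h_zero, hC, zero_mul, AddMonoidHom.zero_apply]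

lemma addMonoidHom_ext (hσ : ∃ y, σ (σ y) ≠ y) {M N : K × K × K →+ K × K × K}
    (h : ∀ u x, M (polarMul σ a b c x u) = N (polarMul σ a b c x u)) : M = N := by
  have h_coord (π : K × K × K →+ K) : π.comp (M - N) = 0 :=
    eq_zero_of_forall_map_eq_zero hσ (a := a) (b := b) (c := c) fun u x ↦ by
      simp [h]
  have h_fst := h_coord (AddMonoidHom.fst K (K × K))
  have h_snd_fst := h_coord ((AddMonoidHom.fst K K).comp (AddMonoidHom.snd K (K × K)))
  have h_snd_snd := h_coord ((AddMonoidHom.snd K K).comp (AddMonoidHom.snd K (K × K)))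
  rw [← sub_eq_zero]
  exact AddMonoidHom.ext fun x ↦ Prod.ext (DFunLike.congr_fun h_fst x)
    (Prod.ext (DFunLike.congr_fun h_snd_fst x) (DFunLike.congr_fun h_snd_snd x))

end polarMul

theorem stmt17_general {K : Type*} [Field K] (σ : K →+* K) (hσ : ∃ y, σ (σ y) ≠ y) (a b c : K)
    (M : K × K × K →+ K × K × K) :
    (∀ u, ∃ r, ∀ x, M (polarMul σ a b c x u) = polarMul σ a b c x r) ↔
      ∃ C : K, σ C = C ∧ ∀ x, M x = C • x := by
  constructor
  · intro h
    choose r hr using h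
    let P := (AddMonoidHom.snd K K).comp ((AddMonoidHom.snd K (K × K)).comp M)
    have hP (u x : K × K × K) :
        P (polarMul σ a b c x u) = (polarMul σ a b c x (r u)).2.2 := by
      simp only [P, AddMonoidHom.comp_apply, hr, AddMonoidHom.coe_snd]
    have hC := polarMul.map_apply_inr_inr_one hσ hP
    have hM : M = DistribSMul.toAddMonoidHom _ (P (0, 0, 1)) :=
      polarMul.addMonoidHom_ext hσ fun u x ↦ by
        rw [hr, polarMul.eq_apply_inr_inr_one_smul hσ hP, polarMul.smul_right hC,
          DistribSMul.toAddMonoidHom_apply]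
    exact ⟨P (0, 0, 1), hC, DFunLike.congr_fun hM⟩
  · rintro ⟨C, hC, hM⟩ u
    exact ⟨C • u, fun x ↦ by rw [hM, polarMul.smul_right hC]⟩

/-- for the pre-semifield multiplication `∗` on `F_q^3` given by
the polarization of `F`, the `F_p`-linear (equivalently additive) maps `M` with
`M(x ∗ u) ∈ {x ∗ r : r}` for each `u` (i.e. `∀ u ∃ r, ∀ x, M(x ∗ u) = x ∗ r`)
are exactly the scalar maps `x ↦ C·x` with `C` in the fixed field `F_{p^d}` of
`σ` (where `d = gcd(k,m)`, `F_{p^d} = {C : C^{p^k} = C}`). Consequently the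
left/right nuclei and the center are isomorphic to `F_{p^d}`. -/
theorem stmt17 {p m k : ℕ} (hp : p.Prime) (hpodd : Odd p) (hm : 0 < m)
    (hk : ¬ m ∣ k) (hkm : Odd (m / Nat.gcd k m))
    {K : Type*} [Field K] [Fintype K] (hK : Fintype.card K = p ^ m)
    (a b c : K)
    (hnosol : ¬ ∃ x : K, x ^ (p ^ (2 * k) + p ^ k + 1) + c * x ^ (p ^ (2 * k) + p ^ k)
        + b * x ^ (p ^ (2 * k)) + a = 0)
    (star : K × K × K → K × K × K → K × K × K)
    (hstar : star = fun w u =>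
      (w.1 ^ p ^ k * u.1 + w.1 * u.1 ^ p ^ k
          + a * (w.2.1 ^ p ^ k * u.2.2 + u.2.1 ^ p ^ k * w.2.2)
          + b * (w.1 ^ p ^ k * u.2.1 + w.2.1 * u.2.1 ^ p ^ k)
          + c * (w.1 ^ p ^ k * u.2.2 + u.1 ^ p ^ k * w.2.2),
       a * (w.2.1 ^ p ^ k * u.2.1 + w.2.1 * u.2.1 ^ p ^ k)
          + w.2.2 ^ p ^ k * u.1 + w.1 * u.2.2 ^ p ^ k
          + b * (w.2.2 ^ p ^ k * u.2.1 + u.2.2 ^ p ^ k * w.2.1)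
          + c * (w.1 ^ p ^ k * u.2.1 + u.1 ^ p ^ k * w.2.1),
       w.2.2 ^ p ^ k * u.2.2 + w.2.2 * u.2.2 ^ p ^ k
          - (w.1 ^ p ^ k * u.2.1 + u.1 ^ p ^ k * w.2.1))) :
    ∀ M : K × K × K →+ K × K × K,
      (∀ u : K × K × K, ∃ r : K × K × K, ∀ x : K × K × K, M (star x u) = star x r) ↔
      (∃ C : K, C ^ p ^ k = C ∧ ∀ x : K × K × K, M x = C • x) := by
  subst hstar
  have : Fact p.Prime := ⟨hp⟩
  have : CharP K p := charP_of_card_eq_prime_pow hK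
  exact stmt17_general (iterateFrobenius K p k)
    (exists_iterateFrobenius_iterateFrobenius_ne hK hk hkm) a b c
end

section
/- Let q = p^m be odd, let k with k ≢ 0 (mod m) and m/gcd(k,m) odd, σ = p^k, d = gcd(k,m), and let a,b,c ∈ F_q be such that x^{σ²+σ+1} + c·x^{σ²+σ} + b·x^{σ²} + a = 0 has no solution x ∈ F_q. Let ∗ be the commutative pre-semifield multiplication on F_q^3 given by the polarization of F, i.e. (x,y,z) ∗ (u,v,w) = (x^σ u + x u^σ + a(y^σ w + v^σ z) + b(x^σ v + y v^σ) + c(x^σ w + u^σ z), a(y^σ v + y v^σ) + z^σ u + x w^σ + b(z^σ v + w^σ y) + c(x^σ v + u^σ y), z^σ w + z w^σ − (x^σ v + u^σ y)). Then the set of F_p-linear maps A : F_q^3 → F_q^3 with the property that for every u ∈ F_q^3 there exists r ∈ F_q^3 such that (A x) ∗ u = x ∗ r for all x ∈ F_q^3, is exactly the set of scalar multiplication maps x ↦ C·x with C ∈ F_{p^d} (the subfield of F_q fixed by σ). Consequently the middle nucleus of the associated semifield is isomorphic to F_{p^d}. -/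
/-!
Since `σ ≠ id`, an expression `α t + β σ(t)` determines `α` and `β`. Suppose that for every `u`
there is `N u` with `M x ∗ u = x ∗ N u` for all `x`. Comparing coefficients for `u = (0, 0, w)`
fixes the dependence of `N u` on `w` up to constants; the third coordinate, read as an identity in
`w`, then gives `(M x)₃ = C x₃` with `σ²(C) = C`. The second and third coordinates for
`u = (1, 0, 0)` give `(M x)₂ = C x₂`, and the second coordinate for `u = (0, 0, 1)` gives
`(M x)₁ = C x₁`. So over any field the scalars that occur are those fixed by `σ²`; for a Frobenius
power of odd order these are the scalars fixed by `σ`.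
-/

section AdjointPairs

variable {V : Type*}

/-- `N` is an adjoint of `M` with respect to the multiplication `star`. The additive maps having
an adjoint are the ones which Marino and Polverino identify with the middle nucleus. -/
def IsAdjointFor (star : V → V → V) (M N : V → V) : Prop :=
  ∀ x u, star (M x) u = star x (N u)

theorem exists_isAdjointFor_iff {star : V → V → V} {M : V → V} :
    (∃ N, IsAdjointFor star M N) ↔ ∀ u, ∃ r, ∀ x, star (M x) u = star x r :=
  ⟨fun ⟨N, hN⟩ u ↦ ⟨N u, fun x ↦ hN x u⟩, fun h ↦
    let ⟨N, hN⟩ := Classical.skolem.mp h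
    ⟨N, fun x u ↦ hN u x⟩⟩

end AdjointPairs

section TwistedMul

variable {K : Type*} [Field K] {σ : K →+* K} {a b c : K}

theorem coeff_eq_of_forall_mul_add_mul_map_eq (hσ : σ ≠ RingHom.id K) {α β α' β' : K}
    (h : ∀ t, α * t + β * σ t = α' * t + β' * σ t) : α = α' ∧ β = β' := by
  have h1 : α + β = α' + β' := by simpa using h 1
  obtain ⟨t, ht⟩ : ∃ t, σ t ≠ t := by simpa [RingHom.ext_iff] using hσ
  have hβ : (β - β') * (σ t - t) = 0 := by linear_combination h t - t * h1
  have hβ' : β = β' := sub_eq_zero.mp ((mul_eq_zero.mp hβ).resolve_right (sub_ne_zero.mpr ht))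
  exact ⟨by linear_combination h1 - hβ', hβ'⟩

theorem coeff_eq_mul_of_forall_eq (hσ : σ ≠ RingHom.id K) {f : K → K} {μ α β α' β' : K}
    (hf : ∀ t, f t = α * t + β * σ t) (hμf : ∀ t, μ * f t = α' * t + β' * σ t) :
    α' = μ * α ∧ β' = μ * β :=
  coeff_eq_of_forall_mul_add_mul_map_eq hσ fun t ↦ by linear_combination μ * hf t - hμf t

/-- The multiplication `∗` on `K³` with parameters `a`, `b`, `c`, for an arbitrary endomorphism `σ`
in place of the Frobenius power. It need not be commutative: as in the informal statement, the
`b`-term of the first coordinate is `b (x^σ v + y v^σ)`, whereas the polarization of `b x^σ y` is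
`b (x^σ v + u^σ y)`. -/
def twistedMul (σ : K →+* K) (a b c : K) (x u : K × K × K) : K × K × K :=
  (σ x.1 * u.1 + x.1 * σ u.1
      + a * (σ x.2.1 * u.2.2 + σ u.2.1 * x.2.2)
      + b * (σ x.1 * u.2.1 + x.2.1 * σ u.2.1)
      + c * (σ x.1 * u.2.2 + σ u.1 * x.2.2),
   a * (σ x.2.1 * u.2.1 + x.2.1 * σ u.2.1)
      + σ x.2.2 * u.1 + x.1 * σ u.2.2
      + b * (σ x.2.2 * u.2.1 + σ u.2.2 * x.2.1)
      + c * (σ x.1 * u.2.1 + σ u.1 * x.2.1),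
   σ x.2.2 * u.2.2 + x.2.2 * σ u.2.2
      - (σ x.1 * u.2.1 + σ u.1 * x.2.1))

theorem isAdjointFor_twistedMul_smul {C : K} (hC : σ (σ C) = C) :
    IsAdjointFor (twistedMul σ a b c) (C • ·) (σ C • ·) := by
  intro x u
  simp only [twistedMul, Prod.smul_fst, Prod.smul_snd, smul_eq_mul, map_mul, hC, Prod.mk.injEq]
  refine ⟨?_, ?_, ?_⟩ <;> ring

namespace IsAdjointFor

variable {M N : K × K × K → K × K × K}

theorem map_fst_axis (h : IsAdjointFor (twistedMul σ a b c) M N) (hσ : σ ≠ RingHom.id K) (w : K) :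
    σ (N (0, 0, w)).1 = w * σ (N (0, 0, 1)).1 := by
  have key (v t : K) : v * (a * σ (M (t, 0, 0)).2.1 + c * σ (M (t, 0, 0)).1) =
      σ (N (0, 0, v)).1 * t
        + ((N (0, 0, v)).1 + b * (N (0, 0, v)).2.1 + c * (N (0, 0, v)).2.2) * σ t := by
    have := congrArg Prod.fst (h (t, 0, 0) (0, 0, v))
    simp only [twistedMul, map_zero, mul_zero, zero_mul, add_zero, zero_add] at this
    linear_combination this
  exact (coeff_eq_mul_of_forall_eq hσ (by simpa only [one_mul] using key 1) (key w)).1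

theorem snd_fst_axis (h : IsAdjointFor (twistedMul σ a b c) M N) (hσ : σ ≠ RingHom.id K)
    (ha : a ≠ 0) (w : K) : (N (0, 0, w)).2.1 = σ w * (N (0, 0, 1)).2.1 := by
  have key (v t : K) : σ v * ((M (0, t, 0)).1 + b * (M (0, t, 0)).2.1) =
      (a * σ (N (0, 0, v)).2.1 + b * σ (N (0, 0, v)).2.2 + c * σ (N (0, 0, v)).1) * t
        + a * (N (0, 0, v)).2.1 * σ t := by
    have := congrArg (·.2.1) (h (0, t, 0) (0, 0, v))
    simp only [twistedMul, map_zero, mul_zero, zero_mul, add_zero, zero_add] at this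
    linear_combination this
  have hcoeff := (coeff_eq_mul_of_forall_eq hσ
    (by simpa only [map_one, one_mul] using key 1) (key w)).2
  exact mul_left_cancel₀ ha (by linear_combination hcoeff)

theorem snd_snd_axis (h : IsAdjointFor (twistedMul σ a b c) M N) (hσ : σ ≠ RingHom.id K) (w : K) :
    (N (0, 0, w)).2.2 = w * (N (0, 0, 1)).2.2 := by
  have key (v t : K) : σ v * ((M (t, 0, 0)).1 + b * (M (t, 0, 0)).2.1) =
      σ (N (0, 0, v)).2.2 * t + c * (N (0, 0, v)).2.1 * σ t := by
    have := congrArg (·.2.1) (h (t, 0, 0) (0, 0, v))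
    simp only [twistedMul, map_zero, mul_zero, zero_mul, add_zero, zero_add] at this
    linear_combination this
  have hcoeff := (coeff_eq_mul_of_forall_eq hσ
    (by simpa only [map_one, one_mul] using key 1) (key w)).1
  exact σ.injective (by rw [hcoeff, map_mul])

theorem map_snd_snd_eq_and_snd_snd_eq (h : IsAdjointFor (twistedMul σ a b c) M N)
    (hσ : σ ≠ RingHom.id K) (ha : a ≠ 0) (x : K × K × K) :
    σ (M x).2.2 = (N (0, 0, 1)).2.2 * σ x.2.2 - σ (N (0, 0, 1)).1 * x.2.1 ∧
      (M x).2.2 = σ (N (0, 0, 1)).2.2 * x.2.2 - (N (0, 0, 1)).2.1 * σ x.1 := by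
  refine coeff_eq_of_forall_mul_add_mul_map_eq hσ fun w ↦ ?_
  have key := congrArg (·.2.2) (h x (0, 0, w))
  simp only [twistedMul, h.map_fst_axis hσ w, h.snd_fst_axis hσ ha w, h.snd_snd_axis hσ w, map_mul,
    map_zero, mul_zero, zero_mul, add_zero, sub_zero] at key
  linear_combination key

theorem exists_axis_eq_and_snd_snd_eq (h : IsAdjointFor (twistedMul σ a b c) M N)
    (hσ : σ ≠ RingHom.id K) (ha : a ≠ 0) :
    ∃ C, σ (σ C) = C ∧ N (0, 0, 1) = (0, 0, σ C) ∧ ∀ x, (M x).2.2 = C * x.2.2 := by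
  have hM := h.map_snd_snd_eq_and_snd_snd_eq hσ ha
  generalize N (0, 0, 1) = n at hM ⊢
  obtain ⟨r, t, q⟩ := n
  have hr : r = 0 := by
    obtain ⟨hmap, hval⟩ := hM (0, 1, 0)
    simpa [hval] using hmap
  have ht : t = 0 := by
    obtain ⟨hmap, hval⟩ := hM (1, 0, 0)
    simpa [hval] using hmap
  have hq : σ (σ q) = q := by
    obtain ⟨hmap, hval⟩ := hM (0, 0, 1)
    simpa [hval, ht] using hmap
  refine ⟨σ q, by rw [hq], by rw [hr, ht, hq], fun x ↦ ?_⟩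
  simpa [ht] using (hM x).2

theorem snd_fst_eq (h : IsAdjointFor (twistedMul σ a b c) M N) (hσ : σ ≠ RingHom.id K)
    (ha : a ≠ 0) {C : K} (hC : σ (σ C) = C) (hM₃ : ∀ x, (M x).2.2 = C * x.2.2) (x : K × K × K) :
    (M x).2.1 = C * x.2.1 := by
  have h₁ (x : K × K × K) := h x (1, 0, 0)
  generalize N (1, 0, 0) = n at h₁
  obtain ⟨r, t, q⟩ := n
  have hM₂ (x : K × K × K) :
      (M x).2.1 = t * σ x.1 + σ r * x.2.1 - q * σ x.2.2 - σ q * x.2.2 := by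
    have := congrArg (·.2.2) (h₁ x)
    simp only [twistedMul, map_zero, map_one, mul_zero, one_mul, add_zero, zero_add] at this
    linear_combination -this
  have key (x : K × K × K) := congrArg (·.2.1) (h₁ x)
  simp only [twistedMul, hM₃, hM₂, map_mul, map_zero, map_one, mul_zero, mul_one, one_mul,
    add_zero, zero_add] at key
  have ht : t = 0 := by
    have hy (y : K) : c * σ r * y + 0 * σ y
        = (a * σ t + b * σ q + c * σ r) * y + a * t * σ y := by
      have := key (0, y, 0)
      simp only [map_zero] at this
      linear_combination this
    simpa [ha] using (coeff_eq_of_forall_mul_add_mul_map_eq hσ hy).2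
  have hq : q = 0 := by simpa [ht] using (key (1, 0, 0)).symm
  have hr : r = σ C := by simpa [ht, hq] using (key (0, 0, 1)).symm
  simpa [ht, hq, hr, hC] using hM₂ x

theorem exists_eq_smul (h : IsAdjointFor (twistedMul σ a b c) M N) (hσ : σ ≠ RingHom.id K)
    (ha : a ≠ 0) : ∃ C, σ (σ C) = C ∧ ∀ x, M x = C • x := by
  obtain ⟨C, hC, hN, hM₃⟩ := h.exists_axis_eq_and_snd_snd_eq hσ ha
  refine ⟨C, hC, fun x ↦ ?_⟩
  have hM₂ : (M x).2.1 = C * x.2.1 := h.snd_fst_eq hσ ha hC hM₃ x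
  have hM₁ : (M x).1 = C * x.1 := by
    have key := congrArg (·.2.1) (h x (0, 0, 1))
    simp only [twistedMul, hN, hM₂, hC, map_zero, map_one, mul_zero, mul_one, one_mul,
      add_zero, zero_add] at key
    linear_combination key
  exact Prod.ext hM₁ (Prod.ext hM₂ (hM₃ x))

end IsAdjointFor

end TwistedMul

section FrobeniusPower

theorem isFixedPt_of_isPeriodicPt_two_of_odd {α : Type*} {f : α → α} {n : ℕ} {x : α}
    (h2 : Function.IsPeriodicPt f 2 x) (hn : Function.IsPeriodicPt f n x) (hodd : Odd n) :
    Function.IsFixedPt f x := by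
  have hgcd := h2.gcd hn
  rwa [hodd.coprime_two_left.gcd_eq_one] at hgcd

variable {p m k : ℕ} {K : Type*} [Field K]

theorem forall_pow_pow_eq_self_iff [Fact p.Prime] [Fintype K] (hK : Fintype.card K = p ^ m) :
    (∀ x : K, x ^ p ^ k = x) ↔ m ∣ k := by
  have := charP_of_card_eq_prime_pow hK
  let := ZMod.algebra K p
  have hm : Module.finrank (ZMod p) K = m :=
    Nat.pow_right_injective (Fact.out : p.Prime).two_le <| by
      simpa [hK] using (Module.card_eq_pow_finrank (K := ZMod p) (V := K)).symm
  rw [← hm, ← FiniteField.orderOf_frobeniusAlgHom (ZMod p) K, orderOf_dvd_iff_pow_eq_one,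
    DFunLike.ext_iff]
  simp [FiniteField.coe_frobeniusAlgHom, pow_iterate, AlgHom.coe_pow]

theorem iterateFrobenius_ne_id [Fact p.Prime] [Fintype K] [ExpChar K p]
    (hK : Fintype.card K = p ^ m) (hk : ¬ m ∣ k) : iterateFrobenius K p k ≠ RingHom.id K :=
  fun h ↦ hk ((forall_pow_pow_eq_self_iff hK).mp (DFunLike.congr_fun h))

theorem pow_pow_pow_pow_eq_self_iff [Fact p.Prime] [Fintype K] (hK : Fintype.card K = p ^ m)
    (hkm : Odd (m / Nat.gcd k m)) {C : K} : (C ^ p ^ k) ^ p ^ k = C ↔ C ^ p ^ k = C := by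
  refine ⟨fun hC ↦ ?_, fun hC ↦ by rw [hC, hC]⟩
  have hdvd : m ∣ k * (m / Nat.gcd k m) := by
    rw [← Nat.mul_div_assoc k (Nat.gcd_dvd_right k m)]
    exact Nat.dvd_lcm_right k m
  refine isFixedPt_of_isPeriodicPt_two_of_odd (f := (· ^ p ^ k)) hC ?_ hkm
  rw [Function.IsPeriodicPt, Function.IsFixedPt, pow_iterate, ← pow_mul]
  exact (forall_pow_pow_eq_self_iff hK).mpr hdvd C

theorem ne_zero_of_not_exists_root (hp : p ≠ 0) {a b c : K}
    (hnosol : ¬ ∃ x : K, x ^ (p ^ (2 * k) + p ^ k + 1) + c * x ^ (p ^ (2 * k) + p ^ k)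
        + b * x ^ (p ^ (2 * k)) + a = 0) : a ≠ 0 := by
  rintro rfl
  exact hnosol ⟨0, by simp [hp]⟩

end FrobeniusPower

theorem stmt18_general {K : Type*} [Field K] {σ : K →+* K} (hσ : σ ≠ RingHom.id K) {a : K}
    (ha : a ≠ 0) (b c : K) (M : K × K × K → K × K × K) :
    (∀ u, ∃ r, ∀ x, twistedMul σ a b c (M x) u = twistedMul σ a b c x r) ↔
      ∃ C : K, σ (σ C) = C ∧ ∀ x, M x = C • x := by
  rw [← exists_isAdjointFor_iff]
  refine ⟨fun ⟨N, hN⟩ ↦ hN.exists_eq_smul hσ ha, fun ⟨C, hC, hM⟩ ↦ ⟨(σ C • ·), ?_⟩⟩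
  rw [funext hM]
  exact isAdjointFor_twistedMul_smul hC

/-- for the pre-semifield multiplication `∗` on `F_q^3` given by
the polarization of `F`, the `F_p`-linear (equivalently additive) maps `A` with
`(A x) ∗ u ∈ {x ∗ r : r}` for each `u` (i.e. `∀ u ∃ r, ∀ x, (A x) ∗ u = x ∗ r`)
are exactly the scalar maps `x ↦ C·x` with `C` in the fixed field `F_{p^d}` of
`σ` (where `d = gcd(k,m)`, `F_{p^d} = {C : C^{p^k} = C}`). Consequently the
middle nucleus is isomorphic to `F_{p^d}`. -/
theorem stmt18 {p m k : ℕ} (hp : p.Prime) (hpodd : Odd p) (hm : 0 < m)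
    (hk : ¬ m ∣ k) (hkm : Odd (m / Nat.gcd k m))
    {K : Type*} [Field K] [Fintype K] (hK : Fintype.card K = p ^ m)
    (a b c : K)
    (hnosol : ¬ ∃ x : K, x ^ (p ^ (2 * k) + p ^ k + 1) + c * x ^ (p ^ (2 * k) + p ^ k)
        + b * x ^ (p ^ (2 * k)) + a = 0)
    (star : K × K × K → K × K × K → K × K × K)
    (hstar : star = fun w u =>
      (w.1 ^ p ^ k * u.1 + w.1 * u.1 ^ p ^ k
          + a * (w.2.1 ^ p ^ k * u.2.2 + u.2.1 ^ p ^ k * w.2.2)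
          + b * (w.1 ^ p ^ k * u.2.1 + w.2.1 * u.2.1 ^ p ^ k)
          + c * (w.1 ^ p ^ k * u.2.2 + u.1 ^ p ^ k * w.2.2),
       a * (w.2.1 ^ p ^ k * u.2.1 + w.2.1 * u.2.1 ^ p ^ k)
          + w.2.2 ^ p ^ k * u.1 + w.1 * u.2.2 ^ p ^ k
          + b * (w.2.2 ^ p ^ k * u.2.1 + u.2.2 ^ p ^ k * w.2.1)
          + c * (w.1 ^ p ^ k * u.2.1 + u.1 ^ p ^ k * w.2.1),
       w.2.2 ^ p ^ k * u.2.2 + w.2.2 * u.2.2 ^ p ^ k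
          - (w.1 ^ p ^ k * u.2.1 + u.1 ^ p ^ k * w.2.1))) :
    ∀ M : K × K × K →+ K × K × K,
      (∀ u : K × K × K, ∃ r : K × K × K, ∀ x : K × K × K, star (M x) u = star x r) ↔
      (∃ C : K, C ^ p ^ k = C ∧ ∀ x : K × K × K, M x = C • x) := by
  have : Fact p.Prime := ⟨hp⟩
  have : CharP K p := charP_of_card_eq_prime_pow hK
  subst hstar
  simp only [← pow_pow_pow_pow_eq_self_iff hK hkm]
  exact fun M ↦ stmt18_general (iterateFrobenius_ne_id hK hk)
    (ne_zero_of_not_exists_root hp.ne_zero hnosol) b c M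
end

section
/- Let q = p^m, let d be a divisor of m, τ = p^d, and let b_0,…,b_n ∈ F_q. Define the τ-linearized polynomials B(x) = Σ_{i=0}^{n} b_i·x^{τ^i} and B̃(x) = Σ_{i=0}^{n} b_{n−i}^{τ^i}·x^{τ^i} in F_q[x]. Then B and B̃, viewed as F_{p^d}-linear endomorphisms of F_q, have kernels of the same F_{p^d}-dimension; equivalently, B and B̃ have the same number of roots in F_q. -/
/-!
Write `σ` for the automorphism `x ↦ x ^ τ` of `F_q`, so that `B = ∑ bᵢ σⁱ`. The trace form is
`σ`-invariant, hence the adjoint of `B` with respect to it is `B* = ∑ σ⁻ⁱ ∘ bᵢ`, and moving `σ`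
past the coefficients gives `σⁿ ∘ B* = ∑ σⁿ⁻ⁱ(bᵢ) σⁿ⁻ⁱ = B̃`. The trace form is nondegenerate, so
`B` and `B*` have the same rank, and composing with the bijection `σⁿ` does not change the kernel.
-/

open LinearMap Module

section AdjointPairs

theorem isAdjointPair_sum {ι R M N P : Type*} [CommSemiring R] [AddCommMonoid M] [Module R M]
    [AddCommMonoid N] [Module R N] [AddCommMonoid P] [Module R P] {B : M →ₗ[R] M →ₗ[R] P}
    {B' : N →ₗ[R] N →ₗ[R] P} {f : ι → M →ₗ[R] N} {g : ι → N →ₗ[R] M} (s : Finset ι)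
    (h : ∀ i ∈ s, IsAdjointPair B B' (f i) (g i)) :
    IsAdjointPair B B' (∑ i ∈ s, f i : M →ₗ[R] N) (∑ i ∈ s, g i : N →ₗ[R] M) := fun x y ↦ by
  simpa only [LinearMap.sum_apply, map_sum] using Finset.sum_congr rfl fun i hi ↦ h i hi x y

variable {F V W : Type*} [Field F] [AddCommGroup V] [Module F V] [AddCommGroup W] [Module F W]

theorem finrank_range_eq_of_isAdjointPair [FiniteDimensional F V] {B : V →ₗ[F] V →ₗ[F] F}
    {B' : W →ₗ[F] W →ₗ[F] F} (hB : B.SeparatingLeft) (hB' : B'.SeparatingLeft)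
    {f : V →ₗ[F] W} {g : W →ₗ[F] V} (hfg : IsAdjointPair B B' f g) :
    finrank F f.range = finrank F g.range := by
  have hB_range : B.range = ⊤ := range_eq_top.mpr <|
    (injective_iff_surjective_of_finrank_eq_finrank Subspace.dual_finrank_eq.symm).mp <|
      ker_eq_bot.mp <| separatingLeft_iff_ker_eq_bot.mp hB
  have hB'_inj : Function.Injective B' := ker_eq_bot.mp <| separatingLeft_iff_ker_eq_bot.mp hB'
  have hcomm : B' ∘ₗ f = g.dualMap ∘ₗ B := isAdjointPair_iff_comp_eq_compl₂.mp hfg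
  calc finrank F f.range
      = finrank F (B' ∘ₗ f).range := by
        rw [range_comp]
        exact (Submodule.equivMapOfInjective B' hB'_inj f.range).finrank_eq
    _ = finrank F g.dualMap.range := by rw [hcomm, range_comp_of_range_eq_top _ hB_range]
    _ = finrank F g.range := finrank_range_dualMap_eq_finrank_range g

theorem finrank_ker_eq_of_isAdjointPair [FiniteDimensional F V] {B : V →ₗ[F] V →ₗ[F] F}
    (hB : B.SeparatingLeft) {f g : V →ₗ[F] V} (hfg : IsAdjointPair B B f g) :
    finrank F f.ker = finrank F g.ker := by
  have hrange := finrank_range_eq_of_isAdjointPair hB hB hfg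
  have hf := f.finrank_range_add_finrank_ker
  have hg := g.finrank_range_add_finrank_ker
  omega

end AdjointPairs

section SkewPolynomials

open Algebra (traceForm)

variable {R S S' : Type*} [CommRing R] [CommRing S] [Algebra R S] [CommRing S'] [Algebra R S']

theorem isAdjointPair_traceForm_mulLeft (a : S) :
    IsAdjointPair (traceForm R S) (traceForm R S) (mulLeft R a) (mulLeft R a) := fun x y ↦ by
  simp only [Algebra.traceForm_apply, mulLeft_apply, mul_left_comm, mul_assoc]

theorem isAdjointPair_traceForm_algEquiv (e : S ≃ₐ[R] S') :
    IsAdjointPair (traceForm R S) (traceForm R S') e e.symm := fun x y ↦ by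
  simpa only [Algebra.traceForm_apply, map_mul, e.apply_symm_apply] using
    Algebra.trace_eq_of_algEquiv e (x * e.symm y)

/-- The value `∑ i ≤ n, cᵢ σⁱ` at `σ` of the skew polynomial `∑ i ≤ n, cᵢ Tⁱ`, as a linear map.
When `σ` is the `τ`-power Frobenius this is the map induced by a `τ`-linearized polynomial.
Only the coefficients `c i` with `i ≤ n` matter. -/
def skewEval (σ : S ≃ₐ[R] S) (n : ℕ) (c : ℕ → S) : S →ₗ[R] S :=
  ∑ i ∈ Finset.range (n + 1), mulLeft R (c i) ∘ₗ (σ ^ i).toLinearMap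

/-- The coefficients `σⁱ(cₙ₋ᵢ)` of the skew reciprocal of `∑ i ≤ n, cᵢ Tⁱ`, the polynomial written
`B̃` when the given one is `B`. The truncated subtraction is harmless, since `skewEval` at the same
`n` reads only the indices `i ≤ n`. -/
def skewReciprocal (σ : S ≃ₐ[R] S) (n : ℕ) (c : ℕ → S) (i : ℕ) : S :=
  (σ ^ i) (c (n - i))

theorem skewEval_apply (σ : S ≃ₐ[R] S) (n : ℕ) (c : ℕ → S) (x : S) :
    skewEval σ n c x = ∑ i ∈ Finset.range (n + 1), c i * (σ ^ i) x := by
  simp only [skewEval, LinearMap.sum_apply, comp_apply, mulLeft_apply, AlgEquiv.toLinearMap_apply]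

theorem isAdjointPair_traceForm_skewEval (σ : S ≃ₐ[R] S) (n : ℕ) (c : ℕ → S) :
    IsAdjointPair (traceForm R S) (traceForm R S) (skewEval σ n c)
      (∑ i ∈ Finset.range (n + 1), (σ ^ i).symm.toLinearMap ∘ₗ mulLeft R (c i) : S →ₗ[R] S) :=
  isAdjointPair_sum _ fun i _ ↦
    (isAdjointPair_traceForm_algEquiv (σ ^ i)).comp (isAdjointPair_traceForm_mulLeft (c i))

theorem skewEval_skewReciprocal (σ : S ≃ₐ[R] S) (n : ℕ) (c : ℕ → S) :
    skewEval σ n (skewReciprocal σ n c) = (σ ^ n).toLinearMap ∘ₗ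
      ∑ i ∈ Finset.range (n + 1), (σ ^ i).symm.toLinearMap ∘ₗ mulLeft R (c i) := by
  ext x
  have hterm (i : ℕ) (hi : i ∈ Finset.range (n + 1)) :
      (σ ^ (n - i)) (c i * x) = (σ ^ n) ((σ ^ i).symm (c i * x)) := by
    rw [← Nat.sub_add_cancel (Finset.mem_range_succ_iff.mp hi), pow_add, AlgEquiv.mul_apply,
      AlgEquiv.apply_symm_apply, Nat.add_sub_cancel]
  calc skewEval σ n (skewReciprocal σ n c) x
      = ∑ i ∈ Finset.range (n + 1), (σ ^ i) (c (n - i) * x) := by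
        simp only [skewEval_apply, skewReciprocal, map_mul]
    _ = ∑ i ∈ Finset.range (n + 1), (σ ^ (n - i)) (c i * x) := by
        rw [← Finset.sum_range_reflect]
        refine Finset.sum_congr rfl fun i hi ↦ ?_
        rw [Nat.add_sub_cancel, Nat.sub_sub_self (Finset.mem_range_succ_iff.mp hi)]
    _ = ∑ i ∈ Finset.range (n + 1), (σ ^ n) ((σ ^ i).symm (c i * x)) := Finset.sum_congr rfl hterm
    _ = _ := by
        simp only [comp_apply, LinearMap.sum_apply, map_sum, mulLeft_apply,
          AlgEquiv.toLinearMap_apply]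

end SkewPolynomials

section FiniteField

open FiniteField

variable {F K : Type*} [Field F] [Fintype F] [Field K] [Algebra F K] [Algebra.IsAlgebraic F K]

theorem frobeniusAlgEquivOfAlgebraic_pow_pow_apply (d i : ℕ) (x : K) :
    ((frobeniusAlgEquivOfAlgebraic F K ^ d) ^ i) x = x ^ (Fintype.card F ^ d) ^ i := by
  rw [← pow_mul, AlgEquiv.coe_pow, coe_frobeniusAlgEquivOfAlgebraic_iterate, pow_mul]

theorem coe_ker_skewEval_frobenius (d n : ℕ) (c : ℕ → K) :
    ((skewEval (frobeniusAlgEquivOfAlgebraic F K ^ d) n c).ker : Set K) =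
      {x | ∑ i ∈ Finset.range (n + 1), c i * x ^ (Fintype.card F ^ d) ^ i = 0} := by
  ext x
  simp only [SetLike.mem_coe, mem_ker, skewEval_apply, Set.mem_ofPred_eq,
    frobeniusAlgEquivOfAlgebraic_pow_pow_apply]

end FiniteField

theorem stmt19_general {F K : Type*} [Field F] [Field K] [Algebra F K] [FiniteDimensional F K]
    [Algebra.IsSeparable F K] (σ : K ≃ₐ[F] K) (n : ℕ) (b : ℕ → K) :
    finrank F (skewEval σ n b).ker = finrank F (skewEval σ n (skewReciprocal σ n b)).ker := by
  rw [skewEval_skewReciprocal, ker_comp_of_ker_eq_bot _ (ker_eq_bot.mpr (σ ^ n).injective)]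
  exact finrank_ker_eq_of_isAdjointPair (traceForm_nondegenerate F K).1
    (isAdjointPair_traceForm_skewEval σ n b)

/-- for `d | m`, `τ = p^d`, and coefficients `b_0,…,b_n ∈ F_q`,
the `τ`-linearized polynomials `B(x) = Σ b_i x^{τ^i}` and
`B̃(x) = Σ b_{n-i}^{τ^i} x^{τ^i}` have kernels of the same `F_{p^d}`-dimension
as `F_{p^d}`-linear endomorphisms of `F_q`; equivalently, they have the same
number of roots in `F_q`. -/
theorem stmt19 {p m d n : ℕ} (hp : p.Prime) (hm : 0 < m) (hd : d ∣ m)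
    {K : Type*} [Field K] [Fintype K] (hK : Fintype.card K = p ^ m)
    (b : ℕ → K) :
    {x : K | ∑ i ∈ Finset.range (n + 1), b i * x ^ (p ^ d) ^ i = 0}.ncard =
      {x : K | ∑ i ∈ Finset.range (n + 1),
        (b (n - i)) ^ (p ^ d) ^ i * x ^ (p ^ d) ^ i = 0}.ncard := by
  have : Fact p.Prime := ⟨hp⟩
  have : CharP K p := charP_of_card_eq_prime_pow hK
  let _ : Algebra (ZMod p) K := ZMod.algebra K p
  have hker := Set.ncard_congr' (LinearEquiv.ofFinrankEq _ _ <|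
    stmt19_general (FiniteField.frobeniusAlgEquivOfAlgebraic (ZMod p) K ^ d) n b).toEquiv
  simpa only [coe_ker_skewEval_frobenius, skewReciprocal,
    frobeniusAlgEquivOfAlgebraic_pow_pow_apply, ZMod.card] using hker
end
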